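/- arXiv:2512.12126 — 13 statements merged into one kernel-verified Lean document; each statement's English description precedes it below -/
import Mathlib

section
/- For every word w in the free group F₂ on two generators there exists a polynomial P_w ∈ ℤ[s,t,u] in three variables such that for all x, y ∈ SL(2,ℂ) one has tr(w(x,y)) = P_w(tr x, tr y, tr(xy)). -/
open Matrix

abbrev SL2C := Matrix.SpecialLinearGroup (Fin 2) ℂ

noncomputable def tr2 (x : SL2C) : ℂ := Matrix.trace (x : Matrix (Fin 2) (Fin 2) ℂ)

/-- The evaluation of a word `w` in the free group on two generators at a pair
of matrices `x y ∈ SL(2,ℂ)`. -/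
noncomputable def wordEval (w : FreeGroup (Fin 2)) (x y : SL2C) : SL2C :=
  FreeGroup.lift ![x, y] w

abbrev M2 := Matrix (Fin 2) (Fin 2) ℂ

lemma sq_eq (X : M2) (h : X.det = 1) : X * X = X.trace • X - 1 := by
  rw [Matrix.det_fin_two] at h
  ext i j
  fin_cases i <;> fin_cases j <;>
    simp [Matrix.mul_apply, Fin.sum_univ_two, Matrix.trace_fin_two] <;> grind

lemma yx_eq (X Y : M2) : Y * X = Y.trace • X + X.trace • Y - X * Y
    + ((X * Y).trace - X.trace * Y.trace) • (1 : M2) := by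
  ext i j
  fin_cases i <;> fin_cases j <;>
    simp [Matrix.mul_apply, Fin.sum_univ_two, Matrix.trace_fin_two] <;> ring

lemma yxy_eq (X Y : M2) (h : Y.det = 1) :
    Y * (X * Y) = X - X.trace • (1 : M2) + (X * Y).trace • Y := by
  rw [Matrix.det_fin_two] at h
  ext i j
  fin_cases i <;> fin_cases j <;>
    simp [Matrix.mul_apply, Fin.sum_univ_two, Matrix.trace_fin_two] <;> grind

lemma inv_eq (x : SL2C) : ((x⁻¹ : SL2C) : M2) = tr2 x • (1 : M2) - (x : M2) := by
  rw [Matrix.SpecialLinearGroup.coe_inv, Matrix.adjugate_fin_two]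
  ext i j
  fin_cases i <;> fin_cases j <;> simp [tr2, Matrix.trace_fin_two]

/-- Evaluation of a polynomial at the three traces. -/
noncomputable def ev (x y : SL2C) (P : MvPolynomial (Fin 3) ℤ) : ℂ :=
  MvPolynomial.aeval ![tr2 x, tr2 y, tr2 (x * y)] P

/-- The word is a polynomial combination of `1, x, y, xy`. -/
def Good (w : FreeGroup (Fin 2)) : Prop :=
  ∃ a b c d : MvPolynomial (Fin 3) ℤ, ∀ x y : SL2C,
    (wordEval w x y : M2) = ev x y a • (1 : M2) + ev x y b • (x : M2)
      + ev x y c • (y : M2) + ev x y d • ((x : M2) * (y : M2))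

open MvPolynomial in
lemma good_x {w : FreeGroup (Fin 2)} (h : Good w) : Good (FreeGroup.of 0 * w) := by
  obtain ⟨a, b, c, d, h⟩ := h
  refine ⟨-b, a + X 0 * b, -d, c + X 0 * d, fun x y => ?_⟩
  have e : wordEval (FreeGroup.of 0 * w) x y = x * wordEval w x y := by simp [wordEval]
  rw [e, Matrix.SpecialLinearGroup.coe_mul, h]
  have h1 := sq_eq x x.2
  simp only [mul_add, mul_smul_comm, mul_one, ← mul_assoc, h1]
  simp only [ev, map_add, map_neg, map_mul, aeval_X, tr2, sub_mul, smul_mul_assoc, one_mul]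
  simp
  module

open MvPolynomial in
lemma good_y {w : FreeGroup (Fin 2)} (h : Good w) : Good (FreeGroup.of 1 * w) := by
  obtain ⟨a, b, c, d, h⟩ := h
  refine ⟨b * (X 2 - X 0 * X 1) - c - d * X 0, b * X 1 + d,
    a + b * X 0 + c * X 1 + d * X 2, -b, fun x y => ?_⟩
  have e : wordEval (FreeGroup.of 1 * w) x y = y * wordEval w x y := by simp [wordEval]
  rw [e, Matrix.SpecialLinearGroup.coe_mul, h]
  have h1 := sq_eq y y.2
  have h2 := yx_eq x y
  have h3 := yxy_eq x y y.2
  simp only [mul_add, mul_smul_comm, mul_one, h3, h1, h2]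
  simp only [ev, map_add, map_neg, map_sub, map_mul, aeval_X, tr2]
  simp
  module

open MvPolynomial in
lemma good_inv {w : FreeGroup (Fin 2)} (i : Fin 2) (h : Good w)
    (h' : Good (FreeGroup.of i * w)) : Good ((FreeGroup.of i)⁻¹ * w) := by
  obtain ⟨a, b, c, d, h⟩ := h
  obtain ⟨a', b', c', d', h'⟩ := h'
  let t : MvPolynomial (Fin 3) ℤ := X i.castSucc
  refine ⟨t * a - a', t * b - b', t * c - c', t * d - d', fun x y => ?_⟩
  have e : wordEval ((FreeGroup.of i)⁻¹ * w) x y = (![x, y] i)⁻¹ * wordEval w x y := by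
    simp [wordEval]
  have e' : wordEval (FreeGroup.of i * w) x y = ![x, y] i * wordEval w x y := by
    simp [wordEval]
  have ht : ev x y t = tr2 (![x, y] i) := by
    fin_cases i <;> simp [ev, t]
  have h'' := h' x y
  rw [e', Matrix.SpecialLinearGroup.coe_mul] at h''
  rw [e, Matrix.SpecialLinearGroup.coe_mul, inv_eq, sub_mul, h'', h, ← ht]
  simp only [ev, map_sub, map_mul, smul_mul_assoc, one_mul]
  module

lemma good_mul (g : FreeGroup (Fin 2)) : ∀ w, Good w → Good (g * w) := by
  have key : ∀ (i : Fin 2) (w), Good w → Good (FreeGroup.of i * w) := by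
    intro i w h
    fin_cases i
    · exact good_x h
    · exact good_y h
  induction g using FreeGroup.induction_on with
  | C1 => intro w h; simpa using h
  | of i => exact key i
  | inv_of i _ => exact fun w h => good_inv i h (key i w h)
  | mul a b ha hb => intro w h; rw [mul_assoc]; exact ha _ (hb _ h)

lemma good_all (w : FreeGroup (Fin 2)) : Good w := by
  have h1 : Good 1 := ⟨1, 0, 0, 0, fun x y => by simp [wordEval, ev]⟩
  simpa using good_mul w 1 h1

/-- for every word `w ∈ F₂` there is a trace polynomial
`P_w ∈ ℤ[s,t,u]` with `tr (w(x,y)) = P_w (tr x, tr y, tr (xy))` for all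
`x, y ∈ SL(2,ℂ)`. -/
theorem trace_polynomial_exists (w : FreeGroup (Fin 2)) :
    ∃ P : MvPolynomial (Fin 3) ℤ,
      ∀ x y : SL2C,
        tr2 (wordEval w x y) =
          MvPolynomial.aeval ![tr2 x, tr2 y, tr2 (x * y)] P := by
  obtain ⟨a, b, c, d, h⟩ := good_all w
  refine ⟨2 * a + MvPolynomial.X 0 * b + MvPolynomial.X 1 * c + MvPolynomial.X 2 * d,
    fun x y => ?_⟩
  rw [tr2, h]
  simp [ev, Matrix.trace_add, Matrix.trace_smul, tr2]
  ring
end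

section
/- For all nonzero integers n, m there exists a polynomial h ∈ ℤ[S,T] in two variables such that for all x, y ∈ SL(2,ℂ): tr(xⁿ·yᵐ) = sgn(n)·sgn(m)·φ_{|n|}(tr x)·φ_{|m|}(tr y)·tr(xy) + h(tr x, tr y), where sgn denotes the sign of an integer. -/
open Matrix

/-- `φ_k`, the Dickson polynomial of the second kind `E_{k-1}(X,1)`:
`φ_1 = 1`, `φ_2 = X`, `φ_{k+1} = X·φ_k − φ_{k−1}`. -/
noncomputable def phi (k : ℕ) : Polynomial ℂ := Polynomial.dickson 2 (1 : ℂ) (k - 1)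


lemma tpp_sq (x : SL2C) : (x : Matrix (Fin 2) (Fin 2) ℂ) * x = tr2 x • (x : Matrix (Fin 2) (Fin 2) ℂ) - 1 := by
  have hd := x.det_coe
  rw [Matrix.det_fin_two] at hd
  unfold tr2
  ext i j
  fin_cases i <;> fin_cases j <;>
    simp [Matrix.mul_apply, Fin.sum_univ_two, Matrix.trace_fin_two] <;>
    first | ring1 | linear_combination (-1 : ℂ) * hd | linear_combination (0 : ℂ) * hd

lemma tpp_inv (x : SL2C) : ((x⁻¹ : SL2C) : Matrix (Fin 2) (Fin 2) ℂ) = tr2 x • (1 : Matrix (Fin 2) (Fin 2) ℂ) - x := by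
  unfold tr2
  rw [Matrix.SpecialLinearGroup.coe_inv, Matrix.adjugate_fin_two]
  ext i j
  fin_cases i <;> fin_cases j <;> simp [Matrix.trace_fin_two]

lemma tpp_tr_inv (x : SL2C) : tr2 x⁻¹ = tr2 x := by
  conv_lhs => unfold tr2
  rw [tpp_inv]
  unfold tr2
  simp [Matrix.trace_fin_two]
  ring

lemma tpp_pow (n : ℕ) : ∃ p : Polynomial ℤ,
    Polynomial.dickson 2 (1 : ℤ) (n + 1) = Polynomial.X * Polynomial.dickson 2 (1 : ℤ) n + p ∧
    ∀ x : SL2C, (x : Matrix (Fin 2) (Fin 2) ℂ) ^ (n + 1) =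
      Polynomial.aeval (tr2 x) (Polynomial.dickson 2 (1 : ℤ) n) • (x : Matrix (Fin 2) (Fin 2) ℂ)
        + Polynomial.aeval (tr2 x) p • (1 : Matrix (Fin 2) (Fin 2) ℂ) := by
  induction n with
  | zero =>
    refine ⟨0, ?_, fun x => ?_⟩
    · norm_num [Polynomial.dickson]
    · norm_num [Polynomial.dickson]
  | succ n ih =>
    obtain ⟨p, h1, h2⟩ := ih
    refine ⟨-Polynomial.dickson 2 (1 : ℤ) n, ?_, fun x => ?_⟩
    · rw [Polynomial.dickson_add_two]; simp [sub_eq_add_neg]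
    · rw [pow_succ, h2 x, h1, add_mul, smul_mul_assoc, tpp_sq, smul_mul_assoc, one_mul]
      simp only [map_add, map_mul, map_neg, Polynomial.aeval_X]
      module

lemma tpp_phi (k : ℕ) (t : ℂ) : Polynomial.eval t (phi (k + 1)) =
    Polynomial.aeval t (Polynomial.dickson 2 (1 : ℤ) k) := by
  unfold phi
  have := Polynomial.map_dickson (k := 2) (a := (1 : ℤ)) (Int.castRingHom ℂ) k
  simp only [map_one] at this
  rw [Nat.add_sub_cancel, ← this, Polynomial.eval_map, Polynomial.aeval_def]
  rfl

lemma tpp_zpow (n : ℤ) (hn : n ≠ 0) : ∃ q p : Polynomial ℤ, ∀ x : SL2C,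
    (n.sign : ℂ) * Polynomial.eval (tr2 x) (phi n.natAbs) = Polynomial.aeval (tr2 x) q ∧
    ((x ^ n : SL2C) : Matrix (Fin 2) (Fin 2) ℂ) =
      Polynomial.aeval (tr2 x) q • (x : Matrix (Fin 2) (Fin 2) ℂ)
        + Polynomial.aeval (tr2 x) p • (1 : Matrix (Fin 2) (Fin 2) ℂ) := by
  obtain ⟨k, hk⟩ : ∃ k : ℕ, n.natAbs = k + 1 := ⟨n.natAbs - 1, by omega⟩
  obtain ⟨p, -, h2⟩ := tpp_pow k
  rcases lt_or_gt_of_ne hn with h | h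
  · refine ⟨-Polynomial.dickson 2 (1 : ℤ) k,
      Polynomial.X * Polynomial.dickson 2 (1 : ℤ) k + p, fun x => ⟨?_, ?_⟩⟩
    · rw [hk, tpp_phi, Int.sign_eq_neg_one_of_neg h]; simp
    · have e : x ^ n = x⁻¹ ^ (k + 1) := by
        have : n = -((k + 1 : ℕ) : ℤ) := by omega
        rw [this, _root_.zpow_neg, _root_.zpow_natCast, inv_pow]
      rw [e, Matrix.SpecialLinearGroup.coe_pow, h2, tpp_tr_inv, tpp_inv]
      simp only [map_add, map_mul, map_neg, Polynomial.aeval_X]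
      module
  · refine ⟨Polynomial.dickson 2 (1 : ℤ) k, p, fun x => ⟨?_, ?_⟩⟩
    · rw [hk, tpp_phi, Int.sign_eq_one_of_pos h]; simp
    · have e : x ^ n = x ^ (k + 1) := by
        have : n = ((k + 1 : ℕ) : ℤ) := by omega
        rw [this, _root_.zpow_natCast]
      rw [e, Matrix.SpecialLinearGroup.coe_pow, h2]

/-- `tr (xⁿ yᵐ) = sgn(n)·sgn(m)·φ_{|n|}(tr x)·φ_{|m|}(tr y)·tr(xy) + h(tr x, tr y)`
for some `h ∈ ℤ[S,T]`. -/
theorem trace_power_product (n m : ℤ) (hn : n ≠ 0) (hm : m ≠ 0) :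
    ∃ h : MvPolynomial (Fin 2) ℤ,
      ∀ x y : SL2C,
        tr2 (x ^ n * y ^ m) =
          (n.sign : ℂ) * (m.sign : ℂ) *
            Polynomial.eval (tr2 x) (phi n.natAbs) *
            Polynomial.eval (tr2 y) (phi m.natAbs) * tr2 (x * y)
          + MvPolynomial.aeval ![tr2 x, tr2 y] h := by
  obtain ⟨q, p, h1⟩ := tpp_zpow n hn
  obtain ⟨q', p', h2⟩ := tpp_zpow m hm
  let A : Polynomial ℤ → MvPolynomial (Fin 2) ℤ := fun r => Polynomial.aeval (MvPolynomial.X 0) r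
  let B : Polynomial ℤ → MvPolynomial (Fin 2) ℤ := fun r => Polynomial.aeval (MvPolynomial.X 1) r
  refine ⟨A q * B p' * MvPolynomial.X 0 + A p * B q' * MvPolynomial.X 1 + 2 * A p * B p',
    fun x y => ?_⟩
  have hA : ∀ r, MvPolynomial.aeval ![tr2 x, tr2 y] (A r) = Polynomial.aeval (tr2 x) r := by
    intro r
    simp only [A]
    rw [← Polynomial.aeval_algHom_apply]; simp
  have hB : ∀ r, MvPolynomial.aeval ![tr2 x, tr2 y] (B r) = Polynomial.aeval (tr2 y) r := by
    intro r
    simp only [B]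
    rw [← Polynomial.aeval_algHom_apply]; simp
  obtain ⟨a1, a2⟩ := h1 x
  obtain ⟨b1, b2⟩ := h2 y
  have key : tr2 (x ^ n * y ^ m) = Polynomial.aeval (tr2 x) q * Polynomial.aeval (tr2 y) q' * tr2 (x * y)
      + (Polynomial.aeval (tr2 x) q * Polynomial.aeval (tr2 y) p' * tr2 x
        + Polynomial.aeval (tr2 x) p * Polynomial.aeval (tr2 y) q' * tr2 y
        + 2 * Polynomial.aeval (tr2 x) p * Polynomial.aeval (tr2 y) p') := by
    generalize Polynomial.aeval (tr2 x) q = c at *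
    generalize Polynomial.aeval (tr2 x) p = d at *
    generalize Polynomial.aeval (tr2 y) q' = c' at *
    generalize Polynomial.aeval (tr2 y) p' = d' at *
    unfold tr2
    rw [Matrix.SpecialLinearGroup.coe_mul, a2, b2, Matrix.SpecialLinearGroup.coe_mul]
    simp only [add_mul, mul_add, smul_mul_assoc, mul_smul_comm, one_mul, mul_one,
      Matrix.trace_add, Matrix.trace_smul, Matrix.trace_one, smul_eq_mul, Fintype.card_fin]
    push_cast
    ring
  rw [key]
  simp only [map_add, map_mul, hA, hB, MvPolynomial.aeval_X, map_ofNat, ← a1, ← b1]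
  simp only [Matrix.cons_val_zero, Matrix.cons_val_one]
  ring
end

section
/- For all nonzero integers n, m and all x, y ∈ SL(2,ℂ), writing s = tr x, t = tr y, u = tr(xy), one has tr(xⁿ·yᵐ·x⁻ⁿ·y⁻ᵐ) = 2 + φ_{|n|}(s)²·φ_{|m|}(t)²·(s² + t² + u² − s·t·u − 4). -/
open Matrix

lemma aux_det (x : SL2C) : x.1 0 0 * x.1 1 1 - x.1 0 1 * x.1 1 0 = 1 := by
  have := x.2
  rwa [Matrix.det_fin_two] at this

lemma aux_ch (x : SL2C) : x.1 * x.1 = tr2 x • x.1 - 1 := by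
  have h := aux_det x
  ext i j
  fin_cases i <;> fin_cases j <;>
    simp [tr2, Matrix.mul_apply, Fin.sum_univ_two, Matrix.trace_fin_two] <;>
    first | linear_combination (-1) * h | linear_combination h | ring

lemma aux_pow (x : SL2C) (k : ℕ) :
    (x.1 ^ (k + 2) = (Polynomial.dickson 2 (1 : ℂ) (k + 1)).eval (tr2 x) • x.1
      - (Polynomial.dickson 2 (1 : ℂ) k).eval (tr2 x) • 1) := by
  induction k with
  | zero =>
    rw [pow_two, aux_ch]
    simp only [zero_add, Polynomial.dickson_one, Polynomial.dickson_zero]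
    norm_num
  | succ k ih =>
    rw [pow_succ, ih, sub_mul, smul_mul_assoc, aux_ch, smul_mul_assoc, one_mul,
      Polynomial.dickson_add_two]
    simp only [Polynomial.eval_sub, Polynomial.eval_mul, Polynomial.eval_X, Polynomial.eval_C]
    module

lemma aux_npow (x : SL2C) (k : ℕ) (hk : k ≠ 0) :
    ∃ c : ℂ, (x ^ k).1 = (phi k).eval (tr2 x) • x.1 + c • 1 := by
  match k, hk with
  | 1, _ => exact ⟨0, by simp [phi]; norm_num⟩
  | k + 2, _ =>
    refine ⟨-(Polynomial.dickson 2 (1 : ℂ) k).eval (tr2 x), ?_⟩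
    have h := aux_pow x k
    have h2 : (x ^ (k + 2)).1 = x.1 ^ (k + 2) := Matrix.SpecialLinearGroup.coe_pow x (k + 2)
    rw [h2, h]
    simp only [phi, show k + 2 - 1 = k + 1 from rfl]
    module

lemma aux_zpow (x : SL2C) (n : ℤ) (hn : n ≠ 0) :
    ∃ e c : ℂ, e ^ 2 = ((phi n.natAbs).eval (tr2 x)) ^ 2 ∧ (x ^ n).1 = e • x.1 + c • 1 := by
  obtain ⟨c, hc⟩ := aux_npow x n.natAbs (by omega)
  rcases Int.natAbs_eq n with h | h
  · refine ⟨_, c, rfl, ?_⟩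
    rw [← hc, ← zpow_natCast, ← h]
  · refine ⟨-(phi n.natAbs).eval (tr2 x), (phi n.natAbs).eval (tr2 x) * tr2 x + c, by ring, ?_⟩
    have h3 : x ^ n = (x ^ n.natAbs)⁻¹ := by
      rw [← zpow_natCast, ← _root_.zpow_neg, ← h]
    have h4 : (x ^ n).1 = adjugate (x ^ n.natAbs).1 := by
      rw [h3]; exact Matrix.SpecialLinearGroup.coe_inv _
    rw [h4, hc, Matrix.adjugate_fin_two]
    ext i j
    fin_cases i <;> fin_cases j <;> simp [tr2, Matrix.trace_fin_two] <;> ring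

lemma aux_comm (a b : SL2C) :
    tr2 (a * b * a⁻¹ * b⁻¹) = 2 - (a.1 * b.1 - b.1 * a.1).det := by
  have ha := aux_det a
  have hb := aux_det b
  simp only [tr2, Matrix.SpecialLinearGroup.coe_mul, Matrix.SpecialLinearGroup.coe_inv,
    Matrix.adjugate_fin_two, Matrix.trace_fin_two, Matrix.det_fin_two, Matrix.mul_apply,
    Fin.sum_univ_two, Matrix.sub_apply]
  simp
  generalize a.1 0 0 = a0 at *
  generalize a.1 0 1 = a1 at *
  generalize a.1 1 0 = a2 at *
  generalize a.1 1 1 = a3 at *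
  generalize b.1 0 0 = b0 at *
  generalize b.1 0 1 = b1 at *
  generalize b.1 1 0 = b2 at *
  generalize b.1 1 1 = b3 at *
  linear_combination 2 * (b0 * b3 - b1 * b2) * ha + 2 * hb

lemma aux_fricke (x y : SL2C) :
    -(x.1 * y.1 - y.1 * x.1).det = tr2 x ^ 2 + tr2 y ^ 2 + tr2 (x * y) ^ 2
            - tr2 x * tr2 y * tr2 (x * y) - 4 := by
  have ha := aux_det x
  have hb := aux_det y
  simp only [tr2, Matrix.SpecialLinearGroup.coe_mul,
    Matrix.trace_fin_two, Matrix.det_fin_two, Matrix.mul_apply,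
    Fin.sum_univ_two, Matrix.sub_apply]
  generalize x.1 0 0 = a0 at *
  generalize x.1 0 1 = a1 at *
  generalize x.1 1 0 = a2 at *
  generalize x.1 1 1 = a3 at *
  generalize y.1 0 0 = b0 at *
  generalize y.1 0 1 = b1 at *
  generalize y.1 1 0 = b2 at *
  generalize y.1 1 1 = b3 at *
  -- homogenized identity: s² det y + t² det x + u² - stu - 4 det x det y
  linear_combination ((b0 + b3) ^ 2 - 4 * (b0 * b3 - b1 * b2)) * ha +
    ((a0 + a3) ^ 2 - 4) * hb

/-- the trace of the commutator of powers,
`tr ([xⁿ,yᵐ]) = 2 + φ_{|n|}(s)²·φ_{|m|}(t)²·(s² + t² + u² − s·t·u − 4)`. -/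
theorem trace_commutator_powers (n m : ℤ) (hn : n ≠ 0) (hm : m ≠ 0) (x y : SL2C) :
    tr2 (x ^ n * y ^ m * x ^ (-n) * y ^ (-m)) =
      2 + (Polynomial.eval (tr2 x) (phi n.natAbs)) ^ 2 *
          (Polynomial.eval (tr2 y) (phi m.natAbs)) ^ 2 *
          (tr2 x ^ 2 + tr2 y ^ 2 + tr2 (x * y) ^ 2
            - tr2 x * tr2 y * tr2 (x * y) - 4) := by
  obtain ⟨e, c, he, hx⟩ := aux_zpow x n hn
  obtain ⟨f, d, hf, hy⟩ := aux_zpow y m hm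
  rw [_root_.zpow_neg, _root_.zpow_neg, aux_comm, hx, hy, ← aux_fricke, ← he, ← hf]
  have h : (e • x.1 + c • 1) * (f • y.1 + d • 1) - (f • y.1 + d • 1) * (e • x.1 + c • 1)
      = (e * f) • (x.1 * y.1 - y.1 * x.1) := by
    simp only [add_mul, mul_add, smul_mul_assoc, mul_smul_comm, one_mul, mul_one]
    module
  rw [h, Matrix.det_smul, Fintype.card_fin]
  ring
end

section
/- For all nonzero integers n, m and all x, y ∈ SL(2,ℂ), the trace of the commutator of powers satisfies tr(xⁿ·yᵐ·x⁻ⁿ·y⁻ᵐ) = tr(x^{|n|}·y^{|m|}·x^{−|n|}·y^{−|m|}). -/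
open Matrix

theorem tr2_comm_inv_left (a b : SL2C) :
    tr2 (a⁻¹ * b * a * b⁻¹) = tr2 (a * b * a⁻¹ * b⁻¹) := by
  simp only [tr2, Matrix.SpecialLinearGroup.coe_mul, Matrix.SpecialLinearGroup.coe_inv,
    Matrix.adjugate_fin_two, Matrix.trace_fin_two, Matrix.mul_apply, Fin.sum_univ_two]
  simp
  ring

theorem tr2_comm_inv_right (a b : SL2C) :
    tr2 (a * b⁻¹ * a⁻¹ * b) = tr2 (a * b * a⁻¹ * b⁻¹) := by
  simp only [tr2, Matrix.SpecialLinearGroup.coe_mul, Matrix.SpecialLinearGroup.coe_inv,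
    Matrix.adjugate_fin_two, Matrix.trace_fin_two, Matrix.mul_apply, Fin.sum_univ_two]
  simp
  ring

/-- `tr ([xⁿ,yᵐ]) = tr ([x^{|n|},y^{|m|}])` for nonzero integers `n, m`. -/
theorem trace_commutator_abs (n m : ℤ) (hn : n ≠ 0) (hm : m ≠ 0) (x y : SL2C) :
    tr2 (x ^ n * y ^ m * x ^ (-n) * y ^ (-m)) =
      tr2 (x ^ |n| * y ^ |m| * x ^ (-|n|) * y ^ (-|m|)) := by
  rcases abs_choice n with h | h <;> rcases abs_choice m with k | k <;> rw [h, k]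
  · simp only [neg_neg, _root_.zpow_neg]
    exact (tr2_comm_inv_right _ _).symm
  · simp only [neg_neg, _root_.zpow_neg]
    exact (tr2_comm_inv_left _ _).symm
  · simp only [neg_neg, _root_.zpow_neg]
    have h1 := tr2_comm_inv_right (x ^ n)⁻¹ (y ^ m)
    rw [inv_inv] at h1
    rw [h1, tr2_comm_inv_left]
end

section
/- Let n be a nonzero integer and α ∈ ℂ with α ≠ 2 and α ≠ −2. Let P ∈ ℂ[s,t,u] be the polynomial P = 2 + φ_{|n|}(s)²·(s² + t² + u² − s·t·u − 4) (the trace polynomial of the word [xⁿ,y]). Then P − α is an irreducible polynomial in ℂ[s,t,u], and the fraction field of the quotient ring ℂ[s,t,u]/(P − α) is isomorphic as a ℂ-algebra to the fraction field of the polynomial ring ℂ[X,Y] in two variables (i.e., the trace surface {P = α} is a rational surface). -/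
open MvPolynomial

namespace TraceSurf

lemma dickson_cassini (k : ℕ) :
    (Polynomial.dickson 2 (1 : ℂ) k) ^ 2 - Polynomial.X * Polynomial.dickson 2 (1 : ℂ) k *
      Polynomial.dickson 2 (1 : ℂ) (k + 1) + (Polynomial.dickson 2 (1 : ℂ) (k + 1)) ^ 2 = 1 := by
  induction k with
  | zero => simp [Polynomial.dickson_zero, Polynomial.dickson_one]; norm_num; ring
  | succ k ih =>
    rw [Polynomial.dickson_add_two]
    simp only [map_one]
    linear_combination ih

lemma dickson_eval_two (k : ℕ) :
    (Polynomial.dickson 2 (1 : ℂ) k).eval 2 = k + 1 ∧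
    (Polynomial.dickson 2 (1 : ℂ) (k + 1)).eval 2 = k + 2 := by
  induction k with
  | zero => simp [Polynomial.dickson_zero, Polynomial.dickson_one]; norm_num
  | succ k ih =>
    refine ⟨by rw [ih.2]; push_cast; ring, ?_⟩
    rw [Polynomial.dickson_add_two]
    simp [ih.1, ih.2]; ring

lemma phi_facts (n : ℕ) (hn : n ≠ 0) : phi n ≠ 0 ∧ ∃ p : Polynomial ℂ,
    p ^ 2 - Polynomial.X * p * phi n + (phi n) ^ 2 = 1 := by
  obtain ⟨k, rfl⟩ := Nat.exists_eq_succ_of_ne_zero hn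
  constructor
  · intro h
    have := (dickson_eval_two k).1
    simp only [phi, Nat.succ_eq_add_one, Nat.add_sub_cancel] at h
    rw [h] at this
    simp at this
    exact Nat.cast_add_one_ne_zero k this.symm
  · simp only [phi, Nat.succ_eq_add_one, Nat.add_sub_cancel]
    cases k with
    | zero => exact ⟨0, by simp [Polynomial.dickson_zero]; norm_num⟩
    | succ k => exact ⟨_, dickson_cassini k⟩

/-- The quadratic `Y² - sY + 1` over `ℂ[s]`. -/
noncomputable def Q : Polynomial (Polynomial ℂ) :=
  Polynomial.X ^ 2 - Polynomial.C Polynomial.X * Polynomial.X + 1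

lemma Q_natDegree : Q.natDegree = 2 := by unfold Q; compute_degree!

lemma Q_monic : Q.Monic := by unfold Q; monicity!

lemma Q_prime : Prime Q := by
  rw [← irreducible_iff_prime]
  rw [Polynomial.Monic.irreducible_iff_roots_eq_zero_of_degree_le_three Q_monic
    (by rw [Q_natDegree]) (by rw [Q_natDegree]; norm_num)]
  rw [Multiset.eq_zero_iff_forall_notMem]
  intro r hr
  have h := Polynomial.isRoot_of_mem_roots hr
  have h1 : r * (Polynomial.X - r) = 1 := by
    simp [Q] at h
    linear_combination -h
  have hu : IsUnit r := IsUnit.of_mul_eq_one _ h1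
  have hu2 : IsUnit (Polynomial.X - r) := IsUnit.of_mul_eq_one _ (by rw [mul_comm]; exact h1)
  obtain ⟨a, -, ha⟩ := Polynomial.isUnit_iff.1 hu
  obtain ⟨b, -, hb⟩ := Polynomial.isUnit_iff.1 hu2
  have := congrArg (fun f => Polynomial.coeff f 1) hb
  simp [← ha] at this

lemma lin_of_Q_dvd (a b : Polynomial ℂ)
    (h : Q ∣ Polynomial.C a * Polynomial.X + Polynomial.C b) : a = 0 ∧ b = 0 := by
  have h0 : Polynomial.C a * Polynomial.X + Polynomial.C b = 0 := by
    by_contra hne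
    have h1 := Polynomial.natDegree_le_of_dvd h hne
    rw [Q_natDegree] at h1
    have := Polynomial.natDegree_linear_le (a := a) (b := b)
    omega
  constructor
  · simpa using congrArg (fun f => Polynomial.coeff f 1) h0
  · simpa using congrArg (fun f => Polynomial.coeff f 0) h0

variable {L : Type*} [Field L]

/-- evaluate the outer variable of a polynomial over `ℂ[s]` -/
noncomputable def ev (j : Polynomial (Polynomial ℂ) →+* L) (U : L) :
    Polynomial (Polynomial ℂ) →+* L :=
  Polynomial.eval₂RingHom (j.comp Polynomial.C) U

lemma hom_lemma (j : Polynomial (Polynomial ℂ) →+* L) (x d : Polynomial (Polynomial ℂ))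
    (hd : j d ≠ 0) (B : Polynomial (Polynomial ℂ)) (N : ℕ) (hB : B.natDegree ≤ N) :
    ∃ h, j d ^ N * ev j (j x / j d) B = j (Polynomial.C (B.coeff N) * x ^ N + d * h) := by
  refine ⟨∑ i ∈ Finset.range N, Polynomial.C (B.coeff i) * x ^ i * d ^ (N - 1 - i), ?_⟩
  simp only [ev, Polynomial.coe_eval₂RingHom]
  rw [Polynomial.eval₂_eq_sum_range' _ (Nat.lt_succ_of_le hB), Finset.sum_range_succ, mul_add,
    add_comm, map_add]
  congr 1
  · simp only [RingHom.comp_apply, map_mul, map_pow, div_pow]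
    field_simp
  · rw [map_mul, map_sum, Finset.mul_sum, Finset.mul_sum]
    refine Finset.sum_congr rfl fun i hi => ?_
    have hi := Finset.mem_range.1 hi
    obtain ⟨e, rfl⟩ : ∃ e, N = i + 1 + e := ⟨N - (i + 1), by omega⟩
    have : i + 1 + e - 1 - i = e := by omega
    rw [this]
    simp only [RingHom.comp_apply, map_mul, map_pow, div_pow]
    field_simp
    ring

lemma indep (j : Polynomial (Polynomial ℂ) →+* L) (hj : Function.Injective j)
    (x y d l e f g : Polynomial (Polynomial ℂ)) (hd : d ≠ 0)
    (hx : x = Q * e - l) (hy : y = Q * f - Polynomial.X * l) (hdQ : d = Q * g)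
    (hl : ¬ Q ∣ l) (N : ℕ) : ∀ A B : Polynomial (Polynomial ℂ), A.degree < (N : ℕ) →
    B.degree < ((N + 1 : ℕ) : WithBot ℕ) →
    ev j (j x / j d) A * (j y / j d) + ev j (j x / j d) B = 0 → A = 0 ∧ B = 0 := by
  have hjd : j d ≠ 0 := by
    rw [Ne, map_eq_zero_iff j hj]; exact hd
  have hxQ : ¬ Q ∣ x := by
    intro h
    apply hl
    have : l = Q * e - x := by rw [hx]; ring
    rw [this]
    exact dvd_sub (dvd_mul_right _ _) h
  induction N with
  | zero =>
    intro A B hA hB h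
    have hA0 : A = 0 := by
      rw [← Polynomial.degree_eq_bot]
      by_contra hne
      have := Polynomial.natDegree_lt_iff_degree_lt (n := 0) (p := A) (by
        rintro rfl; simp at hne)
      exact absurd (this.2 (by simpa using hA)) (by omega)
    have hBc : B = Polynomial.C (B.coeff 0) :=
      Polynomial.eq_C_of_degree_le_zero (Polynomial.degree_le_iff_coeff_zero _ _ |>.2 fun m hm =>
        Polynomial.coeff_eq_zero_of_degree_lt (lt_of_lt_of_le hB (by
          exact_mod_cast Nat.succ_le_of_lt (by exact_mod_cast hm))))
    refine ⟨hA0, ?_⟩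
    rw [hA0, hBc] at h
    simp [ev] at h
    rw [map_eq_zero_iff j hj] at h
    rw [hBc, h]
  | succ N ih =>
    intro A B hA hB h
    have hA' : A.natDegree ≤ N := by
      rw [Polynomial.natDegree_le_iff_degree_le]
      exact Polynomial.degree_le_iff_coeff_zero _ _ |>.2 fun m hm =>
        Polynomial.coeff_eq_zero_of_degree_lt (lt_of_lt_of_le hA (by
          exact_mod_cast Nat.succ_le_of_lt (by exact_mod_cast hm)))
    have hB' : B.natDegree ≤ N + 1 := by
      rw [Polynomial.natDegree_le_iff_degree_le]
      exact Polynomial.degree_le_iff_coeff_zero _ _ |>.2 fun m hm =>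
        Polynomial.coeff_eq_zero_of_degree_lt (lt_of_lt_of_le hB (by
          exact_mod_cast Nat.succ_le_of_lt (by exact_mod_cast hm)))
    obtain ⟨h1, e1⟩ := hom_lemma j x d hjd A N hA'
    obtain ⟨h2, e2⟩ := hom_lemma j x d hjd B (N + 1) hB'
    have key : j (y * (Polynomial.C (A.coeff N) * x ^ N + d * h1) +
        (Polynomial.C (B.coeff (N + 1)) * x ^ (N + 1) + d * h2)) = 0 := by
      rw [map_add, map_mul, ← e1, ← e2]
      have : j d * (j y / j d) = j y := by field_simp
      linear_combination j d ^ (N + 1) * h - j d ^ N * ev j (j x / j d) A * this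
    rw [map_eq_zero_iff j hj] at key
    set a := A.coeff N
    set b := B.coeff (N + 1)
    have hdvd : Q ∣ x ^ (N + 1) * (Polynomial.C a * Polynomial.X + Polynomial.C b) := by
      refine ⟨x ^ N * Polynomial.C a * (e * Polynomial.X - f) - y * g * h1 - g * h2, ?_⟩
      have e3 : y = Polynomial.X * x - Q * (e * Polynomial.X - f) := by rw [hx, hy]; ring
      rw [e3] at key ⊢
      rw [hdQ] at key
      linear_combination key
    have hlin := (Q_prime.dvd_or_dvd hdvd).resolve_left fun h => hxQ (Q_prime.dvd_of_dvd_pow h)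
    obtain ⟨ha, hb⟩ := lin_of_Q_dvd a b hlin
    have low : ∀ (G : Polynomial (Polynomial ℂ)) (M : ℕ), G.natDegree ≤ M → G.coeff M = 0 →
        G.degree < (M : WithBot ℕ) := by
      intro G M h1 h2
      rw [Polynomial.degree_lt_iff_coeff_zero]
      intro m hm
      rcases eq_or_lt_of_le hm with rfl | hm
      · exact h2
      · exact Polynomial.coeff_eq_zero_of_natDegree_lt (by omega)
    exact ih A B (low _ _ hA' ha) (low _ _ hB' hb) h

/-- the surface equation -/
noncomputable def FF (q : Polynomial ℂ) (c : ℂ) : MvPolynomial (Fin 3) ℂ :=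
  (Polynomial.aeval (X 0 : MvPolynomial (Fin 3) ℂ) q) ^ 2 *
        (X 0 ^ 2 + X 1 ^ 2 + X 2 ^ 2 - X 0 * X 1 * X 2 - 4) - C c

/-- `ℂ[s][u] → ℂ[s,t,u]` -/
noncomputable def iot : Polynomial (Polynomial ℂ) →+* MvPolynomial (Fin 3) ℂ :=
  Polynomial.eval₂RingHom (Polynomial.aeval (X 0 : MvPolynomial (Fin 3) ℂ)).toRingHom (X 2)

lemma iot_X : iot Polynomial.X = X 2 := by simp [iot]
lemma iot_C (f : Polynomial ℂ) :
    iot (Polynomial.C f) = Polynomial.aeval (X 0 : MvPolynomial (Fin 3) ℂ) f := by simp [iot]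

lemma pseudo (q : Polynomial ℂ) (c : ℂ) (G : MvPolynomial (Fin 3) ℂ) :
    ∃ (N : ℕ) (H : MvPolynomial (Fin 3) ℂ) (A B : Polynomial (Polynomial ℂ)),
      (Polynomial.aeval (X 0 : MvPolynomial (Fin 3) ℂ) q) ^ N * G =
        FF q c * H + iot A * X 1 + iot B := by
  set q' := Polynomial.aeval (X 0 : MvPolynomial (Fin 3) ℂ) q with hq'
  induction G using MvPolynomial.induction_on with
  | C a =>
    exact ⟨0, 0, 0, Polynomial.C (Polynomial.C a), by
      simp [iot_C, MvPolynomial.algebraMap_eq]⟩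
  | add G1 G2 h1 h2 =>
    obtain ⟨N1, H1, A1, B1, e1⟩ := h1
    obtain ⟨N2, H2, A2, B2, e2⟩ := h2
    refine ⟨N1 + N2, q' ^ N2 * H1 + q' ^ N1 * H2,
      Polynomial.C q ^ N2 * A1 + Polynomial.C q ^ N1 * A2,
      Polynomial.C q ^ N2 * B1 + Polynomial.C q ^ N1 * B2, ?_⟩
    simp only [map_add, map_mul, map_pow, iot_C, ← hq']
    linear_combination q' ^ N2 * e1 + q' ^ N1 * e2
  | mul_X G i h =>
    obtain ⟨N, H, A, B, e⟩ := h
    fin_cases i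
    · refine ⟨N, H * X 0, A * Polynomial.C Polynomial.X, B * Polynomial.C Polynomial.X, ?_⟩
      simp only [map_mul, iot_C, Polynomial.aeval_X, Fin.zero_eta]
      linear_combination X 0 * e
    · refine ⟨N + 2, q' ^ 2 * H * X 1 + iot A,
        A * Polynomial.C (q ^ 2 * Polynomial.X) * Polynomial.X + B * Polynomial.C (q ^ 2),
        - A * (Polynomial.C (q ^ 2) * (Polynomial.C (Polynomial.X ^ 2 - 4) + Polynomial.X ^ 2) -
          Polynomial.C (Polynomial.C c)), ?_⟩
      have hc : Polynomial.aeval (X 0 : MvPolynomial (Fin 3) ℂ) (Polynomial.C c) = C c := by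
        simp [MvPolynomial.algebraMap_eq]
      have h4 : Polynomial.aeval (X 0 : MvPolynomial (Fin 3) ℂ) (4 : Polynomial ℂ) = 4 :=
        map_ofNat _ 4
      simp only [map_mul, map_add, map_sub, map_neg, map_pow, iot_C, iot_X, Polynomial.aeval_X,
        Fin.mk_one, ← hq', hc, h4]
      have hF : FF q c = q' ^ 2 *
        (X 0 ^ 2 + X 1 ^ 2 + X 2 ^ 2 - X 0 * X 1 * X 2 - 4) - C c := rfl
      linear_combination q' ^ 2 * X 1 * e - iot A * hF
    · refine ⟨N, H * X 2, A * Polynomial.X, B * Polynomial.X, ?_⟩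
      simp only [map_mul, iot_X, Fin.reduceFinMk]
      linear_combination X 2 * e

lemma point_identity (s m q p k δ γ c w l Qv : L) (hq : q ≠ 0) (hQ : Qv ≠ 0)
    (hQv : Qv = m ^ 2 - s * m + 1) (hcas : p ^ 2 - s * p * q + q ^ 2 = 1)
    (hδ : δ ^ 2 = c) (hk : k = 2 * γ + δ) (hγ : γ * (γ + δ) = 1)
    (hw : w = δ * p + γ * s * q)
    (hl : l = (2 * w - s * k * q) * m + 2 * k * q - s * w) :
    q ^ 2 * (s ^ 2 + ((Qv * w - m * l) / (Qv * q)) ^ 2 + ((Qv * (k * q) - l) / (Qv * q)) ^ 2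
      - s * ((Qv * w - m * l) / (Qv * q)) * ((Qv * (k * q) - l) / (Qv * q)) - 4) - c = 0 := by
  have hQq : Qv * q ≠ 0 := mul_ne_zero hQ hq
  obtain ⟨τ, hτ⟩ : ∃ τ, τ = - l / Qv := ⟨_, rfl⟩
  have hτ' : τ * Qv + l = 0 := by rw [hτ]; field_simp; ring
  have hT : (Qv * w - m * l) / (Qv * q) = (w + m * τ) / q := by rw [hτ]; field_simp; ring
  have hU : (Qv * (k * q) - l) / (Qv * q) = (k * q + τ) / q := by rw [hτ]; field_simp; ring
  rw [hT, hU]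
  have h1 : w ^ 2 - s * w * k * q + k ^ 2 * q ^ 2 + q ^ 2 * s ^ 2 - 4 * q ^ 2 = c := by
    subst hw hk hδ
    linear_combination δ ^ 2 * hcas + (4 * q ^ 2 - s ^ 2 * q ^ 2) * hγ
  field_simp
  rw [hQv] at hτ'
  linear_combination h1 + τ * hτ' - τ * hl


theorem abstract_main [Algebra ℂ L] (j : Polynomial (Polynomial ℂ) →+* L)
    (hj : Function.Injective j)
    (hjC : ∀ z, j (Polynomial.C (Polynomial.C z)) = algebraMap ℂ L z)
    (gen : ∀ x : L, ∃ a b, x = j a / j b)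
    (q p : Polynomial ℂ) (hq : q ≠ 0) (hcas : p ^ 2 - Polynomial.X * p * q + q ^ 2 = 1)
    (c δ k γ : ℂ) (hc : c ≠ 0) (hk0 : k ≠ 0) (hδ : δ ^ 2 = c) (hk : k = 2 * γ + δ)
    (hγ : γ * (γ + δ) = 1) :
    Prime (FF q c) ∧ Nonempty
      (FractionRing (MvPolynomial (Fin 3) ℂ ⧸ Ideal.span {FF q c}) ≃ₐ[ℂ] L) := by
  -- the explicit point and parametrization
  obtain ⟨w, hw⟩ : ∃ w : Polynomial ℂ,
    w = Polynomial.C δ * p + Polynomial.C γ * Polynomial.X * q := ⟨_, rfl⟩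
  obtain ⟨l1, hl1⟩ : ∃ l1 : Polynomial ℂ,
    l1 = 2 * w - Polynomial.X * Polynomial.C k * q := ⟨_, rfl⟩
  obtain ⟨l0, hl0⟩ : ∃ l0 : Polynomial ℂ,
    l0 = 2 * Polynomial.C k * q - Polynomial.X * w := ⟨_, rfl⟩
  obtain ⟨l, hl⟩ : ∃ l : Polynomial (Polynomial ℂ),
    l = Polynomial.C l1 * Polynomial.X + Polynomial.C l0 := ⟨_, rfl⟩
  have hlQ : ¬ Q ∣ l := by
    intro h
    rw [hl] at h
    obtain ⟨h1, h0⟩ := lin_of_Q_dvd _ _ h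
    have h2 : Polynomial.C k * q * (Polynomial.X ^ 2 - 4) = 0 := by
      linear_combination (-2) * h0 - Polynomial.X * h1 + 2 * hl0 + Polynomial.X * hl1
    rcases mul_eq_zero.1 h2 with h3 | h3
    · rcases mul_eq_zero.1 h3 with h4 | h4
      · exact hk0 (by simpa using h4)
      · exact hq h4
    · have := congrArg (Polynomial.eval 0) h3
      norm_num at this
  have hl_ne : l ≠ 0 := fun h => hlQ (h ▸ dvd_zero _)
  have hQ0 : Q ≠ 0 := Q_prime.ne_zero
  have hCq : (Polynomial.C q : Polynomial (Polynomial ℂ)) ≠ 0 := by simpa using hq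
  have jne : ∀ {a}, a ≠ 0 → j a ≠ 0 := fun h => by
    rw [Ne, map_eq_zero_iff j hj]; exact h
  obtain ⟨x, hx⟩ : ∃ x, x = Q * Polynomial.C (Polynomial.C k * q) - l := ⟨_, rfl⟩
  obtain ⟨y, hy⟩ : ∃ y, y = Q * Polynomial.C w - Polynomial.X * l := ⟨_, rfl⟩
  obtain ⟨d, hd⟩ : ∃ d, d = Q * Polynomial.C q := ⟨_, rfl⟩
  have hd0 : d ≠ 0 := by rw [hd]; exact mul_ne_zero hQ0 hCq
  obtain ⟨U, hU⟩ : ∃ U, U = j x / j d := ⟨_, rfl⟩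
  obtain ⟨T, hT⟩ : ∃ T, T = j y / j d := ⟨_, rfl⟩
  obtain ⟨s, hs⟩ : ∃ s, s = j (Polynomial.C Polynomial.X) := ⟨_, rfl⟩
  obtain ⟨ψ, hψ⟩ : ∃ ψ : MvPolynomial (Fin 3) ℂ →ₐ[ℂ] L, ψ = MvPolynomial.aeval ![s, T, U] :=
    ⟨_, rfl⟩
  have hψ0 : ψ (X 0) = s := by simp [hψ]
  have hψ1 : ψ (X 1) = T := by simp [hψ]
  have hψ2 : ψ (X 2) = U := by simp [hψ]
  have hψC : ∀ z, ψ (C z) = algebraMap ℂ L z := fun z => by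
    simp [hψ]
  have hψp : ∀ f : Polynomial ℂ, ψ (Polynomial.aeval (X 0) f) = j (Polynomial.C f) := by
    intro f
    induction f using Polynomial.induction_on' with
    | add f g hf hg => simp only [map_add, hf, hg]
    | monomial n a =>
      rw [← Polynomial.C_mul_X_pow_eq_monomial]
      simp only [map_mul, map_pow, Polynomial.aeval_X, Polynomial.aeval_C, hψ0, hjC, ← hs]
      rw [AlgHom.commutes]
  have hψi : ∀ A, ψ (iot A) = ev j U A := by
    intro A
    induction A using Polynomial.induction_on' with
    | add f g hf hg => simp only [map_add, hf, hg]
    | monomial n a =>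
      rw [← Polynomial.C_mul_X_pow_eq_monomial]
      simp only [map_mul, map_pow, iot_X, iot_C, hψ2, hψp]
      simp [ev]
  have hF0 : ψ (FF q c) = 0 := by
    have := point_identity s (j Polynomial.X) (j (Polynomial.C q)) (j (Polynomial.C p))
      (algebraMap ℂ L k) (algebraMap ℂ L δ) (algebraMap ℂ L γ) (algebraMap ℂ L c)
      (j (Polynomial.C w)) (j l) (j Q) (jne hCq) (jne hQ0)
      (by simp [Q, hs])
      (by rw [hs, ← map_one j, ← map_one Polynomial.C, ← hcas]; simp only [map_add, map_sub, map_mul, map_pow])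
      (by rw [← hδ, map_pow]) (by rw [hk, map_add, map_mul, map_ofNat]) (by rw [← map_add, ← map_mul, hγ, map_one])
      (by rw [hw, ← hjC, ← hjC, hs]; simp only [map_add, map_mul])
      (by rw [hl, hl1, hl0, ← hjC, hs]; simp only [map_add, map_sub, map_mul, map_ofNat]; ring)
    simp only [FF, map_sub, map_mul, map_add, map_pow, map_ofNat, hψp, hψ0, hψ1, hψ2, hψC]
    rw [← this, hT, hU, hx, hy, hd, ← hjC k]
    simp only [map_sub, map_mul]
  have hcop : IsCoprime (FF q c) (Polynomial.aeval (X 0 : MvPolynomial (Fin 3) ℂ) q) := by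
    refine ⟨- C c⁻¹, C c⁻¹ * Polynomial.aeval (X 0 : MvPolynomial (Fin 3) ℂ) q *
      (X 0 ^ 2 + X 1 ^ 2 + X 2 ^ 2 - X 0 * X 1 * X 2 - 4), ?_⟩
    have : (C c⁻¹ * C c : MvPolynomial (Fin 3) ℂ) = 1 := by
      rw [← C_mul, inv_mul_cancel₀ hc, C_1]
    unfold FF
    linear_combination this
  have hker : ∀ G, ψ G = 0 → FF q c ∣ G := by
    intro G hG
    obtain ⟨N, H, A, B, e⟩ := pseudo q c G
    have h1 := congrArg ψ e
    simp only [map_mul, map_add, hG, hF0, hψi, hψ1] at h1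
    have h2 : ev j (j x / j d) A * (j y / j d) + ev j (j x / j d) B = 0 := by
      rw [← hU, ← hT]; linear_combination -h1
    obtain ⟨M, hA, hB⟩ : ∃ M : ℕ, A.natDegree < M ∧ B.natDegree < M + 1 :=
      ⟨A.natDegree + B.natDegree + 1, by omega, by omega⟩
    obtain ⟨hA0, hB0⟩ := indep j hj x y d l _ _ _ hd0 hx hy hd hlQ M A B
      (lt_of_le_of_lt Polynomial.degree_le_natDegree (by exact_mod_cast hA))
      (lt_of_le_of_lt Polynomial.degree_le_natDegree (by exact_mod_cast hB)) h2
    rw [hA0, hB0] at e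
    have : FF q c ∣ (Polynomial.aeval (X 0 : MvPolynomial (Fin 3) ℂ) q) ^ N * G :=
      ⟨H, by rw [e]; simp⟩
    exact (hcop.pow_right).dvd_of_dvd_mul_left this
  have hiff : ∀ G, FF q c ∣ G ↔ ψ G = 0 := fun G =>
    ⟨fun ⟨H, e⟩ => by rw [e, map_mul, hF0, zero_mul], hker G⟩
  have hFne : FF q c ≠ 0 := by
    intro h
    have := congrArg (MvPolynomial.eval ![(2 : ℂ), 0, 0]) h
    simp [FF] at this
    norm_num at this
    exact hc this
  have hprime : Prime (FF q c) := by
    refine ⟨hFne, fun h => ?_, fun a b h => ?_⟩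
    · have := (hiff 1).1 h.dvd
      simp at this
    · rw [hiff, map_mul, mul_eq_zero] at h
      rw [hiff, hiff]; exact h
  refine ⟨hprime, ?_⟩
  have : (Ideal.span {FF q c}).IsPrime := (Ideal.span_singleton_prime hFne).2 hprime
  obtain ⟨Ψ, hΨ⟩ : ∃ Ψ : (MvPolynomial (Fin 3) ℂ ⧸ Ideal.span {FF q c}) →ₐ[ℂ] L,
      ∀ G, Ψ (Ideal.Quotient.mk _ G) = ψ G :=
    ⟨Ideal.Quotient.liftₐ _ ψ (fun a ha => by
      exact (hiff a).1 (Ideal.mem_span_singleton.1 ha)), fun G => rfl⟩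
  have hΨinj : Function.Injective Ψ := by
    rw [injective_iff_map_eq_zero]
    intro a ha
    obtain ⟨G, rfl⟩ := Ideal.Quotient.mk_surjective a
    rw [hΨ] at ha
    exact Ideal.Quotient.eq_zero_iff_mem.2 (Ideal.mem_span_singleton.2 (hker G ha))
  obtain ⟨Φ, hΦ⟩ : ∃ Φ : FractionRing (MvPolynomial (Fin 3) ℂ ⧸ Ideal.span {FF q c}) →ₐ[ℂ] L,
      ∀ G : MvPolynomial (Fin 3) ℂ, Φ (algebraMap (MvPolynomial (Fin 3) ℂ ⧸ Ideal.span {FF q c})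
        (FractionRing (MvPolynomial (Fin 3) ℂ ⧸ Ideal.span {FF q c}))
        (Ideal.Quotient.mk _ G)) = ψ G := by
    refine ⟨IsFractionRing.liftAlgHom (g := Ψ) hΨinj, fun G => ?_⟩
    rw [← hΨ]
    exact IsFractionRing.lift_algebraMap hΨinj _
  have hsurj : Function.Surjective Φ := by
    have hr : ∀ G, ψ G ∈ Φ.toRingHom.fieldRange := fun G => ⟨_, hΦ G⟩
    have hCf : ∀ f : Polynomial ℂ, j (Polynomial.C f) ∈ Φ.toRingHom.fieldRange := fun f => by
      rw [← hψp]; exact hr _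
    have hm : j Polynomial.X ∈ Φ.toRingHom.fieldRange := by
      have e : j Polynomial.X =
          (T - j (Polynomial.C w) / j (Polynomial.C q)) / (U - j (Polynomial.C (Polynomial.C k))) := by
        have h1 := jne hCq
        have h2 := jne hQ0
        have h3 := jne hl_ne
        have e1 : T - j (Polynomial.C w) / j (Polynomial.C q) =
            - (j Polynomial.X * j l) / (j Q * j (Polynomial.C q)) := by
          rw [hT, hy, hd]; simp only [map_sub, map_mul]; field_simp; ring
        have e2 : U - j (Polynomial.C (Polynomial.C k)) = - j l / (j Q * j (Polynomial.C q)) := by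
          rw [hU, hx, hd]; simp only [map_sub, map_mul]; field_simp; ring
        rw [e1, e2]
        field_simp
      rw [e]
      exact div_mem (sub_mem (hψ1 ▸ hr _) (div_mem (hCf _) (hCf _)))
        (sub_mem (hψ2 ▸ hr _) (hCf _))
    have hall : ∀ a, j a ∈ Φ.toRingHom.fieldRange := by
      intro a
      induction a using Polynomial.induction_on' with
      | add f g hf hg => rw [map_add]; exact add_mem hf hg
      | monomial n a =>
        rw [← Polynomial.C_mul_X_pow_eq_monomial, map_mul, map_pow]
        exact mul_mem (hCf _) (pow_mem hm _)
    intro z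
    obtain ⟨a, b, rfl⟩ := gen z
    obtain ⟨v, hv⟩ := div_mem (hall a) (hall b)
    exact ⟨v, hv⟩
  exact ⟨AlgEquiv.ofBijective Φ ⟨Φ.toRingHom.injective, hsurj⟩⟩

/-- `ℂ[s][m] → ℂ[s,m]` -/
noncomputable def j2 : Polynomial (Polynomial ℂ) →+* MvPolynomial (Fin 2) ℂ :=
  Polynomial.eval₂RingHom (Polynomial.aeval (X 0 : MvPolynomial (Fin 2) ℂ)).toRingHom (X 1)

/-- `ℂ[s,m] → ℂ[s][m]` -/
noncomputable def i2 : MvPolynomial (Fin 2) ℂ →+* Polynomial (Polynomial ℂ) :=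
  MvPolynomial.eval₂Hom (Polynomial.C.comp Polynomial.C)
    ![Polynomial.C Polynomial.X, Polynomial.X]

lemma i2_j2 (a : Polynomial (Polynomial ℂ)) : i2 (j2 a) = a := by
  have : i2.comp j2 = RingHom.id _ := by
    ext <;> simp [i2, j2, MvPolynomial.algebraMap_eq]
  exact congrArg (fun f => f a) this

lemma j2_i2 (a : MvPolynomial (Fin 2) ℂ) : j2 (i2 a) = a := by
  have : j2.comp i2 = RingHom.id _ := by
    apply MvPolynomial.ringHom_ext
    · intro r; simp [i2, j2, MvPolynomial.algebraMap_eq]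
    · intro i; fin_cases i <;> simp [i2, j2]
  exact congrArg (fun f => f a) this

end TraceSurf

/-- for `w = [xⁿ,y]` and `α ≠ ±2` the polynomial `P − α` is irreducible
and the trace surface `{P = α}` is rational: the fraction field of
`ℂ[s,t,u]/(P − α)` is `ℂ`-isomorphic to the field of rational functions in two variables. -/
theorem trace_surface_commutator_xn_y_rational (n : ℤ) (hn : n ≠ 0)
    (α : ℂ) (hα : α ≠ 2) (hα' : α ≠ -2)
    (P : MvPolynomial (Fin 3) ℂ)
    (hP : P = C 2 + (Polynomial.aeval (X 0 : MvPolynomial (Fin 3) ℂ) (phi n.natAbs)) ^ 2 *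
        (X 0 ^ 2 + X 1 ^ 2 + X 2 ^ 2 - X 0 * X 1 * X 2 - 4)) :
    Irreducible (P - C α) ∧
      Nonempty
        (FractionRing (MvPolynomial (Fin 3) ℂ ⧸ Ideal.span {P - C α}) ≃ₐ[ℂ]
          FractionRing (MvPolynomial (Fin 2) ℂ)) := by
  classical
  obtain ⟨hq, p, hcas⟩ := TraceSurf.phi_facts n.natAbs (by simpa using hn)
  obtain ⟨δ, hδ⟩ := IsAlgClosed.exists_pow_nat_eq (α - 2) (n := 2) (by norm_num)
  obtain ⟨k, hk⟩ := IsAlgClosed.exists_pow_nat_eq (α + 2) (n := 2) (by norm_num)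
  have hF : P - C α = TraceSurf.FF (phi n.natAbs) (α - 2) := by
    rw [hP, TraceSurf.FF, C_sub]; ring
  have hk0 : k ≠ 0 := by
    rintro rfl
    exact hα' (by linear_combination -hk)
  have hinj : Function.Injective (algebraMap (MvPolynomial (Fin 2) ℂ)
      (FractionRing (MvPolynomial (Fin 2) ℂ))) := IsFractionRing.injective _ _
  have := TraceSurf.abstract_main (L := FractionRing (MvPolynomial (Fin 2) ℂ))
    ((algebraMap (MvPolynomial (Fin 2) ℂ) _).comp TraceSurf.j2)
    (hinj.comp (Function.LeftInverse.injective TraceSurf.i2_j2))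
    (fun z => by
      rw [IsScalarTower.algebraMap_apply ℂ (MvPolynomial (Fin 2) ℂ)
        (FractionRing (MvPolynomial (Fin 2) ℂ))]
      simp [TraceSurf.j2])
    (fun x => by
      obtain ⟨a, b, -, h⟩ := IsFractionRing.div_surjective (A := MvPolynomial (Fin 2) ℂ) x
      exact ⟨TraceSurf.i2 a, TraceSurf.i2 b, by
        simp only [RingHom.comp_apply, TraceSurf.j2_i2, h]⟩)
    (phi n.natAbs) p hq hcas (α - 2) δ k ((k - δ) / 2) (sub_ne_zero.2 hα) hk0 hδ (by ring)
    (by linear_combination (hk - hδ) / 4)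
  rw [hF]
  exact ⟨this.1.irreducible, this.2⟩
end

section
/- Let n, m be nonzero integers, let α ∈ ℂ with α ≠ 2 and α ≠ −2, and let P ∈ ℂ[s,t,u] be the polynomial P = 2 + φ_{|n|}(s)²·φ_{|m|}(t)²·(s² + t² + u² − s·t·u − 4). Then the set of points (s₀,t₀,u₀) ∈ ℂ³ at which P(s₀,t₀,u₀) = α and all three partial derivatives ∂P/∂s, ∂P/∂t, ∂P/∂u vanish (the singular points of the trace surface {P = α}) is finite. -/
open MvPolynomial

theorem eval_aeval_X_aux (v : Fin 3 → ℂ) (i : Fin 3) (f : Polynomial ℂ) :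
    eval v (Polynomial.aeval (X i : MvPolynomial (Fin 3) ℂ) f) = f.eval (v i) := by
  induction f using Polynomial.induction_on' with
  | add p q hp hq => simp only [map_add, hp, hq, Polynomial.eval_add]
  | monomial k a =>
    simp [Polynomial.aeval_monomial, MvPolynomial.algebraMap_eq]

/-- `(X² - 4) f' + X f` is nonzero, since `2 f` times it is the derivative of `f² (X² - 4)`. -/
theorem crit_ne_zero (f : Polynomial ℂ) (hf : f ≠ 0) :
    Polynomial.derivative f * (Polynomial.X ^ 2 - Polynomial.C 4) + Polynomial.X * f ≠ 0 := by
  intro h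
  have hd : Polynomial.derivative (f ^ 2 * (Polynomial.X ^ 2 - Polynomial.C 4)) = 0 := by
    have : Polynomial.derivative (f ^ 2 * (Polynomial.X ^ 2 - Polynomial.C 4)) =
        2 * f * (Polynomial.derivative f * (Polynomial.X ^ 2 - Polynomial.C 4)
          + Polynomial.X * f) := by
      simp only [Polynomial.derivative_mul, Polynomial.derivative_pow, Polynomial.derivative_sub,
        Polynomial.derivative_X, Polynomial.derivative_C]
      have e2 : (Polynomial.C 2 : Polynomial ℂ) = 2 := rfl
      simp [e2]
      ring
    rw [this, h, mul_zero]
  have h0 := Polynomial.natDegree_eq_zero_of_derivative_eq_zero hd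
  have h2 : (Polynomial.X ^ 2 - Polynomial.C 4 : Polynomial ℂ).natDegree = 2 :=
    Polynomial.natDegree_X_pow_sub_C
  have h3 : (Polynomial.X ^ 2 - Polynomial.C 4 : Polynomial ℂ) ≠ 0 := by
    intro h; rw [h] at h2; simp at h2
  rw [Polynomial.natDegree_mul (pow_ne_zero 2 hf) h3, h2] at h0
  omega

/-- the set of singular points of the trace surface `{P = α}` is finite,
for `P` the trace polynomial of `[xⁿ,yᵐ]` and `α ≠ ±2`. -/
theorem singular_points_finite (n m : ℤ) (hn : n ≠ 0) (hm : m ≠ 0)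
    (α : ℂ) (hα : α ≠ 2) (hα' : α ≠ -2)
    (P : MvPolynomial (Fin 3) ℂ)
    (hP : P = C 2 +
        (Polynomial.aeval (X 0 : MvPolynomial (Fin 3) ℂ) (phi n.natAbs)) ^ 2 *
        (Polynomial.aeval (X 1 : MvPolynomial (Fin 3) ℂ) (phi m.natAbs)) ^ 2 *
        (X 0 ^ 2 + X 1 ^ 2 + X 2 ^ 2 - X 0 * X 1 * X 2 - 4)) :
    {p : ℂ × ℂ × ℂ |
        eval ![p.1, p.2.1, p.2.2] P = α ∧
        eval ![p.1, p.2.1, p.2.2] (pderiv 0 P) = 0 ∧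
        eval ![p.1, p.2.1, p.2.2] (pderiv 1 P) = 0 ∧
        eval ![p.1, p.2.1, p.2.2] (pderiv 2 P) = 0}.Finite := by
  set f := phi n.natAbs
  set g := phi m.natAbs
  by_cases hf : f = 0
  · convert Set.finite_empty
    ext p
    simp only [Set.mem_setOf_eq, Set.mem_empty_iff_false, iff_false]
    rintro ⟨h, -⟩
    apply hα
    rw [← h, hP, hf]
    simp
  by_cases hg : g = 0
  · convert Set.finite_empty
    ext p
    simp only [Set.mem_setOf_eq, Set.mem_empty_iff_false, iff_false]
    rintro ⟨h, -⟩
    apply hα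
    rw [← h, hP, hg]
    simp
  have F1 := Polynomial.finite_setOf_isRoot (crit_ne_zero f hf)
  have F2 := Polynomial.finite_setOf_isRoot (crit_ne_zero g hg)
  refine ((F1.prod F2).image (fun q : ℂ × ℂ => (q.1, q.2, q.1 * q.2 / 2))).subset ?_
  rintro ⟨s, t, u⟩ ⟨h, h0, h1, h2⟩
  have e4 : (4 : MvPolynomial (Fin 3) ℂ) = C 4 := rfl
  rw [hP, e4] at h h0 h1 h2
  simp only [map_add, map_sub, Derivation.leibniz, Derivation.leibniz_pow, Derivation.map_aeval,
    pderiv_C, pderiv_X, eval_C, eval_X, map_mul, map_pow, eval_aeval_X_aux, smul_eq_mul,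
    nsmul_eq_mul, map_natCast] at h h0 h1 h2
  simp [eval_aeval_X_aux] at h h0 h1 h2
  set a := Polynomial.eval s f
  set b := Polynomial.eval t g
  set a' := Polynomial.eval s (Polynomial.derivative f) with ha'
  set b' := Polynomial.eval t (Polynomial.derivative g) with hb'
  have hne : a ^ 2 * b ^ 2 * (s ^ 2 + t ^ 2 + u ^ 2 - s * t * u - 4) ≠ 0 := by
    intro h'; rw [h'] at h; apply hα; rw [← h]; ring
  have ha : a ≠ 0 := by rintro h'; simp [h'] at hne
  have hb : b ≠ 0 := by rintro h'; simp [h'] at hne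
  have hu : u = s * t / 2 := by
    have := h2.resolve_left (by simp [ha, hb])
    linear_combination this / 2
  subst hu
  have hQ : s ^ 2 + t ^ 2 + (s * t / 2) ^ 2 - s * t * (s * t / 2) - 4 =
    -(s ^ 2 - 4) * (t ^ 2 - 4) / 4 := by ring
  rw [hQ] at hne
  have hs : s ^ 2 - 4 ≠ 0 := by rintro h'; simp [h'] at hne
  have ht : t ^ 2 - 4 ≠ 0 := by rintro h'; simp [h'] at hne
  refine ⟨(s, t), ⟨?_, ?_⟩, rfl⟩
  · have : (a * b ^ 2 * (t ^ 2 - 4)) * (a' * (s ^ 2 - 4) + s * a) = 0 := by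
      linear_combination (-2) * h0
    have := (mul_eq_zero.1 this).resolve_left (by positivity)
    simpa [Polynomial.IsRoot] using this
  · have : (b * a ^ 2 * (s ^ 2 - 4)) * (b' * (t ^ 2 - 4) + t * b) = 0 := by
      linear_combination (-2) * h1
    have := (mul_eq_zero.1 this).resolve_left (by positivity)
    simpa [Polynomial.IsRoot] using this
end

section
/- Let n, m be nonzero integers, let α ∈ ℂ with α ≠ 2 and α ≠ −2, and let P ∈ ℂ[s,t,u] be the polynomial P = 2 + φ_{|n|}(s)²·φ_{|m|}(t)²·(s² + t² + u² − s·t·u − 4) (the trace polynomial of the word [xⁿ,yᵐ]). Then the trace surface H = {(s,t,u) : P(s,t,u) = α} is irreducible; equivalently, the zero locus of the polynomial P − α in the prime spectrum of ℂ[s,t,u] is an irreducible closed set. -/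
open MvPolynomial

lemma quad_coeffs {R : Type*} [CommRing R] (a b c : R) :
    (Polynomial.C a * Polynomial.X ^ 2 + Polynomial.C b * Polynomial.X + Polynomial.C c).coeff 0 = c ∧
    (Polynomial.C a * Polynomial.X ^ 2 + Polynomial.C b * Polynomial.X + Polynomial.C c).coeff 1 = b ∧
    (Polynomial.C a * Polynomial.X ^ 2 + Polynomial.C b * Polynomial.X + Polynomial.C c).coeff 2 = a := by
  refine ⟨?_, ?_, ?_⟩
  · simp
  · simp [Polynomial.coeff_C, Polynomial.coeff_X_pow]
  · simp [Polynomial.coeff_C, Polynomial.coeff_X]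

lemma phi_monic_deg (k : ℕ) :
    ((Polynomial.dickson 2 (1 : ℂ) k).Monic ∧ (Polynomial.dickson 2 (1 : ℂ) k).natDegree = k) ∧
    ((Polynomial.dickson 2 (1 : ℂ) (k+1)).Monic ∧
      (Polynomial.dickson 2 (1 : ℂ) (k+1)).natDegree = k + 1) := by
  induction k with
  | zero =>
    have h0 : Polynomial.dickson 2 (1 : ℂ) 0 = 1 := by
      rw [Polynomial.dickson_zero]; norm_num
    have h1 : Polynomial.dickson 2 (1 : ℂ) (0+1) = Polynomial.X := by
      simp
    rw [h0, h1]
    exact ⟨⟨Polynomial.monic_one, by simp⟩, Polynomial.monic_X, by simp⟩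
  | succ k ih =>
    refine ⟨ih.2, ?_⟩
    obtain ⟨⟨m0, d0⟩, m1, d1⟩ := ih
    have hr : Polynomial.dickson 2 (1 : ℂ) (k+1+1) =
        Polynomial.X * Polynomial.dickson 2 (1 : ℂ) (k+1) - Polynomial.dickson 2 (1 : ℂ) k := by
      rw [Polynomial.dickson_add_two]; simp
    have mX : (Polynomial.X * Polynomial.dickson 2 (1 : ℂ) (k+1)).Monic := Polynomial.monic_X.mul m1
    have dX : (Polynomial.X * Polynomial.dickson 2 (1 : ℂ) (k+1)).natDegree = k + 1 + 1 := by
      rw [Polynomial.monic_X.natDegree_mul m1, d1, Polynomial.natDegree_X]; omega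
    have hlt : (Polynomial.dickson 2 (1 : ℂ) k).natDegree <
        (Polynomial.X * Polynomial.dickson 2 (1 : ℂ) (k+1)).natDegree := by omega
    rw [hr]
    refine ⟨mX.sub_of_left ?_, ?_⟩
    · exact Polynomial.degree_lt_degree hlt
    · rw [Polynomial.natDegree_sub_eq_left_of_natDegree_lt hlt, dX]

lemma phi_ne (k : ℕ) : phi k ≠ 0 := (phi_monic_deg (k-1)).1.1.ne_zero

noncomputable def bigA (k : ℕ) : Polynomial ℂ := phi k ^ 2 * (Polynomial.X ^ 2 - Polynomial.C 4)

lemma bigA_deg (k : ℕ) : 0 < (bigA k).natDegree := by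
  have m : (Polynomial.X ^ 2 - Polynomial.C (4:ℂ)).Monic := Polynomial.monic_X_pow_sub_C _ (by norm_num)
  have hm : (phi k).Monic := (phi_monic_deg (k-1)).1.1
  rw [bigA, (hm.pow 2).natDegree_mul m, Polynomial.natDegree_X_pow_sub_C]
  omega

lemma bigA_surj (k : ℕ) (v : ℂ) : ∃ x, (bigA k).eval x = v := by
  have h : (bigA k - Polynomial.C v).degree ≠ 0 := by
    have h1 : (bigA k - Polynomial.C v).natDegree ≠ 0 := by
      rw [Polynomial.natDegree_sub_C]; exact (bigA_deg k).ne'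
    intro h
    exact h1 (Polynomial.natDegree_eq_of_degree_eq_some h)
  obtain ⟨x, hx⟩ := IsAlgClosed.exists_root _ h
  refine ⟨x, ?_⟩
  simpa [Polynomial.IsRoot, sub_eq_zero] using hx

lemma not_sq (j k : ℕ) (c : ℂ) (hc : c ≠ 0) (h : MvPolynomial (Fin 2) ℂ)
    (hh : h ^ 2 = Polynomial.aeval (X 0 : MvPolynomial (Fin 2) ℂ) (bigA j) *
      Polynomial.aeval (X 1 : MvPolynomial (Fin 2) ℂ) (bigA k) - C (4 * c)) : False := by
  have key : ∀ v : ℂ, ∃ g : Polynomial ℂ, g ^ 2 = Polynomial.C v * bigA k - Polynomial.C (4 * c) := by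
    intro v
    obtain ⟨x, hx⟩ := bigA_surj j v
    refine ⟨MvPolynomial.aeval ![Polynomial.C x, Polynomial.X] h, ?_⟩
    rw [← map_pow, hh, map_sub, map_mul, ← Polynomial.aeval_algHom_apply,
      ← Polynomial.aeval_algHom_apply, MvPolynomial.aeval_X, MvPolynomial.aeval_X,
      MvPolynomial.aeval_C]
    have e1 : Polynomial.aeval (Polynomial.C x) (bigA j) = Polynomial.C v := by
      rw [← hx]
      exact Polynomial.aeval_algebraMap_apply_eq_algebraMap_eval x (bigA j)
    simp only [Matrix.cons_val_zero, Matrix.cons_val_one, e1, Polynomial.aeval_X_left_apply]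
    rfl
  obtain ⟨g, hg⟩ := key 1
  obtain ⟨f, hf⟩ := key 4
  have hu : (2 * g - f) * (2 * g + f) = Polynomial.C (-12 * c) := by
    have : (2 * g - f) * (2 * g + f) = 4 * g ^ 2 - f ^ 2 := by ring
    rw [this, hg, hf]
    have e4 : (4 : Polynomial ℂ) = Polynomial.C 4 := rfl
    rw [e4]
    simp only [Polynomial.C_mul, Polynomial.C_neg, map_one]
    have e12 : (Polynomial.C 12 : Polynomial ℂ) = 12 := rfl
    rw [e12, ← e4]; ring
  have hU : IsUnit ((2 * g - f) * (2 * g + f)) := by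
    rw [hu, Polynomial.isUnit_C]
    exact isUnit_iff_ne_zero.2 (by simpa using hc)
  have h1 := Polynomial.natDegree_eq_zero_of_isUnit (isUnit_of_mul_isUnit_left hU)
  have h2 := Polynomial.natDegree_eq_zero_of_isUnit (isUnit_of_mul_isUnit_right hU)
  have h3 : g.natDegree = 0 := by
    have e : g = Polynomial.C (1/4) * ((2 * g - f) + (2 * g + f)) := by
      have : (2 * g - f) + (2 * g + f) = Polynomial.C 4 * g := by
        have e4 : (Polynomial.C 4 : Polynomial ℂ) = 4 := rfl
        rw [e4]; ring
      rw [this, ← mul_assoc, ← Polynomial.C_mul]; norm_num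
    rw [e]
    have := Polynomial.natDegree_C_mul_le (1/4 : ℂ) ((2 * g - f) + (2 * g + f))
    have := Polynomial.natDegree_add_le (2 * g - f) (2 * g + f)
    simp only [h1, h2] at this
    omega
  have h4 := bigA_deg k
  have h5 : bigA k = g ^ 2 + Polynomial.C (4 * c) := by rw [hg]; simp
  rw [h5, Polynomial.natDegree_add_C, Polynomial.natDegree_pow, h3] at h4
  omega

/-- abstract quadratic irreducibility -/
lemma quad_irred {R : Type*} [CommRing R] [IsDomain R] [IsIntegrallyClosed R]
    (e w k c : R) (he : e ≠ 0) (hc : IsUnit c)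
    (hns : ∀ h : R, h ^ 2 ≠ e ^ 2 * (w ^ 2 - 4 * k) - 4 * c) :
    Irreducible (Polynomial.C (e ^ 2) * Polynomial.X ^ 2 + Polynomial.C (-(e ^ 2 * w)) * Polynomial.X
      + Polynomial.C (e ^ 2 * k + c)) := by
  have he2 : e ^ 2 ≠ 0 := pow_ne_zero 2 he
  set p : Polynomial R := Polynomial.C (e ^ 2) * Polynomial.X ^ 2 +
    Polynomial.C (-(e ^ 2 * w)) * Polynomial.X + Polynomial.C (e ^ 2 * k + c) with hp
  have hdeg : p.natDegree = 2 := Polynomial.natDegree_quadratic he2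
  have c0 : p.coeff 0 = e ^ 2 * k + c := (quad_coeffs _ _ _).1
  have c1 : p.coeff 1 = -(e ^ 2 * w) := (quad_coeffs _ _ _).2.1
  have c2 : p.coeff 2 = e ^ 2 := (quad_coeffs _ _ _).2.2
  have hp0 : p ≠ 0 := by
    intro h; rw [h] at hdeg; simp at hdeg
  -- constant factors are units
  have hconst : ∀ f g : Polynomial R, p = f * g → f.natDegree = 0 → IsUnit f := by
    intro f g hfg hf
    rw [Polynomial.natDegree_eq_zero] at hf
    obtain ⟨r, rfl⟩ := hf
    have hd : ∀ i, r ∣ p.coeff i := fun i => by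
      rw [hfg, Polynomial.coeff_C_mul]; exact dvd_mul_right _ _
    have d0 := hd 0
    have d2 := hd 2
    rw [c0] at d0; rw [c2] at d2
    have : r ∣ c := (dvd_add_right (d2.mul_right k)).1 d0
    exact Polynomial.isUnit_C.2 (isUnit_of_dvd_unit this hc)
  refine ⟨fun h => ?_, fun f g hfg => ?_⟩
  · have := Polynomial.natDegree_eq_zero_of_isUnit h
    omega
  · have hf0 : f ≠ 0 := by rintro rfl; simp at hfg; exact hp0 hfg
    have hg0 : g ≠ 0 := by rintro rfl; simp at hfg; exact hp0 hfg
    have hsum : f.natDegree + g.natDegree = 2 := by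
      rw [← Polynomial.natDegree_mul hf0 hg0, ← hfg, hdeg]
    by_cases hf : f.natDegree = 0
    · exact Or.inl (hconst f g hfg hf)
    by_cases hg : g.natDegree = 0
    · exact Or.inr (hconst g f (by rw [hfg, mul_comm]) hg)
    exfalso
    have ef := Polynomial.eq_X_add_C_of_natDegree_le_one (p := f) (by omega)
    have eg := Polynomial.eq_X_add_C_of_natDegree_le_one (p := g) (by omega)
    set a := f.coeff 1
    set b := f.coeff 0
    set a' := g.coeff 1
    set b' := g.coeff 0
    have hmul : p = Polynomial.C (a * a') * Polynomial.X ^ 2 +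
        Polynomial.C (a * b' + b * a') * Polynomial.X + Polynomial.C (b * b') := by
      rw [hfg, ef, eg]; simp only [Polynomial.C_mul, Polynomial.C_add]; ring
    have q0 : e ^ 2 * k + c = b * b' := by rw [← c0, hmul]; exact (quad_coeffs _ _ _).1
    have q1 : -(e ^ 2 * w) = a * b' + b * a' := by
      rw [← c1, hmul]; exact (quad_coeffs _ _ _).2.1
    have q2 : e ^ 2 = a * a' := by
      rw [← c2, hmul]; exact (quad_coeffs _ _ _).2.2
    have hd : (a * b' - b * a') ^ 2 = e ^ 2 * (e ^ 2 * (w ^ 2 - 4 * k) - 4 * c) := by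
      have : (a * b' - b * a') ^ 2 = (a * b' + b * a') ^ 2 - 4 * (a * a') * (b * b') := by ring
      rw [this, ← q0, ← q1, ← q2]; ring
    have hdv : e ∣ a * b' - b * a' :=
      (IsIntegrallyClosed.pow_dvd_pow_iff (two_ne_zero)).1 (Dvd.intro _ hd.symm)
    obtain ⟨h, hh⟩ := hdv
    rw [hh, mul_pow] at hd
    exact hns h (mul_left_cancel₀ he2 hd)

lemma aeval_phi_ne (i : Fin 2) (k : ℕ) :
    Polynomial.aeval (X i : MvPolynomial (Fin 2) ℂ) (phi k) ≠ 0 := by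
  intro h
  have := congrArg (MvPolynomial.aeval (fun _ : Fin 2 => (Polynomial.X : Polynomial ℂ))) h
  rw [← Polynomial.aeval_algHom_apply, MvPolynomial.aeval_X, Polynomial.aeval_X_left_apply,
    map_zero] at this
  exact phi_ne k this

/-- singles out the last variable -/
noncomputable def lastEquiv : MvPolynomial (Fin 3) ℂ ≃ₐ[ℂ] Polynomial (MvPolynomial (Fin 2) ℂ) :=
  (renameEquiv ℂ (finRotate 3)).trans (finSuccEquiv ℂ 2)

lemma lastEquiv_two : lastEquiv (X 2) = Polynomial.X := by
  have : finRotate 3 2 = 0 := by decide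
  simp [lastEquiv, this, finSuccEquiv_X_zero]

lemma lastEquiv_zero : lastEquiv (X 0) = Polynomial.C (X 0) := by
  have : finRotate 3 0 = Fin.succ 0 := by decide
  simp only [lastEquiv, AlgEquiv.trans_apply, renameEquiv_apply, rename_X, this]
  exact finSuccEquiv_X_succ

lemma lastEquiv_one : lastEquiv (X 1) = Polynomial.C (X 1) := by
  have : finRotate 3 1 = Fin.succ 1 := by decide
  simp only [lastEquiv, AlgEquiv.trans_apply, renameEquiv_apply, rename_X, this]
  exact finSuccEquiv_X_succ

lemma lastEquiv_aeval (x : MvPolynomial (Fin 3) ℂ) (y : MvPolynomial (Fin 2) ℂ)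
    (h : lastEquiv x = Polynomial.C y) (q : Polynomial ℂ) :
    lastEquiv (Polynomial.aeval x q) = Polynomial.C (Polynomial.aeval y q) := by
  rw [← Polynomial.aeval_algHom_apply lastEquiv, h]
  exact Polynomial.aeval_algebraMap_apply (A := MvPolynomial (Fin 2) ℂ) (Polynomial (MvPolynomial (Fin 2) ℂ)) y q

theorem trace_surface_irreducible (n m : ℤ) (hn : n ≠ 0) (hm : m ≠ 0)
    (α : ℂ) (hα : α ≠ 2) (hα' : α ≠ -2)
    (P : MvPolynomial (Fin 3) ℂ)
    (hP : P = C 2 +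
        (Polynomial.aeval (X 0 : MvPolynomial (Fin 3) ℂ) (phi n.natAbs)) ^ 2 *
        (Polynomial.aeval (X 1 : MvPolynomial (Fin 3) ℂ) (phi m.natAbs)) ^ 2 *
        (X 0 ^ 2 + X 1 ^ 2 + X 2 ^ 2 - X 0 * X 1 * X 2 - 4)) :
    IsIrreducible (PrimeSpectrum.zeroLocus ({P - C α} : Set (MvPolynomial (Fin 3) ℂ))) := by
  have hc : (2 - α) ≠ 0 := sub_ne_zero.2 hα.symm
  have hirr : Irreducible (P - C α) := by
    rw [← MulEquiv.irreducible_iff lastEquiv]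
    set a := Polynomial.aeval (X 0 : MvPolynomial (Fin 2) ℂ) (phi n.natAbs) with ha
    set b := Polynomial.aeval (X 1 : MvPolynomial (Fin 2) ℂ) (phi m.natAbs) with hb
    have hq := quad_irred (R := MvPolynomial (Fin 2) ℂ) (a * b) (X 0 * X 1)
      (X 0 ^ 2 + X 1 ^ 2 - 4) (C (2 - α))
      (mul_ne_zero (aeval_phi_ne 0 _) (aeval_phi_ne 1 _))
      ((isUnit_iff_ne_zero.2 hc).map C) (by
        intro h hh
        apply not_sq n.natAbs m.natAbs (2 - α) hc h
        rw [hh]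
        have e4 : (C 4 : MvPolynomial (Fin 2) ℂ) = 4 := rfl
        simp only [bigA, map_mul, map_pow, map_sub, Polynomial.aeval_X, Polynomial.aeval_C,
          MvPolynomial.algebraMap_eq, e4, ← ha, ← hb]
        ring)
    convert hq using 1
    have e4 : lastEquiv (4 : MvPolynomial (Fin 3) ℂ) = Polynomial.C 4 := by
      rw [map_ofNat]; rfl
    have eC : ∀ z : ℂ, lastEquiv (C z) = Polynomial.C (C z) := fun z =>
      lastEquiv.commutes z
    rw [hP]
    simp only [map_add, map_sub, map_mul, map_pow, lastEquiv_two, lastEquiv_one, lastEquiv_zero,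
      e4, eC, lastEquiv_aeval _ _ lastEquiv_zero, lastEquiv_aeval _ _ lastEquiv_one, ← ha, ← hb,
      map_neg]
    ring
  rw [← PrimeSpectrum.zeroLocus_span, PrimeSpectrum.isIrreducible_zeroLocus_iff]
  have hpr : (Ideal.span ({P - C α} : Set (MvPolynomial (Fin 3) ℂ))).IsPrime :=
    (Ideal.span_singleton_prime hirr.ne_zero).2 hirr.prime
  rw [hpr.radical]
  exact hpr
end

section
/- The trace map Tr : SL(2,ℂ) × SL(2,ℂ) → ℂ³ given by Tr(x,y) = (tr x, tr y, tr(xy)) is surjective: for every (s,t,u) ∈ ℂ³ there exist x, y ∈ SL(2,ℂ) with tr x = s, tr y = t, and tr(xy) = u. -/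
open Matrix

/-- the trace map `(x,y) ↦ (tr x, tr y, tr (xy))` from
`SL(2,ℂ) × SL(2,ℂ)` to `ℂ³` is surjective. -/
theorem trace_map_surjective (s t u : ℂ) :
    ∃ x y : SL2C, tr2 x = s ∧ tr2 y = t ∧ tr2 (x * y) = u := by
  obtain ⟨w, hw⟩ := IsAlgClosed.exists_pow_nat_eq (u ^ 2 - 4) (n := 2) (by norm_num)
  refine ⟨⟨!![s, -1; 1, 0], ?_⟩, ⟨!![0, (u + w) / 2; -((u - w) / 2), t], ?_⟩, ?_, ?_, ?_⟩
  · simp [Matrix.det_fin_two]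
  · rw [Matrix.det_fin_two_of]
    linear_combination (-1 / 4) * hw
  · simp [tr2, Matrix.trace_fin_two]
  · simp [tr2, Matrix.trace_fin_two]
  · change Matrix.trace (!![s, -1; 1, 0] * !![0, (u + w) / 2; -((u - w) / 2), t]) = u
    rw [Matrix.trace_fin_two]
    simp [Matrix.mul_apply, Fin.sum_univ_two]
    ring
end

section
/- Let (x, y) ∈ SL(2,ℂ) × SL(2,ℂ) be a pair of matrices such that the (1,2) entry of y is nonzero, and set s = tr x, t = tr y, u = tr(xy). Then there exists a lower-triangular matrix z ∈ SL(2,ℂ) such that z·y·z⁻¹ = y_t = [[t, 1], [−1, 0]] and z·x·z⁻¹ = [[a, b], [u + b − a·t, s − a]] for some a, b ∈ ℂ. -/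
open Matrix

/-- if the `(1,2)` entry of `y` is nonzero, there is a lower-triangular
`z ∈ SL(2,ℂ)` conjugating `y` to `y_t = [[t,1],[-1,0]]` and `x` to
`[[a,b],[u+b−at, s−a]]`, where `s = tr x`, `t = tr y`, `u = tr (xy)`. -/
theorem conjugate_to_normal_form (x y : SL2C)
    (hy : (y : Matrix (Fin 2) (Fin 2) ℂ) 0 1 ≠ 0) :
    ∃ z : SL2C, (z : Matrix (Fin 2) (Fin 2) ℂ) 0 1 = 0 ∧
      ((z * y * z⁻¹ : SL2C) : Matrix (Fin 2) (Fin 2) ℂ) = !![tr2 y, 1; -1, 0] ∧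
      ∃ a b : ℂ,
        ((z * x * z⁻¹ : SL2C) : Matrix (Fin 2) (Fin 2) ℂ) =
          !![a, b; tr2 (x * y) + b - a * tr2 y, tr2 x - a] := by
  obtain ⟨p, hp⟩ := IsAlgClosed.exists_pow_nat_eq (((y : Matrix (Fin 2) (Fin 2) ℂ) 0 1)⁻¹)
    (n := 2) (by norm_num)
  have hpB : p ^ 2 * (y : Matrix (Fin 2) (Fin 2) ℂ) 0 1 = 1 := by
    rw [hp]; exact inv_mul_cancel₀ hy
  have hdet := y.det_coe
  rw [Matrix.det_fin_two] at hdet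
  let z : SL2C := ⟨!![p, 0; -(y : Matrix (Fin 2) (Fin 2) ℂ) 1 1 * p,
    p * (y : Matrix (Fin 2) (Fin 2) ℂ) 0 1], by
      rw [Matrix.det_fin_two_of]; linear_combination hpB⟩
  have hz : (z : Matrix (Fin 2) (Fin 2) ℂ) = !![p, 0; -(y : Matrix (Fin 2) (Fin 2) ℂ) 1 1 * p,
    p * (y : Matrix (Fin 2) (Fin 2) ℂ) 0 1] := rfl
  have hY : ((z * y * z⁻¹ : SL2C) : Matrix (Fin 2) (Fin 2) ℂ) = !![tr2 y, 1; -1, 0] := by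
    rw [Matrix.SpecialLinearGroup.coe_mul, Matrix.SpecialLinearGroup.coe_mul,
      Matrix.SpecialLinearGroup.coe_inv, hz, Matrix.adjugate_fin_two_of, tr2,
      Matrix.trace_fin_two]
    clear hz
    clear z
    generalize (y : Matrix (Fin 2) (Fin 2) ℂ) = Y at *
    ext i j
    fin_cases i <;> fin_cases j <;>
      simp [Matrix.mul_apply, Matrix.vecMul, dotProduct, Fin.sum_univ_two]
    · linear_combination (Y 0 0 + Y 1 1) * hpB
    · linear_combination hpB
    · linear_combination (-Y 0 0 * Y 1 1 + Y 0 1 * Y 1 0) * hpB - hdet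
    · left; ring
  have htr : ∀ w : SL2C, tr2 (z * w * z⁻¹) = tr2 w := by
    intro w
    unfold tr2
    rw [Matrix.SpecialLinearGroup.coe_mul, Matrix.trace_mul_comm,
      ← Matrix.SpecialLinearGroup.coe_mul, inv_mul_cancel_left]
  refine ⟨z, by simp [hz], hY, (z * x * z⁻¹ : SL2C) 0 0, (z * x * z⁻¹ : SL2C) 0 1, ?_⟩
  have h1 := htr x
  have h2 := htr (x * y)
  have h3 : z * (x * y) * z⁻¹ = (z * x * z⁻¹) * (z * y * z⁻¹) := by group
  rw [h3] at h2
  rw [← h1, ← h2]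
  generalize z * x * z⁻¹ = X at *
  unfold tr2 at *
  rw [Matrix.SpecialLinearGroup.coe_mul, hY]
  ext i j
  fin_cases i <;> fin_cases j <;>
    simp [Matrix.trace_fin_two, Matrix.mul_apply, Fin.sum_univ_two]
  ring
end

section
/- Let w be an element of the commutator subgroup [F₂,F₂] of the free group F₂ on two generators, and let g ∈ SL(2,ℂ) with tr(g) ≠ 2 and tr(g) ≠ −2. Then for all x₀, y₀ ∈ SL(2,ℂ) with tr(w(x₀,y₀)) = tr(g), there exist x, y ∈ SL(2,ℂ) such that w(x,y) = g, tr x = tr x₀, tr y = tr y₀, and tr(xy) = tr(x₀y₀). (In other words, the trace map sends the solution variety S_{w,g} onto the trace surface H_{w,tr(g)}.) -/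
open Matrix

theorem exists_cyclic_vec (a b c d : ℂ) (hdet : a * d - b * c = 1)
    (h1 : a + d ≠ 2) (h2 : a + d ≠ -2) :
    ∃ p q : ℂ, p * (c * p + d * q) - (a * p + b * q) * q = 1 := by
  by_cases hc : c = 0
  · by_cases hb : b = 0
    · have had : d - a ≠ 0 := by
        intro hda
        have hd : d = a := sub_eq_zero.mp hda
        subst hd
        subst hc
        have : (d - 1) * (d + 1) = 0 := by linear_combination hdet
        rcases mul_eq_zero.mp this with h | h
        · exact h1 (by linear_combination 2 * h)
        · exact h2 (by linear_combination 2 * h)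
      refine ⟨1, (d - a)⁻¹, ?_⟩
      subst hc hb
      have := mul_inv_cancel₀ had
      linear_combination this
    · obtain ⟨q, hq⟩ := IsAlgClosed.exists_pow_nat_eq (-b⁻¹) (n := 2) (by norm_num)
      refine ⟨0, q, ?_⟩
      have := mul_inv_cancel₀ hb
      linear_combination (-b) * hq + this
  · obtain ⟨p, hp⟩ := IsAlgClosed.exists_pow_nat_eq (c⁻¹) (n := 2) (by norm_num)
    refine ⟨p, 0, ?_⟩
    have := mul_inv_cancel₀ hc
    linear_combination c * hp + this

/-- The companion matrix of `X² - tX + 1`. -/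
def comp2 (t : ℂ) : SL2C := ⟨!![0, -1; 1, t], by simp [Matrix.det_fin_two]⟩

theorem exists_conj_comp2 (A : SL2C) (h1 : tr2 A ≠ 2) (h2 : tr2 A ≠ -2) :
    ∃ P : SL2C, A * P = P * comp2 (tr2 A) := by
  have hdet : A.1 0 0 * A.1 1 1 - A.1 0 1 * A.1 1 0 = 1 := by
    rw [← Matrix.det_fin_two]; exact A.2
  have htr : tr2 A = A.1 0 0 + A.1 1 1 := Matrix.trace_fin_two _
  rw [htr] at h1 h2
  obtain ⟨p, q, hpq⟩ := exists_cyclic_vec _ _ _ _ hdet h1 h2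
  refine ⟨⟨!![p, A.1 0 0 * p + A.1 0 1 * q; q, A.1 1 0 * p + A.1 1 1 * q], ?_⟩, ?_⟩
  · rw [Matrix.det_fin_two]; simpa using hpq
  · apply Subtype.ext
    rw [htr]
    change A.1 * !![p, A.1 0 0 * p + A.1 0 1 * q; q, A.1 1 0 * p + A.1 1 1 * q]
      = !![p, A.1 0 0 * p + A.1 0 1 * q; q, A.1 1 0 * p + A.1 1 1 * q]
        * !![0, -1; 1, A.1 0 0 + A.1 1 1]
    ext i j
    fin_cases i <;> fin_cases j <;>
      simp [Matrix.mul_apply, Fin.sum_univ_two]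
    · linear_combination (-p) * hdet
    · linear_combination (-q) * hdet

theorem tr2_conj (Q x : SL2C) : tr2 (Q * x * Q⁻¹) = tr2 x := by
  unfold tr2
  rw [Matrix.SpecialLinearGroup.coe_mul, Matrix.trace_mul_comm,
    ← Matrix.SpecialLinearGroup.coe_mul]
  rw [inv_mul_cancel_left]

theorem wordEval_conj (w : FreeGroup (Fin 2)) (Q x y : SL2C) :
    wordEval w (Q * x * Q⁻¹) (Q * y * Q⁻¹) = Q * wordEval w x y * Q⁻¹ := by
  have : FreeGroup.lift ![Q * x * Q⁻¹, Q * y * Q⁻¹]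
      = (MulAut.conj Q).toMonoidHom.comp (FreeGroup.lift ![x, y]) := by
    ext i : 1
    fin_cases i <;> simp
  unfold wordEval
  rw [this]
  simp

/-- for `w ∈ [F₂,F₂]` and `g ∈ SL(2,ℂ)` with `tr g ≠ ±2`, the trace map
sends the solution variety `S_{w,g}` onto the whole trace surface `H_{w, tr g}`. -/
theorem trace_map_onto_trace_surface (w : FreeGroup (Fin 2))
    (hw : w ∈ commutator (FreeGroup (Fin 2)))
    (g : SL2C) (hg : tr2 g ≠ 2) (hg' : tr2 g ≠ -2)
    (x₀ y₀ : SL2C) (h : tr2 (wordEval w x₀ y₀) = tr2 g) :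
    ∃ x y : SL2C, wordEval w x y = g ∧
      tr2 x = tr2 x₀ ∧ tr2 y = tr2 y₀ ∧ tr2 (x * y) = tr2 (x₀ * y₀) := by
  obtain ⟨P, hP⟩ := exists_conj_comp2 g hg hg'
  obtain ⟨R, hR⟩ := exists_conj_comp2 (wordEval w x₀ y₀) (h ▸ hg) (h ▸ hg')
  rw [h] at hR
  refine ⟨(P * R⁻¹) * x₀ * (P * R⁻¹)⁻¹, (P * R⁻¹) * y₀ * (P * R⁻¹)⁻¹, ?_,
    tr2_conj _ _, tr2_conj _ _, ?_⟩
  · rw [wordEval_conj, eq_mul_inv_of_mul_eq hR]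
    refine Eq.trans ?_ (eq_mul_inv_of_mul_eq hP).symm
    group
  · rw [← tr2_conj (P * R⁻¹) (x₀ * y₀)]
    congr 1
    group
end

section
/- Let w be an element of the commutator subgroup [F₂,F₂] of the free group F₂ on two generators, let α ∈ ℂ with α ≠ 2 and α ≠ −2, and let g = y_α = [[α, 1], [−1, 0]] ∈ SL(2,ℂ). Suppose (x, y) and (x₁, y₁) are pairs in SL(2,ℂ)² with w(x,y) = g and w(x₁,y₁) = g, and suppose there is a lower-triangular matrix z ∈ SL(2,ℂ) with z·x·z⁻¹ = x₁ and z·y·z⁻¹ = y₁. Then x = x₁ and y = y₁. -/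
open Matrix

/-- The matrix `y_α = [[α,1],[-1,0]]` as an element of `SL(2,ℂ)`. -/
noncomputable def ySL (t : ℂ) : SL2C :=
  ⟨!![t, 1; -1, 0], by simp [Matrix.det_fin_two_of]⟩

/-- for `w ∈ [F₂,F₂]`, `α ≠ ±2` and `g = y_α`, two solutions of
`w(x,y) = g` that are conjugate by a lower-triangular matrix must be equal. -/
theorem lower_triangular_conjugate_solutions_eq (w : FreeGroup (Fin 2))
    (hw : w ∈ commutator (FreeGroup (Fin 2)))
    (α : ℂ) (hα : α ≠ 2) (hα' : α ≠ -2)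
    (x y x₁ y₁ : SL2C)
    (hxy : wordEval w x y = ySL α) (hxy₁ : wordEval w x₁ y₁ = ySL α)
    (z : SL2C) (hz : (z : Matrix (Fin 2) (Fin 2) ℂ) 0 1 = 0)
    (hzx : z * x * z⁻¹ = x₁) (hzy : z * y * z⁻¹ = y₁) :
    x = x₁ ∧ y = y₁ := by
  have hconj : wordEval w x₁ y₁ = z * wordEval w x y * z⁻¹ := by
    have h : FreeGroup.lift ![x₁, y₁] =
        (MulAut.conj z).toMonoidHom.comp (FreeGroup.lift ![x, y]) := by
      ext i : 1
      fin_cases i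
      · simp [← hzx]
      · simp [← hzy]
    have := DFunLike.congr_fun h w
    simpa [wordEval] using this
  rw [hxy, hxy₁] at hconj
  have hcomm : ySL α * z = z * ySL α := by
    rw [eq_mul_inv_iff_mul_eq] at hconj
    exact hconj
  have hm : !![α, 1; -1, 0] * (z : Matrix (Fin 2) (Fin 2) ℂ) =
      (z : Matrix (Fin 2) (Fin 2) ℂ) * !![α, 1; -1, 0] :=
    congrArg (fun m : SL2C => (m : Matrix (Fin 2) (Fin 2) ℂ)) hcomm
  have h00 := congrFun (congrFun hm 0) 0
  have h01 := congrFun (congrFun hm 0) 1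
  simp [Matrix.mul_apply, Fin.sum_univ_two, hz] at h00 h01
  have hc : (z : Matrix (Fin 2) (Fin 2) ℂ) 1 0 = 0 := by linear_combination h00
  have key : ∀ u : SL2C, z * u * z⁻¹ = u := by
    intro u
    rw [mul_inv_eq_iff_eq_mul]
    ext i j
    fin_cases i <;> fin_cases j <;>
      simp [Matrix.mul_apply, Fin.sum_univ_two, hz, hc, h01, mul_comm]
  exact ⟨by rw [← hzx, key], by rw [← hzy, key]⟩
end

section
/- Let w be an element of the commutator subgroup [F₂,F₂] of the free group F₂ on two generators, and let g ∈ SL(2,ℂ) with tr(g) ≠ 2 and tr(g) ≠ −2. Suppose (x, y) and (x', y') are pairs in SL(2,ℂ)² with w(x,y) = g and w(x',y') = g, and suppose tr x = tr x', tr y = tr y', and tr(xy) = tr(x'y'). Then there exists z ∈ SL(2,ℂ) commuting with g such that x' = z·x·z⁻¹ and y' = z·y·z⁻¹. (Each fiber of the trace map restricted to the solution variety S_{w,g} is a single orbit of the centralizer of g acting by simultaneous conjugation.) -/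
open Matrix

open scoped commutatorElement

lemma word_eig (x y : SL2C) (v : Fin 2 → ℂ) (hx : ∃ c : ℂ, x.1 *ᵥ v = c • v)
    (hy : ∃ c : ℂ, y.1 *ᵥ v = c • v) (w : FreeGroup (Fin 2)) :
    ∃ c : ℂ, (FreeGroup.lift ![x, y] w).1 *ᵥ v = c • v := by
  by_cases hv : v = 0
  · exact ⟨0, by simp [hv]⟩
  have hof : ∀ i : Fin 2, ∃ c : ℂ, (FreeGroup.lift ![x, y] (FreeGroup.of i)).1 *ᵥ v = c • v := by
    intro i
    fin_cases i
    · simpa using hx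
    · simpa using hy
  have hinv : ∀ A : SL2C, (∃ c : ℂ, A.1 *ᵥ v = c • v) → ∃ c : ℂ, (A⁻¹).1 *ᵥ v = c • v := by
    rintro A ⟨c, hc⟩
    have h1 : (A⁻¹).1 *ᵥ (A.1 *ᵥ v) = v := by
      rw [Matrix.mulVec_mulVec, ← Matrix.SpecialLinearGroup.coe_mul]; simp
    rw [hc, Matrix.mulVec_smul] at h1
    have hc0 : c ≠ 0 := by
      rintro rfl
      exact hv (by simpa using h1.symm)
    refine ⟨c⁻¹, ?_⟩
    conv_rhs => rw [← h1]
    rw [smul_smul, inv_mul_cancel₀ hc0, one_smul]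
  induction w using FreeGroup.induction_on with
  | C1 => exact ⟨1, by simp⟩
  | of i => exact hof i
  | inv_of i h =>
    rw [map_inv]
    exact hinv _ h
  | mul a b ha hb =>
    obtain ⟨c, hc⟩ := ha
    obtain ⟨d, hd⟩ := hb
    refine ⟨d * c, ?_⟩
    rw [map_mul, Matrix.SpecialLinearGroup.coe_mul, ← Matrix.mulVec_mulVec, hd,
      Matrix.mulVec_smul, hc, smul_smul]

lemma comm_fix (x y : SL2C) (v : Fin 2 → ℂ) (hx : ∃ c : ℂ, x.1 *ᵥ v = c • v)
    (hy : ∃ c : ℂ, y.1 *ᵥ v = c • v) (w : FreeGroup (Fin 2))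
    (hw : w ∈ commutator (FreeGroup (Fin 2))) :
    (FreeGroup.lift ![x, y] w).1 *ᵥ v = v := by
  let K : Subgroup SL2C :=
    { carrier := {h | h.1 *ᵥ v = v}
      one_mem' := Matrix.one_mulVec v
      mul_mem' := by
        intro a b ha hb
        simp only [Set.mem_ofPred_eq] at *
        rw [Matrix.SpecialLinearGroup.coe_mul, ← Matrix.mulVec_mulVec, hb, ha]
      inv_mem' := by
        intro a ha
        simp only [Set.mem_ofPred_eq] at *
        conv_lhs => rw [← ha]
        rw [Matrix.mulVec_mulVec, ← Matrix.SpecialLinearGroup.coe_mul]; simp }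
  have hle : commutator (FreeGroup (Fin 2)) ≤ K.comap (FreeGroup.lift ![x, y]) := by
    rw [commutator_def, Subgroup.commutator_le]
    intro a _ b _
    change (FreeGroup.lift ![x, y] ⁅a, b⁆).1 *ᵥ v = v
    obtain ⟨c, hc⟩ := word_eig x y v hx hy a⁻¹
    obtain ⟨d, hd⟩ := word_eig x y v hx hy b⁻¹
    have h1 : (FreeGroup.lift ![x, y] (a⁻¹ * b⁻¹)).1 *ᵥ v
        = (FreeGroup.lift ![x, y] (b⁻¹ * a⁻¹)).1 *ᵥ v := by
      rw [map_mul, map_mul, Matrix.SpecialLinearGroup.coe_mul, Matrix.SpecialLinearGroup.coe_mul,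
        ← Matrix.mulVec_mulVec, ← Matrix.mulVec_mulVec, hc, hd, Matrix.mulVec_smul,
        Matrix.mulVec_smul, hc, hd, smul_comm]
    have h2 : ⁅a, b⁆ = (a * b) * (a⁻¹ * b⁻¹) := by rw [commutatorElement_def]; group
    rw [h2, map_mul, Matrix.SpecialLinearGroup.coe_mul, ← Matrix.mulVec_mulVec, h1,
      Matrix.mulVec_mulVec, ← Matrix.SpecialLinearGroup.coe_mul, ← map_mul]
    have h3 : a * b * (b⁻¹ * a⁻¹) = 1 := by group
    rw [h3]; simp
  exact hle hw

lemma tr_two (h : SL2C) (v : Fin 2 → ℂ) (hv : v ≠ 0) (hf : h.1 *ᵥ v = v) : tr2 h = 2 := by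
  have h0 : (h.1 - 1).det = 0 := by
    rw [← Matrix.exists_mulVec_eq_zero_iff]
    exact ⟨v, hv, by rw [Matrix.sub_mulVec, hf]; simp⟩
  have hd := h.2
  rw [Matrix.det_fin_two] at hd h0
  simp at h0
  unfold tr2
  rw [Matrix.trace_fin_two]
  linear_combination hd - h0

lemma normal_form (x y : SL2C) (l : ℂ) (hl : l ^ 2 - tr2 x * l + 1 = 0)
    (hirr : ∀ v : Fin 2 → ℂ, v ≠ 0 → (∃ c : ℂ, x.1 *ᵥ v = c • v) →
      (∃ c : ℂ, y.1 *ᵥ v = c • v) → False) :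
    ∃ P : Matrix (Fin 2) (Fin 2) ℂ, P.det ≠ 0 ∧
      x.1 * P = P * !![l, tr2 (x * y) - tr2 y * (tr2 x - l); 0, tr2 x - l] ∧
      y.1 * P = P * !![0, -1; 1, tr2 y] := by
  have hdx := x.2
  have hdy := y.2
  rw [Matrix.det_fin_two] at hdx hdy
  have hsx : tr2 x = x.1 0 0 + x.1 1 1 := by unfold tr2; rw [Matrix.trace_fin_two]
  have hsy : tr2 y = y.1 0 0 + y.1 1 1 := by unfold tr2; rw [Matrix.trace_fin_two]
  have hsxy : tr2 (x * y) = x.1 0 0 * y.1 0 0 + x.1 0 1 * y.1 1 0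
      + (x.1 1 0 * y.1 0 1 + x.1 1 1 * y.1 1 1) := by
    unfold tr2
    rw [Matrix.trace_fin_two, Matrix.SpecialLinearGroup.coe_mul]
    simp [Matrix.mul_apply, Fin.sum_univ_two]
  have h0 : (x.1 - l • (1 : Matrix (Fin 2) (Fin 2) ℂ)).det = 0 := by
    rw [Matrix.det_fin_two]
    simp
    rw [hsx] at hl
    linear_combination hdx + hl
  obtain ⟨v, hv, hxv⟩ := Matrix.exists_mulVec_eq_zero_iff.mpr h0
  have hxv : x.1 *ᵥ v = l • v := by
    rw [Matrix.sub_mulVec, sub_eq_zero] at hxv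
    rw [hxv, Matrix.smul_mulVec, Matrix.one_mulVec]
  have e0 : x.1 0 0 * v 0 + x.1 0 1 * v 1 = l * v 0 := by
    simpa [Matrix.mulVec, dotProduct, Fin.sum_univ_two] using congrFun hxv 0
  have e1 : x.1 1 0 * v 0 + x.1 1 1 * v 1 = l * v 1 := by
    simpa [Matrix.mulVec, dotProduct, Fin.sum_univ_two] using congrFun hxv 1
  refine ⟨!![v 0, y.1 0 0 * v 0 + y.1 0 1 * v 1; v 1, y.1 1 0 * v 0 + y.1 1 1 * v 1],
    ?_, ?_, ?_⟩
  · intro hP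
    rw [Matrix.det_fin_two] at hP
    simp at hP
    apply hirr v hv ⟨l, hxv⟩
    by_cases hv0 : v 0 = 0
    · have hv1 : v 1 ≠ 0 := by
        intro h
        apply hv
        ext i
        fin_cases i
        · exact hv0
        · exact h
      refine ⟨(y.1 1 0 * v 0 + y.1 1 1 * v 1) / v 1, ?_⟩
      ext i
      fin_cases i
      · simp [Matrix.mulVec, dotProduct, Fin.sum_univ_two]
        field_simp
        linear_combination -hP
      · simp [Matrix.mulVec, dotProduct, Fin.sum_univ_two]
        field_simp
    · refine ⟨(y.1 0 0 * v 0 + y.1 0 1 * v 1) / v 0, ?_⟩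
      ext i
      fin_cases i
      · simp [Matrix.mulVec, dotProduct, Fin.sum_univ_two]
        field_simp
      · simp [Matrix.mulVec, dotProduct, Fin.sum_univ_two]
        field_simp
        linear_combination hP
  · rw [hsx, hsy, hsxy]
    generalize x.1 = X at *
    generalize y.1 = Y at *
    ext i j
    fin_cases i <;> fin_cases j <;> simp [Matrix.mul_apply, Fin.sum_univ_two]
    · linear_combination e0
    · linear_combination (Y 1 1) * e0 - Y 0 1 * e1
    · linear_combination e1
    · linear_combination (-Y 1 0) * e0 + Y 0 0 * e1
  · rw [hsy]
    generalize y.1 = Y at *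
    ext i j
    fin_cases i <;> fin_cases j <;> simp [Matrix.mul_apply, Fin.sum_univ_two]
    · linear_combination (-v 0) * hdy
    · linear_combination (-v 1) * hdy

/-- for `w ∈ [F₂,F₂]` and `tr g ≠ ±2`, two solutions of `w(x,y) = g` with
the same traces `(tr x, tr y, tr xy)` are simultaneously conjugate by an element of the
centralizer of `g`. -/
theorem fiber_is_centralizer_orbit (w : FreeGroup (Fin 2))
    (hw : w ∈ commutator (FreeGroup (Fin 2)))
    (g : SL2C) (hg : tr2 g ≠ 2) (hg' : tr2 g ≠ -2)
    (x y x' y' : SL2C)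
    (hxy : wordEval w x y = g) (hxy' : wordEval w x' y' = g)
    (hs : tr2 x = tr2 x') (ht : tr2 y = tr2 y') (hu : tr2 (x * y) = tr2 (x' * y')) :
    ∃ z : SL2C, z * g = g * z ∧ x' = z * x * z⁻¹ ∧ y' = z * y * z⁻¹ := by
  have key : ∀ a b : SL2C, wordEval w a b = g → ∀ v : Fin 2 → ℂ, v ≠ 0 →
      (∃ c : ℂ, a.1 *ᵥ v = c • v) → (∃ c : ℂ, b.1 *ᵥ v = c • v) → False := by
    intro a b hab v hv h1 h2
    apply hg
    rw [← hab]
    exact tr_two _ v hv (comm_fix a b v h1 h2 w hw)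
  obtain ⟨r, hr⟩ := IsAlgClosed.exists_pow_nat_eq (tr2 x ^ 2 - 4) (n := 2) (by norm_num)
  obtain ⟨l, hl⟩ : ∃ l : ℂ, l ^ 2 - tr2 x * l + 1 = 0 :=
    ⟨(tr2 x + r) / 2, by linear_combination hr / 4⟩
  obtain ⟨P, hP, hPx, hPy⟩ := normal_form x y l hl (key x y hxy)
  obtain ⟨Q, hQ, hQx, hQy⟩ := normal_form x' y' l (hs ▸ hl) (key x' y' hxy')
  rw [← hs, ← ht, ← hu] at hQx
  rw [← ht] at hQy
  have hPu : IsUnit P.det := isUnit_iff_ne_zero.mpr hP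
  obtain ⟨c, hc⟩ := IsAlgClosed.exists_pow_nat_eq ((Q * P⁻¹).det)⁻¹ (n := 2) (by norm_num)
  have hd : (Q * P⁻¹).det ≠ 0 := by
    rw [Matrix.det_mul, Matrix.det_nonsing_inv]
    simp [hP, hQ]
  have conj : ∀ A A' N : Matrix (Fin 2) (Fin 2) ℂ, A * P = P * N → A' * Q = Q * N →
      A' * (c • (Q * P⁻¹)) = (c • (Q * P⁻¹)) * A := by
    intro A A' N h1 h2
    have h3 : P⁻¹ * A = N * P⁻¹ := by
      calc P⁻¹ * A = P⁻¹ * (A * P) * P⁻¹ := by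
            rw [Matrix.mul_assoc, Matrix.mul_assoc, Matrix.mul_nonsing_inv _ hPu, Matrix.mul_one]
        _ = N * P⁻¹ := by
            rw [h1, ← Matrix.mul_assoc P⁻¹, Matrix.nonsing_inv_mul _ hPu, Matrix.one_mul]
    rw [Matrix.mul_smul, Matrix.smul_mul, ← Matrix.mul_assoc, h2, Matrix.mul_assoc Q P⁻¹, h3,
      Matrix.mul_assoc]
  let z : SL2C := ⟨c • (Q * P⁻¹), by
    rw [Matrix.det_smul, Fintype.card_fin, hc, inv_mul_cancel₀ hd]⟩
  have hx : x' = z * x * z⁻¹ := by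
    rw [eq_mul_inv_iff_mul_eq]
    exact Subtype.ext (conj _ _ _ hPx hQx)
  have hy : y' = z * y * z⁻¹ := by
    rw [eq_mul_inv_iff_mul_eq]
    exact Subtype.ext (conj _ _ _ hPy hQy)
  refine ⟨z, ?_, hx, hy⟩
  have hhom : FreeGroup.lift ![x', y'] = (MulAut.conj z).toMonoidHom.comp
      (FreeGroup.lift ![x, y]) := by
    ext1 i
    fin_cases i
    · simpa using hx
    · simpa using hy
  have h4 : g = z * g * z⁻¹ := by
    have := DFunLike.congr_fun hhom w
    unfold wordEval at hxy hxy'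
    rw [hxy', MonoidHom.comp_apply, hxy] at this
    simpa using this
  exact (eq_mul_inv_iff_mul_eq.mp h4).symm
end

section
/- Let n, m be nonzero integers and let g ∈ SL(2,ℂ) with tr(g) ≠ 2 and tr(g) ≠ −2. Let S = {(x,y) ∈ SL(2,ℂ)² : xⁿ·yᵐ·x⁻ⁿ·y⁻ᵐ = g} and let O(S) be its coordinate ring. Then every locally nilpotent ℂ-derivation of O(S) is zero; that is, the Makar-Limanov invariant ML(S) equals O(S), so S admits no nontrivial actions of the additive group ℂ⁺. -/
set_option synthInstance.maxHeartbeats 1000000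
set_option maxHeartbeats 1000000

open Matrix

/-- The solution set `S = {(x,y) ∈ SL(2,ℂ)² : xⁿ yᵐ x⁻ⁿ y⁻ᵐ = g}`. -/
def solSet (n m : ℤ) (g : SL2C) : Set (SL2C × SL2C) :=
  {p | p.1 ^ n * p.2 ^ m * p.1 ^ (-n) * p.2 ^ (-m) = g}

/-- The coordinate ring `O(S)`: the `ℂ`-subalgebra of functions `S → ℂ` generated by
the eight matrix-entry functions, i.e. the restrictions to `S` of polynomial functions
in the eight matrix entries. -/
noncomputable def coordRing (n m : ℤ) (g : SL2C) : Subalgebra ℂ (solSet n m g → ℂ) :=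
  Algebra.adjoin ℂ
    ((Set.range fun q : Fin 2 × Fin 2 => fun p : solSet n m g =>
        ((p : SL2C × SL2C).1 : Matrix (Fin 2) (Fin 2) ℂ) q.1 q.2) ∪
     (Set.range fun q : Fin 2 × Fin 2 => fun p : solSet n m g =>
        ((p : SL2C × SL2C).2 : Matrix (Fin 2) (Fin 2) ℂ) q.1 q.2))


open Polynomial

/-- trace of an element of SL2 -/
def trS {R : Type} [CommRing R] (a : SpecialLinearGroup (Fin 2) R) : R := a.1 0 0 + a.1 1 1

theorem iterate_leibniz {A : Type} [CommRing A] [Algebra ℂ A] (D : Derivation ℂ A A) (a b : A)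
    (k : ℕ) : (⇑D)^[k] (a * b) =
      ∑ ij ∈ Finset.HasAntidiagonal.antidiagonal k, (k.choose ij.1 : A) * ((⇑D)^[ij.1] a * (⇑D)^[ij.2] b) := by
  induction k with
  | zero => simp
  | succ k ih =>
    rw [Function.iterate_succ_apply', ih, map_sum, Finset.sum_antidiagonal_choose_succ_mul
      (fun i j => (⇑D)^[i] a * (⇑D)^[j] b), ← Finset.sum_add_distrib]
    refine Finset.sum_congr rfl ?_
    rintro ⟨i, j⟩ hij
    have hk : i + j = k := by simpa using hij
    have : k.choose j = k.choose i := by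
      rw [← Nat.choose_symm_of_eq_add (n := k) (a := i) (b := j) hk.symm]
    simp only [Derivation.leibniz, Derivation.map_natCast, smul_eq_mul,
      Function.iterate_succ_apply']
    rw [this]; ring

theorem exists_phi_aux {A : Type} [CommRing A] [Algebra ℂ A] (D : Derivation ℂ A A)
    (hD : ∀ a : A, ∃ k : ℕ, (⇑D)^[k] a = 0) {K : Type} [Field K] [CharZero K] (ι : A →+* K) :
    ∃ φ : A →+* K[X], (∀ a k, (φ a).coeff k = ι ((⇑D)^[k] a) / (k.factorial : K)) ∧
      (∀ c, φ (algebraMap ℂ A c) = C (ι (algebraMap ℂ A c))) := by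
  classical
  have hz : ∀ a k, Nat.find (hD a) ≤ k → (⇑D)^[k] a = 0 := by
    intro a k hk
    obtain ⟨l, rfl⟩ := Nat.exists_eq_add_of_le' hk
    rw [Function.iterate_add_apply, Nat.find_spec (hD a)]
    exact Function.iterate_fixed (map_zero D) l
  let f : A → K[X] := fun a =>
    ∑ k ∈ Finset.range (Nat.find (hD a)), monomial k (ι ((⇑D)^[k] a) / (k.factorial : K))
  have hf : ∀ a k, (f a).coeff k = ι ((⇑D)^[k] a) / (k.factorial : K) := by
    intro a k
    simp only [f, finsetSum_coeff, coeff_monomial, Finset.sum_ite_eq', Finset.mem_range]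
    split_ifs with h
    · rfl
    · rw [hz a k (not_lt.1 h)]; simp
  have hconst : ∀ c, f (algebraMap ℂ A c) = C (ι (algebraMap ℂ A c)) := by
    intro c
    ext k
    rw [hf, coeff_C]
    rcases k with _ | k
    · simp
    · rw [Function.iterate_succ_apply, Derivation.map_algebraMap,
        Function.iterate_fixed (map_zero D) k]
      simp
  let φ : A →+* K[X] :=
    { toFun := f
      map_one' := by
        have := hconst 1
        simpa using this
      map_zero' := by
        have := hconst 0
        simpa using this
      map_add' := by
        intro a b
        ext k
        rw [coeff_add, hf, hf, hf, iterate_map_add, map_add, add_div]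
      map_mul' := by
        intro a b
        ext k
        rw [coeff_mul, hf, iterate_leibniz, map_sum, Finset.sum_div]
        refine Finset.sum_congr rfl ?_
        rintro ⟨i, l⟩ hij
        have hk : i + l = k := by simpa using hij
        subst hk
        simp only [hf, map_mul, map_natCast]
        have h1 : ((i + l).factorial : K) ≠ 0 := by exact_mod_cast Nat.factorial_ne_zero _
        have h2 : (i.factorial : K) ≠ 0 := by exact_mod_cast Nat.factorial_ne_zero _
        have h3 : (l.factorial : K) ≠ 0 := by exact_mod_cast Nat.factorial_ne_zero _
        have h4 : ((i + l).choose i : K) * i.factorial * l.factorial = (i + l).factorial := by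
          rw [Nat.choose_symm_add]
          exact_mod_cast Nat.add_choose_mul_factorial_mul_factorial i l
        rw [div_mul_div_comm, div_eq_div_iff h1 (mul_ne_zero h2 h3), ← h4]; ring }
  exact ⟨φ, hf, hconst⟩

theorem exists_phi {A : Type} [CommRing A] [Algebra ℂ A] (D : Derivation ℂ A A)
    (hD : ∀ a : A, ∃ k : ℕ, (⇑D)^[k] a = 0) (p : Ideal A) (hp : p.IsPrime) :
    ∃ (K : Type) (_ : Field K) (_ : IsAlgClosed K) (_ : CharZero K) (φ : A →+* K[X])
      (j : ℂ →+* K), (∀ a, φ a = 0 → a ∈ p) ∧ (∀ a, φ a ∈ (C : K →+* K[X]).range → D a ∈ p) ∧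
      (∀ c, φ (algebraMap ℂ A c) = C (j c)) := by
  classical
  let F := FractionRing (A ⧸ p)
  let K := AlgebraicClosure F
  let ι : A →+* K := (algebraMap F K).comp ((algebraMap (A ⧸ p) F).comp (Ideal.Quotient.mk p))
  have hι : ∀ a, ι a = 0 → a ∈ p := by
    intro a ha
    have h1 : algebraMap F K (algebraMap (A ⧸ p) F (Ideal.Quotient.mk p a)) = 0 := ha
    rw [map_eq_zero_iff _ (algebraMap F K).injective,
      map_eq_zero_iff _ (IsFractionRing.injective (A ⧸ p) F)] at h1
    exact Ideal.Quotient.eq_zero_iff_mem.1 h1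
  let j : ℂ →+* K := ι.comp (algebraMap ℂ A)
  have : CharZero K := charZero_of_injective_ringHom j.injective
  obtain ⟨φ, hf, hconst⟩ := exists_phi_aux D hD ι
  refine ⟨K, inferInstance, inferInstance, inferInstance, φ, j, ?_, ?_, hconst⟩
  · intro a ha
    apply hι
    have := hf a 0
    rw [show φ a = 0 from ha] at this
    simpa using this.symm
  · rintro a ⟨c, hc⟩
    apply hι
    have := hf a 1
    rw [show φ a = C c from hc.symm, coeff_C] at this
    simpa using this.symm

section Const
variable {K : Type} [Field K]

theorem const_mul_cancel {u w : K[X]} (hu : u ≠ 0) (h : u * w ∈ (C : K →+* K[X]).range) :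
    w ∈ (C : K →+* K[X]).range := by
  have h' : (u * w).natDegree = 0 := natDegree_eq_zero.2 h
  refine natDegree_eq_zero.1 ?_
  by_cases hw : w = 0
  · simp [hw]
  · rw [natDegree_mul hu hw] at h'
    omega

theorem const_C_mul_cancel {c : K} {w : K[X]} (hc : c ≠ 0)
    (h : C c * w ∈ (C : K →+* K[X]).range) : w ∈ (C : K →+* K[X]).range :=
  const_mul_cancel (by simpa using hc) h

/-- The Vieta descent inequality. -/
theorem vieta_lt {x y z : K[X]} {κ : K} (hE : x ^ 2 + y ^ 2 + z ^ 2 - x * y * z = C κ)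
    (hx : x.natDegree ≠ 0) (hy : y.natDegree ≠ 0) (hz : z.natDegree ≠ 0)
    (hxy : y.natDegree ≤ x.natDegree) (hxz : z.natDegree ≤ x.natDegree) :
    (y * z - x).natDegree < x.natDegree := by
  by_contra hlt
  push Not at hlt
  have hx0 : x ≠ 0 := by rintro rfl; simp at hx
  have hy0 : y ≠ 0 := by rintro rfl; simp at hy
  have hz0 : z ≠ 0 := by rintro rfl; simp at hz
  have hxv0 : y * z - x ≠ 0 := by intro h; rw [h] at hlt; simp at hlt; exact hx hlt
  have h1 : x * (y * z - x) = y ^ 2 + z ^ 2 - C κ := by linear_combination -hE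
  have h2 := congrArg natDegree h1
  rw [natDegree_mul hx0 hxv0] at h2
  have h3 : (y ^ 2 + z ^ 2 - C κ).natDegree ≤ max (2 * y.natDegree) (2 * z.natDegree) := by
    refine (natDegree_sub_le _ _).trans ?_
    rw [natDegree_C]
    refine max_le ((natDegree_add_le _ _).trans ?_) (Nat.zero_le _)
    rw [natDegree_pow, natDegree_pow]
  have h4 : (y * z).natDegree ≤ max (y * z - x).natDegree x.natDegree := by
    have := natDegree_add_le (y * z - x) x
    simpa using this
  rw [natDegree_mul hy0 hz0] at h4
  rcases le_total (y * z - x).natDegree x.natDegree with h5 | h5 <;>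
  rcases le_total (2 * y.natDegree) (2 * z.natDegree) with h6 | h6 <;>
  simp only [max_eq_left, max_eq_right, h5, h6] at h3 h4 <;> omega

/-- base case -/
theorem conic_const [IsAlgClosed K] {x z : K[X]} {η κ : K}
    (hE : x ^ 2 + (C η) ^ 2 + z ^ 2 - x * C η * z = C κ) (h1 : η ^ 2 ≠ κ) (h2 : η ^ 2 ≠ 4) :
    x ∈ (C : K →+* K[X]).range ∧ z ∈ (C : K →+* K[X]).range := by
  obtain ⟨a, ha⟩ : ∃ a : K, a ^ 2 - η * a + 1 = 0 := by
    obtain ⟨a, ha⟩ := IsAlgClosed.exists_root (X ^ 2 - C η * X + 1 : K[X]) (by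
      have : (X ^ 2 - C η * X + 1 : K[X]).degree = 2 := by compute_degree!
      rw [this]; decide)
    exact ⟨a, by simpa using ha⟩
  have hprod : (x - C a * z) * (x - C (η - a) * z) = C (κ - η ^ 2) := by
    have ha' : (C (a ^ 2 - η * a + 1) : K[X]) = 0 := by rw [ha, C_0]
    simp only [C_add, C_sub, C_mul, C_pow, C_1] at ha' ⊢
    linear_combination hE - z ^ 2 * ha'
  have hne : (C (κ - η ^ 2) : K[X]) ≠ 0 := by
    rw [Ne, C_eq_zero, sub_eq_zero]; exact fun h => h1 h.symm
  have e1 : x - C a * z ≠ 0 := by intro h; rw [h, zero_mul] at hprod; exact hne hprod.symm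
  have e2 : x - C (η - a) * z ≠ 0 := by intro h; rw [h, mul_zero] at hprod; exact hne hprod.symm
  have c2 : x - C (η - a) * z ∈ (C : K →+* K[X]).range :=
    const_mul_cancel e1 (hprod ▸ ⟨_, rfl⟩)
  have c1 : x - C a * z ∈ (C : K →+* K[X]).range :=
    const_mul_cancel e2 (by rw [mul_comm, hprod]; exact ⟨_, rfl⟩)
  have hd : η - 2 * a ≠ 0 := by
    intro h
    apply h2
    linear_combination (η - 2 * a) * h - 4 * ha
  have c3 : z ∈ (C : K →+* K[X]).range := by
    refine const_C_mul_cancel hd ?_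
    have := sub_mem c1 c2
    convert this using 1
    simp only [C_sub, C_mul, map_ofNat]
    ring
  refine ⟨?_, c3⟩
  have := add_mem c1 (mul_mem (⟨a, rfl⟩ : C a ∈ (C : K →+* K[X]).range) c3)
  simpa using this

end Const

section SL2

theorem sl_mul {R : Type} [CommRing R] (a b : SpecialLinearGroup (Fin 2) R) (i j : Fin 2) :
    (a * b).1 i j = a.1 i 0 * b.1 0 j + a.1 i 1 * b.1 1 j := by
  have := Matrix.SpecialLinearGroup.coe_mul a b
  have h2 := congrFun (congrFun this i) j
  rw [mul_apply, Fin.sum_univ_two] at h2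
  exact h2

theorem sl_inv00 {R : Type} [CommRing R] (a : SpecialLinearGroup (Fin 2) R) :
    (a⁻¹).1 0 0 = a.1 1 1 := by rw [SpecialLinearGroup.SL2_inv_expl]; rfl
theorem sl_inv01 {R : Type} [CommRing R] (a : SpecialLinearGroup (Fin 2) R) :
    (a⁻¹).1 0 1 = -a.1 0 1 := by rw [SpecialLinearGroup.SL2_inv_expl]; rfl
theorem sl_inv10 {R : Type} [CommRing R] (a : SpecialLinearGroup (Fin 2) R) :
    (a⁻¹).1 1 0 = -a.1 1 0 := by rw [SpecialLinearGroup.SL2_inv_expl]; rfl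
theorem sl_inv11 {R : Type} [CommRing R] (a : SpecialLinearGroup (Fin 2) R) :
    (a⁻¹).1 1 1 = a.1 0 0 := by rw [SpecialLinearGroup.SL2_inv_expl]; rfl
theorem sl_map {R S : Type} [CommRing R] [CommRing S] (f : R →+* S)
    (a : SpecialLinearGroup (Fin 2) R) (i j : Fin 2) :
    (SpecialLinearGroup.map f a).1 i j = f (a.1 i j) := rfl
theorem sl_ext {R : Type} [CommRing R] {a b : SpecialLinearGroup (Fin 2) R}
    (h00 : a.1 0 0 = b.1 0 0) (h01 : a.1 0 1 = b.1 0 1) (h10 : a.1 1 0 = b.1 1 0)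
    (h11 : a.1 1 1 = b.1 1 1) : a = b := by
  apply Subtype.ext
  ext i j
  fin_cases i <;> fin_cases j <;> assumption

theorem trS_map {R S : Type} [CommRing R] [CommRing S] (f : R →+* S)
    (a : SpecialLinearGroup (Fin 2) R) : trS (SpecialLinearGroup.map f a) = f (trS a) := by
  simp only [trS, sl_map, map_add]

theorem trS_inv {R : Type} [CommRing R] (a : SpecialLinearGroup (Fin 2) R) :
    trS a⁻¹ = trS a := by
  simp only [trS, sl_inv00, sl_inv11]; ring

theorem det_eq {R : Type} [CommRing R] (a : SpecialLinearGroup (Fin 2) R) :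
    a.1 0 0 * a.1 1 1 - a.1 0 1 * a.1 1 0 = 1 := by
  rw [← det_fin_two]; exact a.2

theorem trS_mul {R : Type} [CommRing R] (a b : SpecialLinearGroup (Fin 2) R) :
    trS (a * b) = a.1 0 0 * b.1 0 0 + a.1 0 1 * b.1 1 0 + (a.1 1 0 * b.1 0 1 + a.1 1 1 * b.1 1 1) := by
  simp only [trS, sl_mul]

theorem trS_mul_comm {R : Type} [CommRing R] (a b : SpecialLinearGroup (Fin 2) R) :
    trS (a * b) = trS (b * a) := by
  rw [trS_mul, trS_mul]; ring

theorem trS_mul_mul {R : Type} [CommRing R] (a b : SpecialLinearGroup (Fin 2) R) :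
    trS (a * b * a) = trS a * trS (a * b) - trS b := by
  have := det_eq a
  rw [trS_mul, trS_mul]
  simp only [trS, sl_mul]
  linear_combination (-b.1 0 0 - b.1 1 1) * this

theorem trS_mul_inv {R : Type} [CommRing R] (a b : SpecialLinearGroup (Fin 2) R) :
    trS (b * a⁻¹) = trS a * trS b - trS (a * b) := by
  rw [trS_mul, trS_mul]
  simp only [trS, sl_inv00, sl_inv01, sl_inv10, sl_inv11]
  ring

theorem trS_comm {R : Type} [CommRing R] (a b : SpecialLinearGroup (Fin 2) R) :
    trS (a * b * a⁻¹ * b⁻¹) =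
      trS a ^ 2 + trS b ^ 2 + trS (a * b) ^ 2 - trS a * trS b * trS (a * b) - 2 := by
  have h1 := det_eq a
  have h2 := det_eq b
  have key : trS (a * b * a⁻¹ * b⁻¹) =
      trS a ^ 2 * (b.1 0 0 * b.1 1 1 - b.1 0 1 * b.1 1 0)
      + trS b ^ 2 * (a.1 0 0 * a.1 1 1 - a.1 0 1 * a.1 1 0)
      + trS (a * b) ^ 2 - trS a * trS b * trS (a * b) - 2 *
      ((a.1 0 0 * a.1 1 1 - a.1 0 1 * a.1 1 0) * (b.1 0 0 * b.1 1 1 - b.1 0 1 * b.1 1 0)) := by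
    simp only [trS, sl_mul, sl_inv00, sl_inv01, sl_inv10, sl_inv11]
    ring
  rw [key, h1, h2]; ring

theorem trS_conj {R : Type} [CommRing R] (k c : SpecialLinearGroup (Fin 2) R) :
    trS (k⁻¹ * c * k) = trS c := by
  rw [trS_mul_comm, mul_inv_cancel_left]

theorem trS_conj' {R : Type} [CommRing R] (k c : SpecialLinearGroup (Fin 2) R) :
    trS (k * c * k⁻¹) = trS c := by
  rw [trS_mul_comm, inv_mul_cancel_left]

theorem grp1 {G : Type} [Group G] {a b g : G} (h : a * b * a⁻¹ * b⁻¹ = g) :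
    a * b = g * (b * a) := by
  rw [← h]; group
theorem grp2 {G : Type} [Group G] {a b g : G} (h : a * b * a⁻¹ * b⁻¹ = g) :
    g * b = a * b * a⁻¹ := by
  rw [← h]; group
theorem grp3 {G : Type} [Group G] {a b g : G} (h : a * b * a⁻¹ * b⁻¹ = g) :
    g⁻¹ * a = b * a * b⁻¹ := by
  rw [← h]; group
theorem grp4 {G : Type} [Group G] (a b k : G) :
    k⁻¹ * a * k * (k⁻¹ * b * k) * (k⁻¹ * a * k)⁻¹ * (k⁻¹ * b * k)⁻¹
        = k⁻¹ * (a * b * a⁻¹ * b⁻¹) * k := by group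
theorem grp5 {G : Type} [Group G] (a b k : G) :
    k⁻¹ * a * k * (k⁻¹ * b * k) = k⁻¹ * (a * b) * k := by group
theorem grp6 {G : Type} [Group G] (a k : G) : k⁻¹ * (k * a * k⁻¹) * k = a := by group
theorem grp7 {G : Type} [Group G] (a k : G) : k * (k⁻¹ * a * k) * k⁻¹ = a := by group

/-- Entries constant implies in the range. -/
theorem mem_range_of_entries {K : Type} [Field K] (a : SpecialLinearGroup (Fin 2) K[X])
    (h : ∀ i j, a.1 i j ∈ (C : K →+* K[X]).range) :
    a ∈ (SpecialLinearGroup.map (n := Fin 2) (C : K →+* K[X])).range := by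
  choose c hc using h
  have hM : (C : K →+* K[X]).mapMatrix (Matrix.of c) = a.1 := by
    ext1 i j
    simpa using hc i j
  refine ⟨⟨Matrix.of c, ?_⟩, Subtype.ext hM⟩
  apply C_injective
  rw [RingHom.map_det, hM, a.2, map_one]

theorem entries_of_mem_range {K : Type} [Field K] {a : SpecialLinearGroup (Fin 2) K[X]}
    (h : a ∈ (SpecialLinearGroup.map (n := Fin 2) (C : K →+* K[X])).range) (i j : Fin 2) :
    a.1 i j ∈ (C : K →+* K[X]).range := by
  obtain ⟨b, rfl⟩ := h
  exact ⟨b.1 i j, by simp⟩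


theorem const_of_diag_aux {K : Type} [Field K] (a1 a2 a3 a4 b1 b2 b3 b4 : K[X]) (γ δ : K)
    (hγδ : γ * δ = 1) (h1 : γ ≠ 1) (h2 : γ ≠ -1)
    (da : a1 * a4 - a2 * a3 = 1) (db : b1 * b4 - b2 * b3 = 1)
    (tA : C δ * a1 + C γ * a4 = a1 + a4) (tB : C γ * b1 + C δ * b4 = b1 + b4)
    (e : a1 * b1 + a2 * b3 = C γ * (b1 * a1 + b2 * a3))
    (hX : a1 + a4 ∈ (C : K →+* K[X]).range) (hY : b1 + b4 ∈ (C : K →+* K[X]).range)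
    (hZ : a1 * b1 + a2 * b3 + (a3 * b2 + a4 * b4) ∈ (C : K →+* K[X]).range) :
    (a1 ∈ (C : K →+* K[X]).range ∧ a2 ∈ (C : K →+* K[X]).range ∧ a3 ∈ (C : K →+* K[X]).range ∧
      a4 ∈ (C : K →+* K[X]).range) ∧
    (b1 ∈ (C : K →+* K[X]).range ∧ b2 ∈ (C : K →+* K[X]).range ∧ b3 ∈ (C : K →+* K[X]).range ∧
      b4 ∈ (C : K →+* K[X]).range) := by
  set k := (C : K →+* K[X]).range with hk
  have hγδ' : (C γ : K[X]) * C δ = 1 := by rw [← C_mul, hγδ, C_1]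
  have hγ1 : (C γ : K[X]) - 1 ≠ 0 := by
    rw [← C_1, ← C_sub, Ne, C_eq_zero, sub_eq_zero]; exact h1
  have hγ2 : 1 + γ ≠ 0 := by
    intro h; apply h2; linear_combination h
  have Ck : ∀ c : K, (C c : K[X]) ∈ k := fun c => ⟨c, rfl⟩
  have ea : a1 = C γ * a4 := by
    refine mul_left_cancel₀ hγ1 ?_
    linear_combination -C γ * tA + a1 * hγδ'
  have eb : b4 = C γ * b1 := by
    refine mul_left_cancel₀ hγ1 ?_
    linear_combination -C γ * tB + b4 * hγδ'
  have k4 : a4 ∈ k := by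
    refine const_C_mul_cancel hγ2 ?_
    convert hX using 1
    rw [ea, C_add, C_1]; ring
  have k1 : a1 ∈ k := ea ▸ mul_mem (Ck γ) k4
  have l1 : b1 ∈ k := by
    refine const_C_mul_cancel hγ2 ?_
    convert hY using 1
    rw [eb, C_add, C_1]; ring
  have l4 : b4 ∈ k := eb ▸ mul_mem (Ck γ) l1
  have p23 : a2 * a3 ∈ k := by
    have : a2 * a3 = a1 * a4 - 1 := by linear_combination -da
    rw [this]; exact sub_mem (mul_mem k1 k4) (one_mem _)
  have q23 : b2 * b3 ∈ k := by
    have : b2 * b3 = b1 * b4 - 1 := by linear_combination -db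
    rw [this]; exact sub_mem (mul_mem l1 l4) (one_mem _)
  have r1 : b2 * a3 ∈ k := by
    refine const_C_mul_cancel hγ2 ?_
    have h := sub_mem (sub_mem (sub_mem hZ (mul_mem k4 l4)) (mul_mem (Ck γ) (mul_mem l1 k1)))
      (zero_mem k)
    convert h using 1
    rw [C_add, C_1]; linear_combination -e
  have r2 : a2 * b3 ∈ k := by
    have h := sub_mem (sub_mem (sub_mem hZ (mul_mem k1 l1)) (mul_mem k4 l4)) r1
    convert h using 1
    ring
  have ne1 : a2 ≠ 0 ∨ b2 ≠ 0 := by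
    by_contra hcon
    push Not at hcon
    obtain ⟨rfl, rfl⟩ := hcon
    have z : (C γ - 1) * (a1 * b1) = 0 := by linear_combination -e
    rcases mul_eq_zero.1 z with z | z
    · exact hγ1 z
    · rcases mul_eq_zero.1 z with z | z <;> simp [z] at da db
  have ne2 : a3 ≠ 0 ∨ b3 ≠ 0 := by
    by_contra hcon
    push Not at hcon
    obtain ⟨rfl, rfl⟩ := hcon
    have z : (C γ - 1) * (a1 * b1) = 0 := by linear_combination -e
    rcases mul_eq_zero.1 z with z | z
    · exact hγ1 z
    · rcases mul_eq_zero.1 z with z | z <;> simp [z] at da db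
  have k3 : a3 ∈ k := by
    rcases ne1 with h | h
    · exact const_mul_cancel h p23
    · exact const_mul_cancel h r1
  have l3 : b3 ∈ k := by
    rcases ne1 with h | h
    · exact const_mul_cancel h r2
    · exact const_mul_cancel h q23
  have k2 : a2 ∈ k := by
    rcases ne2 with h | h
    · exact const_mul_cancel h (mul_comm a2 a3 ▸ p23)
    · exact const_mul_cancel h (mul_comm a2 b3 ▸ r2)
  have l2 : b2 ∈ k := by
    rcases ne2 with h | h
    · exact const_mul_cancel h (mul_comm b2 a3 ▸ r1)
    · exact const_mul_cancel h (mul_comm b2 b3 ▸ q23)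
  exact ⟨⟨k1, k2, k3, k4⟩, l1, l2, l3, l4⟩

theorem const_of_diag {K : Type} [Field K] (a b : SpecialLinearGroup (Fin 2) K[X])
    (G : SpecialLinearGroup (Fin 2) K) (γ δ : K) (hG : G.1 = !![γ, 0; 0, δ])
    (h1 : γ ≠ 1) (h2 : γ ≠ -1)
    (hab : a * b * a⁻¹ * b⁻¹ = SpecialLinearGroup.map C G)
    (hX : trS a ∈ (C : K →+* K[X]).range) (hY : trS b ∈ (C : K →+* K[X]).range)
    (hZ : trS (a * b) ∈ (C : K →+* K[X]).range) :
    a ∈ (SpecialLinearGroup.map (n := Fin 2) (C : K →+* K[X])).range ∧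
    b ∈ (SpecialLinearGroup.map (n := Fin 2) (C : K →+* K[X])).range := by
  have hγδ : γ * δ = 1 := by
    have := G.2
    rw [hG] at this
    simpa using this
  have hγ : γ ≠ 0 := left_ne_zero_of_mul_eq_one hγδ
  set g := SpecialLinearGroup.map (n := Fin 2) (C : K →+* K[X]) G with hg
  have g00 : g.1 0 0 = C γ := by simp [hg, hG]
  have g01 : g.1 0 1 = 0 := by simp [hg, hG]
  have g10 : g.1 1 0 = 0 := by simp [hg, hG]
  have g11 : g.1 1 1 = C δ := by simp [hg, hG]
  have e1 := grp1 hab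
  have tB : trS (g * b) = trS b := by rw [grp2 hab, trS_conj']
  have tA : trS (g⁻¹ * a) = trS a := by rw [grp3 hab, trS_conj']
  have e11 : (a * b).1 0 0 = (g * (b * a)).1 0 0 := by rw [e1]
  simp only [sl_mul, g00, g01] at e11
  rw [trS_mul] at tA tB hZ
  simp only [sl_inv00, sl_inv01, sl_inv10, sl_inv11, g00, g01, g10, g11, trS] at tA tB hX hY
  obtain ⟨⟨k1, k2, k3, k4⟩, l1, l2, l3, l4⟩ := const_of_diag_aux (a.1 0 0) (a.1 0 1) (a.1 1 0)
    (a.1 1 1) (b.1 0 0) (b.1 0 1) (b.1 1 0) (b.1 1 1) γ δ hγδ h1 h2 (det_eq a) (det_eq b)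
    (by linear_combination tA) (by linear_combination tB) (by linear_combination e11) hX hY hZ
  constructor
  · apply mem_range_of_entries
    intro i j
    fin_cases i <;> fin_cases j <;> assumption
  · apply mem_range_of_entries
    intro i j
    fin_cases i <;> fin_cases j <;> assumption

/-- Diagonalization in SL2. -/
theorem exists_diag {K : Type} [Field K] [IsAlgClosed K] (g : SpecialLinearGroup (Fin 2) K)
    (h1 : trS g ≠ 2) (h2 : trS g ≠ -2) :
    ∃ (h G : SpecialLinearGroup (Fin 2) K) (γ δ : K), G.1 = !![γ, 0; 0, δ] ∧ γ ≠ 1 ∧ γ ≠ -1 ∧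
      g = h * G * h⁻¹ := by
  obtain ⟨γ, hγ⟩ : ∃ a : K, a ^ 2 - trS g * a + 1 = 0 := by
    obtain ⟨a, ha⟩ := IsAlgClosed.exists_root (X ^ 2 - C (trS g) * X + 1 : K[X]) (by
      have : (X ^ 2 - C (trS g) * X + 1 : K[X]).degree = 2 := by compute_degree!
      rw [this]; decide)
    exact ⟨a, by simpa using ha⟩
  obtain ⟨δ, hδ⟩ : ∃ δ, δ = trS g - γ := ⟨_, rfl⟩
  have hγδ : γ * δ = 1 := by rw [hδ]; linear_combination -hγ
  have n1 : γ ≠ 1 := by rintro rfl; apply h1; linear_combination -hγ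
  have n2 : γ ≠ -1 := by rintro rfl; apply h2; linear_combination hγ
  have n3 : γ - δ ≠ 0 := by
    intro h
    have : (γ - 1) * (γ + 1) = 0 := by linear_combination γ * h + hγδ
    rcases mul_eq_zero.1 this with h | h
    · exact n1 (by linear_combination h)
    · exact n2 (by linear_combination h)
  have hdet := det_eq g
  have htr : γ + δ = g.1 0 0 + g.1 1 1 := by rw [hδ]; simp only [trS]; ring
  suffices H : ∃ h : SpecialLinearGroup (Fin 2) K,
      g.1 0 0 * h.1 0 0 + g.1 0 1 * h.1 1 0 = γ * h.1 0 0 ∧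
      g.1 1 0 * h.1 0 0 + g.1 1 1 * h.1 1 0 = γ * h.1 1 0 ∧
      g.1 0 0 * h.1 0 1 + g.1 0 1 * h.1 1 1 = δ * h.1 0 1 ∧
      g.1 1 0 * h.1 0 1 + g.1 1 1 * h.1 1 1 = δ * h.1 1 1 by
    obtain ⟨h, e1, e2, e3, e4⟩ := H
    obtain ⟨G, hG⟩ : ∃ G : SpecialLinearGroup (Fin 2) K, G.1 = !![γ, 0; 0, δ] :=
      ⟨⟨!![γ, 0; 0, δ], by simp [hγδ]⟩, rfl⟩
    have g00 : G.1 0 0 = γ := by rw [hG]; rfl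
    have g01 : G.1 0 1 = 0 := by rw [hG]; rfl
    have g10 : G.1 1 0 = 0 := by rw [hG]; rfl
    have g11 : G.1 1 1 = δ := by rw [hG]; rfl
    refine ⟨h, G, γ, δ, hG, n1, n2, ?_⟩
    rw [eq_mul_inv_iff_mul_eq]
    apply sl_ext <;> simp only [sl_mul, g00, g01, g10, g11]
    · linear_combination e1
    · linear_combination e3
    · linear_combination e2
    · linear_combination e4
  have mk : ∀ p q r s : K, p * s - q * r ≠ 0 →
      g.1 0 0 * p + g.1 0 1 * r = γ * p → g.1 1 0 * p + g.1 1 1 * r = γ * r →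
      g.1 0 0 * q + g.1 0 1 * s = δ * q → g.1 1 0 * q + g.1 1 1 * s = δ * s →
      ∃ h : SpecialLinearGroup (Fin 2) K,
      g.1 0 0 * h.1 0 0 + g.1 0 1 * h.1 1 0 = γ * h.1 0 0 ∧
      g.1 1 0 * h.1 0 0 + g.1 1 1 * h.1 1 0 = γ * h.1 1 0 ∧
      g.1 0 0 * h.1 0 1 + g.1 0 1 * h.1 1 1 = δ * h.1 0 1 ∧
      g.1 1 0 * h.1 0 1 + g.1 1 1 * h.1 1 1 = δ * h.1 1 1 := by
    intro p q r s hne e1 e2 e3 e4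
    refine ⟨⟨!![p, q / (p * s - q * r); r, s / (p * s - q * r)], ?_⟩, ?_, ?_, ?_, ?_⟩
    · rw [det_fin_two_of]; field_simp
    · exact e1
    · exact e2
    · show g.1 0 0 * (q / (p * s - q * r)) + g.1 0 1 * (s / (p * s - q * r))
        = δ * (q / (p * s - q * r))
      linear_combination e3 / (p * s - q * r)
    · show g.1 1 0 * (q / (p * s - q * r)) + g.1 1 1 * (s / (p * s - q * r))
        = δ * (s / (p * s - q * r))
      linear_combination e4 / (p * s - q * r)
  generalize g.1 0 0 = g1 at *
  generalize g.1 0 1 = g2 at *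
  generalize g.1 1 0 = g3 at *
  generalize g.1 1 1 = g4 at *
  by_cases h01 : g2 = 0
  · by_cases h10 : g3 = 0
    · subst h01 h10
      have : (g1 - γ) * (g1 - δ) = 0 := by
        linear_combination hγδ - g1 * htr - hdet
      rcases mul_eq_zero.1 this with h | h
      · exact mk 1 0 0 1 (by simp) (by linear_combination h) (by ring) (by ring)
          (by linear_combination -htr - h)
      · exact mk 0 1 1 0 (by simp) (by ring) (by linear_combination -htr - h)
          (by linear_combination h) (by ring)
    · refine mk (γ - g4) (δ - g4) g3 g3 ?_ ?_ ?_ ?_ ?_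
      · intro h
        have : g3 * (γ - δ) = 0 := by linear_combination h
        rcases mul_eq_zero.1 this with h | h
        · exact h10 h
        · exact n3 h
      · linear_combination hγδ - hdet - γ * htr
      · ring
      · linear_combination hγδ - hdet - δ * htr
      · ring
  · refine mk g2 g2 (γ - g1) (δ - g1) ?_ ?_ ?_ ?_ ?_
    · intro h
      have : g2 * (γ - δ) = 0 := by linear_combination -h
      rcases mul_eq_zero.1 this with h | h
      · exact h01 h
      · exact n3 h
    · ring
    · linear_combination hγδ - hdet - γ * htr
    · ring
    · linear_combination hγδ - hdet - δ * htr

theorem const_of_traces {K : Type} [Field K] [IsAlgClosed K]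
    (a b : SpecialLinearGroup (Fin 2) K[X])
    (g : SpecialLinearGroup (Fin 2) K) (h1 : trS g ≠ 2) (h2 : trS g ≠ -2)
    (hab : a * b * a⁻¹ * b⁻¹ = SpecialLinearGroup.map C g)
    (hX : trS a ∈ (C : K →+* K[X]).range) (hY : trS b ∈ (C : K →+* K[X]).range)
    (hZ : trS (a * b) ∈ (C : K →+* K[X]).range) :
    a ∈ (SpecialLinearGroup.map (n := Fin 2) (C : K →+* K[X])).range ∧
    b ∈ (SpecialLinearGroup.map (n := Fin 2) (C : K →+* K[X])).range := by
  obtain ⟨h, G, γ, δ, hG, n1, n2, rfl⟩ := exists_diag g h1 h2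
  set k := SpecialLinearGroup.map (n := Fin 2) (C : K →+* K[X]) h with hk
  have hkm : k ∈ (SpecialLinearGroup.map (n := Fin 2) (C : K →+* K[X])).range := ⟨h, rfl⟩
  have key := const_of_diag (k⁻¹ * a * k) (k⁻¹ * b * k) G γ δ hG n1 n2 (by
      rw [grp4, hab, map_mul, map_mul, map_inv]; exact grp6 _ _) (by rwa [trS_conj])
      (by rwa [trS_conj]) (by rwa [grp5, trS_conj])
  constructor
  · have := mul_mem (mul_mem hkm key.1) (inv_mem hkm)
    rwa [grp7] at this
  · have := mul_mem (mul_mem hkm key.2) (inv_mem hkm)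
    rwa [grp7] at this

end SL2

section Pow

/-- evaluation of integer polynomials -/
noncomputable def pe {R : Type} [CommRing R] (t : R) : ℤ[X] →+* R :=
  eval₂RingHom (Int.castRingHom R) t

theorem pe_def {R : Type} [CommRing R] (t : R) (w : ℤ[X]) :
    pe t w = eval₂ (Int.castRingHom R) t w := rfl

theorem pe_X {R : Type} [CommRing R] (t : R) : pe t X = t := by rw [pe_def, eval₂_X]


theorem exists_pow_poly (m : ℤ) : ∃ u v : ℤ[X], ∀ (R : Type) [CommRing R]
    (y : SpecialLinearGroup (Fin 2) R),
    (y ^ m).1 0 0 = pe (trS y) u * y.1 0 0 + pe (trS y) v ∧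
    (y ^ m).1 0 1 = pe (trS y) u * y.1 0 1 ∧
    (y ^ m).1 1 0 = pe (trS y) u * y.1 1 0 ∧
    (y ^ m).1 1 1 = pe (trS y) u * y.1 1 1 + pe (trS y) v := by
  induction m with
  | zero =>
    refine ⟨0, 1, fun R _ y => ?_⟩
    rw [zpow_zero]
    simp
  | succ i ih =>
    obtain ⟨u, v, h⟩ := ih
    refine ⟨u * X + v, -u, fun R _ y => ?_⟩
    obtain ⟨h1, h2, h3, h4⟩ := h R y
    have hd := det_eq y
    rw [_root_.zpow_add_one]
    simp only [sl_mul, h1, h2, h3, h4, map_add, map_mul, map_neg, pe_X]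
    generalize pe (trS y) u = U
    generalize pe (trS y) v = V
    simp only [trS]
    refine ⟨?_, ?_, ?_, ?_⟩
    · linear_combination (-U) * hd
    · ring
    · ring
    · linear_combination (-U) * hd
  | pred i ih =>
    obtain ⟨u, v, h⟩ := ih
    refine ⟨-v, u + v * X, fun R _ y => ?_⟩
    obtain ⟨h1, h2, h3, h4⟩ := h R y
    have hd := det_eq y
    rw [_root_.zpow_sub_one]
    simp only [sl_mul, sl_inv00, sl_inv01, sl_inv10, sl_inv11, h1, h2, h3, h4, map_add, map_mul,
      map_neg, pe_X]
    generalize pe (trS y) u = U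
    generalize pe (trS y) v = V
    simp only [trS]
    refine ⟨?_, ?_, ?_, ?_⟩
    · linear_combination U * hd
    · ring
    · ring
    · linear_combination U * hd

/-- the companion matrix, with given trace -/
theorem exists_trS {R : Type} [CommRing R] (t : R) :
    ∃ y : SpecialLinearGroup (Fin 2) R, trS y = t ∧ y.1 1 0 = 1 :=
  ⟨⟨!![t, -1; 1, 0], by simp⟩, by simp [trS], by simp⟩

/-- trace polynomial of the power -/
structure PowPoly (m : ℤ) (u v : ℤ[X]) : Prop where
  pow : ∀ (R : Type) [CommRing R]
    (y : SpecialLinearGroup (Fin 2) R),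
    (y ^ m).1 0 0 = pe (trS y) u * y.1 0 0 + pe (trS y) v ∧
    (y ^ m).1 0 1 = pe (trS y) u * y.1 0 1 ∧
    (y ^ m).1 1 0 = pe (trS y) u * y.1 1 0 ∧
    (y ^ m).1 1 1 = pe (trS y) u * y.1 1 1 + pe (trS y) v

theorem PowPoly.trS_pow {m : ℤ} {u v : ℤ[X]} (h : PowPoly m u v) {R : Type} [CommRing R]
    (y : SpecialLinearGroup (Fin 2) R) :
    trS (y ^ m) = pe (trS y) (u * X + 2 * v) := by
  obtain ⟨h1, h2, h3, h4⟩ := h.pow R y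
  have e : trS (y ^ m) = (y ^ m).1 0 0 + (y ^ m).1 1 1 := rfl
  rw [e, h1, h4, map_add, map_mul, map_mul, pe_X, map_ofNat]
  generalize pe (trS y) u = U
  simp only [trS]; ring

theorem PowPoly.rel {m : ℤ} {u v : ℤ[X]} (h : PowPoly m u v) {R : Type} [CommRing R] (t : R) :
    (pe t u) ^ 2 + pe t u * pe t v * t + (pe t v) ^ 2 = 1 := by
  obtain ⟨y, rfl, -⟩ := exists_trS t
  obtain ⟨h1, h2, h3, h4⟩ := h.pow R y
  have hd := det_eq (y ^ m)
  have hd' := det_eq y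
  rw [h1, h2, h3, h4] at hd
  generalize pe (trS y) u = U at *
  simp only [trS] at *
  linear_combination hd - U ^ 2 * hd'

theorem two_zpow_ne {m : ℤ} (hm : m ≠ 0) : (2 : ℂ) ^ m + ((2 : ℂ) ^ m)⁻¹ ≠ 2 := by
  intro h
  have h0 : (2 : ℂ) ^ m ≠ 0 := zpow_ne_zero _ two_ne_zero
  have h1 : ((2 : ℂ) ^ m - 1) ^ 2 = 0 := by
    field_simp at h
    linear_combination h
  have h2 : (2 : ℂ) ^ m = 1 := by
    have := pow_eq_zero_iff (two_ne_zero) |>.1 h1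
    linear_combination this
  have h3 : (2 : ℝ) ^ m = 1 := by
    have := congrArg (fun z : ℂ => ‖z‖) h2
    simpa [norm_zpow] using this
  rcases lt_or_gt_of_ne hm with h | h
  · exact absurd h3 (zpow_lt_one_of_neg₀ (by norm_num) h).ne
  · exact absurd h3 (one_lt_zpow₀ (by norm_num) h).ne'

theorem PowPoly.nonconst {m : ℤ} {u v : ℤ[X]} (h : PowPoly m u v) (hm : m ≠ 0) :
    ∃ s t : ℂ, pe s (u * X + 2 * v) ≠ pe t (u * X + 2 * v) := by
  obtain ⟨y, hy⟩ : ∃ y : SpecialLinearGroup (Fin 2) ℂ, y.1 = !![2, 0; 0, 2⁻¹] :=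
    ⟨⟨!![2, 0; 0, 2⁻¹], by simp⟩, rfl⟩
  have key : ∀ k : ℤ, (y ^ k).1 0 0 = 2 ^ k ∧ (y ^ k).1 0 1 = 0 ∧ (y ^ k).1 1 0 = 0 ∧
      (y ^ k).1 1 1 = (2 ^ k)⁻¹ := by
    intro k
    have y00 : y.1 0 0 = 2 := by rw [hy]; rfl
    have y01 : y.1 0 1 = 0 := by rw [hy]; rfl
    have y10 : y.1 1 0 = 0 := by rw [hy]; rfl
    have y11 : y.1 1 1 = 2⁻¹ := by rw [hy]; rfl
    induction k with
    | zero => rw [zpow_zero]; simp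
    | succ i ih =>
      obtain ⟨h1, h2, h3, h4⟩ := ih
      rw [_root_.zpow_add_one, zpow_add_one₀ two_ne_zero]
      simp only [sl_mul, h1, h2, h3, h4, y00, y01, y10, y11, mul_inv]
      simp
    | pred i ih =>
      obtain ⟨h1, h2, h3, h4⟩ := ih
      rw [_root_.zpow_sub_one, zpow_sub_one₀ two_ne_zero]
      simp only [sl_mul, sl_inv00, sl_inv01, sl_inv10, sl_inv11, h1, h2, h3, h4, y00, y01, y10,
        y11, mul_inv]
      simp
  refine ⟨trS y, trS (1 : SpecialLinearGroup (Fin 2) ℂ), ?_⟩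
  rw [← h.trS_pow, ← h.trS_pow, _root_.one_zpow]
  have e : trS (y ^ m) = (y ^ m).1 0 0 + (y ^ m).1 1 1 := rfl
  rw [e, (key m).1, (key m).2.2.2]
  have : trS (1 : SpecialLinearGroup (Fin 2) ℂ) = 2 := by simp [trS]; norm_num
  rw [this]
  exact two_zpow_ne hm

theorem PowPoly.natDegree_pos {m : ℤ} {u v : ℤ[X]} (h : PowPoly m u v) (hm : m ≠ 0) :
    (u * X + 2 * v).natDegree ≠ 0 := by
  intro h0
  obtain ⟨s, t, hst⟩ := h.nonconst hm
  obtain ⟨c, hc⟩ := natDegree_eq_zero.1 h0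
  rw [← hc, pe_def, pe_def, eval₂_C, eval₂_C] at hst
  exact hst rfl

/-- roots of constant matrices are constant -/
theorem PowPoly.const {m : ℤ} {u v : ℤ[X]} (h : PowPoly m u v) (hm : m ≠ 0) {K : Type} [Field K]
    [CharZero K] (y : SpecialLinearGroup (Fin 2) K[X])
    (hy : y ^ m ∈ (SpecialLinearGroup.map (n := Fin 2) (C : K →+* K[X])).range)
    (hu : pe (trS y) u ≠ 0) (i j : Fin 2) : y.1 i j ∈ (C : K →+* K[X]).range := by
  have hE := entries_of_mem_range hy
  have hT : pe (trS y) (u * X + 2 * v) ∈ (C : K →+* K[X]).range := by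
    rw [← h.trS_pow]
    exact add_mem (hE 0 0) (hE 1 1)
  have hs : trS y ∈ (C : K →+* K[X]).range := by
    refine natDegree_eq_zero.1 ?_
    have h1 : (pe (trS y) (u * X + 2 * v)).natDegree = 0 := natDegree_eq_zero.2 hT
    have h2 : pe (trS y) (u * X + 2 * v) =
        ((u * X + 2 * v).map (Int.castRingHom K)).comp (trS y) := by
      rw [Polynomial.comp, eval₂_map, pe_def]
      congr 1
    rw [h2, natDegree_comp, natDegree_map_eq_of_injective (RingHom.injective_int _)] at h1
    exact (mul_eq_zero.1 h1).resolve_left (h.natDegree_pos hm)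
  have hae : ∀ w : ℤ[X], pe (trS y) w ∈ (C : K →+* K[X]).range := by
    intro w
    obtain ⟨s, hs⟩ := hs
    rw [← hs]
    exact ⟨pe s w, by
      rw [pe_def, hom_eval₂, pe_def]; congr 1⟩
  obtain ⟨h1, h2, h3, h4⟩ := h.pow K[X] y
  have c00 : y.1 0 0 ∈ (C : K →+* K[X]).range := by
    refine const_mul_cancel hu ?_
    have := sub_mem (hE 0 0) (hae v)
    rw [h1, add_sub_cancel_right] at this
    exact this
  have c01 : y.1 0 1 ∈ (C : K →+* K[X]).range := by
    refine const_mul_cancel hu ?_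
    have := (hE 0 1)
    rw [h2] at this
    exact this
  have c10 : y.1 1 0 ∈ (C : K →+* K[X]).range := by
    refine const_mul_cancel hu ?_
    have := (hE 1 0)
    rw [h3] at this
    exact this
  have c11 : y.1 1 1 ∈ (C : K →+* K[X]).range := by
    refine const_mul_cancel hu ?_
    have := sub_mem (hE 1 1) (hae v)
    rw [h4, add_sub_cancel_right] at this
    exact this
  fin_cases i <;> fin_cases j
  · exact c00
  · exact c01
  · exact c10
  · exact c11

/-- a scalar power commutes with everything -/
theorem PowPoly.comm_of_zero {m : ℤ} {u v : ℤ[X]} (h : PowPoly m u v) {R : Type} [CommRing R]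
    (y : SpecialLinearGroup (Fin 2) R) (hu : pe (trS y) u = 0)
    (a : SpecialLinearGroup (Fin 2) R) : a * y ^ m = y ^ m * a := by
  obtain ⟨h1, h2, h3, h4⟩ := h.pow R y
  rw [hu] at h1 h2 h3 h4
  apply sl_ext <;> simp only [sl_mul, h1, h2, h3, h4] <;> ring


theorem continuous_pe (w : ℤ[X]) : Continuous fun t : ℂ => pe t w := by
  have : (fun t : ℂ => pe t w) = fun t => eval t (w.map (Int.castRingHom ℂ)) := by
    funext t; rw [pe_def, eval_map]
  rw [this]
  exact Polynomial.continuous _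

open Filter Topology in
theorem PowPoly.open_map {m : ℤ} {u v : ℤ[X]} (h : PowPoly m u v) (hm : m ≠ 0)
    (y : SL2C) (hu : pe (trS y) u ≠ 0) :
    𝓝 (y ^ m) ≤ map (fun y : SL2C => y ^ m) (𝓝 y) := by
  have hopen : 𝓝 (pe (trS y) (u * X + 2 * v)) ≤
      map (fun t : ℂ => pe t (u * X + 2 * v)) (𝓝 (trS y)) := by
    have han : AnalyticOnNhd ℂ (fun t : ℂ => pe t (u * X + 2 * v)) Set.univ := by
      have : (fun t : ℂ => pe t (u * X + 2 * v)) =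
          fun t => eval t ((u * X + 2 * v).map (Int.castRingHom ℂ)) := by
        funext t; rw [pe_def, eval_map]
      rw [this]
      exact fun z _ => AnalyticOnNhd.eval_polynomial _ z trivial
    refine (han (trS y) trivial).eventually_constant_or_nhds_le_map_nhds.resolve_left ?_
    intro hc
    obtain ⟨s, t, hst⟩ := h.nonconst hm
    have := han.eq_of_eventuallyEq (g := fun _ => pe (trS y) (u * X + 2 * v))
      (fun z _ => analyticAt_const) hc
    exact hst ((congrFun this s).trans (congrFun this t).symm)
  intro V hV
  rw [mem_map] at hV
  obtain ⟨V', hV', hsub⟩ := mem_nhds_induced _ _ _ |>.1 hV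
  obtain ⟨F, hFdef⟩ : ∃ F : ℂ × Matrix (Fin 2) (Fin 2) ℂ → Matrix (Fin 2) (Fin 2) ℂ, F = fun q =>
    (pe q.1 u)⁻¹ • (q.2 - (pe q.1 v) • (1 : Matrix (Fin 2) (Fin 2) ℂ)) := ⟨_, rfl⟩
  have F00 : ∀ t B, F (t, B) 0 0 = (pe t u)⁻¹ * (B 0 0 - pe t v) := by
    intro t B; rw [hFdef]; simp
  have F01 : ∀ t B, F (t, B) 0 1 = (pe t u)⁻¹ * (B 0 1) := by
    intro t B; rw [hFdef]; simp
  have F10 : ∀ t B, F (t, B) 1 0 = (pe t u)⁻¹ * (B 1 0) := by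
    intro t B; rw [hFdef]; simp
  have F11 : ∀ t B, F (t, B) 1 1 = (pe t u)⁻¹ * (B 1 1 - pe t v) := by
    intro t B; rw [hFdef]; simp
  have hcu : ∀ w : ℤ[X], Continuous fun t : ℂ => pe t w := continuous_pe
  have hF0 : F (trS y, (y ^ m).1) = y.1 := by
    obtain ⟨h1, h2, h3, h4⟩ := h.pow ℂ y
    have e00 : F (trS y, (y ^ m).1) 0 0 = y.1 0 0 := by
      rw [F00, h1]; field_simp; ring
    have e01 : F (trS y, (y ^ m).1) 0 1 = y.1 0 1 := by
      rw [F01, h2]; field_simp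
    have e10 : F (trS y, (y ^ m).1) 1 0 = y.1 1 0 := by
      rw [F10, h3]; field_simp
    have e11 : F (trS y, (y ^ m).1) 1 1 = y.1 1 1 := by
      rw [F11, h4]; field_simp; ring
    ext i j
    fin_cases i <;> fin_cases j <;> assumption
  have hcu' : ∀ w : ℤ[X], Continuous fun q : ℂ × Matrix (Fin 2) (Fin 2) ℂ => pe q.1 w :=
    fun w => (hcu w).comp continuous_fst
  have hF : ContinuousAt F (trS y, (y ^ m).1) := by
    rw [hFdef]
    refine ContinuousAt.smul (ContinuousAt.inv₀ (hcu' u).continuousAt hu) ?_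
    exact (continuous_snd.sub ((hcu' v).smul continuous_const)).continuousAt
  have ev1 : ∀ᶠ q in 𝓝 ((trS y, (y ^ m).1) : ℂ × Matrix (Fin 2) (Fin 2) ℂ), F q ∈ V' ∧
      pe q.1 u ≠ 0 := by
    refine (hF.eventually_mem ?_).and ((hcu' u).continuousAt.eventually_ne hu)
    rw [hF0]; exact hV'
  rw [nhds_prod_eq, eventually_prod_iff] at ev1
  obtain ⟨pa, hpa, pb, hpb, hab⟩ := ev1
  have ht : Set.image (fun t : ℂ => pe t (u * X + 2 * v)) {t | pa t} ∈
      𝓝 (pe (trS y) (u * X + 2 * v)) := hopen (image_mem_map hpa)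
  have hcv : Continuous (fun B : SL2C => B.1) := continuous_induced_dom
  have hct : Continuous (fun B : SL2C => trS B) := by
    unfold trS
    exact (hcv.matrix_elem 0 0).add (hcv.matrix_elem 1 1)
  rw [← h.trS_pow] at ht
  have e1 := hct.continuousAt.eventually_mem ht
  have e2 := hcv.continuousAt.eventually hpb
  filter_upwards [e1, e2] with B hB1 hB2
  obtain ⟨t, hpt, hT⟩ := hB1
  obtain ⟨hm1, hu1⟩ := hab hpt hB2
  simp only at hu1
  have hT' : pe t u * t + 2 * pe t v = trS B := by
    rw [← hT]; simp only [map_add, map_mul, pe_X, map_ofNat]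
  have hrel := h.rel t
  have hdB := det_eq B
  have tB : trS B = B.1 0 0 + B.1 1 1 := rfl
  rw [tB] at hT'
  have hdet : (F (t, B.1)).det = 1 := by
    rw [det_fin_two, F00, F01, F10, F11]
    field_simp
    linear_combination hdB - hrel + pe t v * hT'
  obtain ⟨y', hy'⟩ : ∃ y' : SL2C, y'.1 = F (t, B.1) := ⟨⟨_, hdet⟩, rfl⟩
  have hty : trS y' = t := by
    have : trS y' = y'.1 0 0 + y'.1 1 1 := rfl
    rw [this, hy', F00, F11]
    field_simp
    linear_combination -hT'
  have hpow : y' ^ m = B := by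
    obtain ⟨h1, h2, h3, h4⟩ := h.pow ℂ y'
    rw [hty, hy'] at h1 h2 h3 h4
    rw [F00] at h1
    rw [F01] at h2
    rw [F10] at h3
    rw [F11] at h4
    apply sl_ext
    · rw [h1]; field_simp; ring
    · rw [h2]; field_simp
    · rw [h3]; field_simp
    · rw [h4]; field_simp; ring
  have : y' ∈ (fun y : SL2C => y ^ m) ⁻¹' V := hsub (by
    show y'.1 ∈ V'
    rw [hy']; exact hm1)
  rw [← hpow]
  exact this

end Pow

section Twist

open Filter Topology

theorem grp8 {G : Type} [Group G] {a b c : G} (h : c * a = a * c) :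
    a * (b * c) * a⁻¹ * (b * c)⁻¹ = a * b * a⁻¹ * b⁻¹ := by
  have h2 : c * a⁻¹ = a⁻¹ * c := (show Commute c a from h).inv_right
  calc a * (b * c) * a⁻¹ * (b * c)⁻¹ = a * b * (c * a⁻¹) * c⁻¹ * b⁻¹ := by group
    _ = a * b * a⁻¹ * b⁻¹ := by rw [h2]; group

theorem grp9 {G : Type} [Group G] {a b c : G} (h : c * b = b * c) :
    (a * c) * b * (a * c)⁻¹ * b⁻¹ = a * b * a⁻¹ * b⁻¹ := by
  calc (a * c) * b * (a * c)⁻¹ * b⁻¹ = a * (c * b) * c⁻¹ * a⁻¹ * b⁻¹ := by group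
    _ = a * b * a⁻¹ * b⁻¹ := by rw [h]; group

theorem curve_aux (P : SL2C → Prop) (hP : ∀ᶠ c in 𝓝 (1 : SL2C), P c) (x y z : ℂ) :
    ∀ᶠ τ in 𝓝 (0 : ℂ), 1 + τ ^ 2 * (-x ^ 2 - y * z) ≠ 0 ∧ ∃ c : SL2C, P c ∧
      c.1 0 0 = (1 + τ ^ 2 * (-x ^ 2 - y * z))⁻¹ * (1 - τ ^ 2 * (-x ^ 2 - y * z) + 2 * τ * x) ∧
      c.1 0 1 = (1 + τ ^ 2 * (-x ^ 2 - y * z))⁻¹ * (2 * τ * y) ∧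
      c.1 1 0 = (1 + τ ^ 2 * (-x ^ 2 - y * z))⁻¹ * (2 * τ * z) ∧
      c.1 1 1 = (1 + τ ^ 2 * (-x ^ 2 - y * z))⁻¹ * (1 - τ ^ 2 * (-x ^ 2 - y * z) - 2 * τ * x) := by
  obtain ⟨V', hV', hsub⟩ := mem_nhds_induced _ _ _ |>.1 hP
  obtain ⟨d, hd⟩ : ∃ d, d = -x ^ 2 - y * z := ⟨_, rfl⟩
  rw [← hd]
  obtain ⟨F, hF⟩ : ∃ F : ℂ → Matrix (Fin 2) (Fin 2) ℂ, F = fun τ =>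
    (1 + τ ^ 2 * d)⁻¹ • !![1 - τ ^ 2 * d + 2 * τ * x, 2 * τ * y; 2 * τ * z,
      1 - τ ^ 2 * d - 2 * τ * x] := ⟨_, rfl⟩
  have hc1 : Continuous fun τ : ℂ => 1 + τ ^ 2 * d := by fun_prop
  have h0 : (1 + (0 : ℂ) ^ 2 * d) ≠ 0 := by simp
  have hcF : ContinuousAt F 0 := by
    rw [hF]
    refine ContinuousAt.smul (ContinuousAt.inv₀ hc1.continuousAt h0) (Continuous.continuousAt ?_)
    refine continuous_matrix fun i j => ?_
    fin_cases i <;> fin_cases j <;> simp <;> fun_prop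
  have hF0 : F 0 = 1 := by
    rw [hF]
    ext i j
    fin_cases i <;> fin_cases j <;> simp
  have e1 : ∀ᶠ τ in 𝓝 (0 : ℂ), F τ ∈ V' := hcF.eventually_mem (by rw [hF0]; exact hV')
  have e2 : ∀ᶠ τ in 𝓝 (0 : ℂ), 1 + τ ^ 2 * d ≠ 0 := hc1.continuousAt.eventually_ne h0
  filter_upwards [e1, e2] with τ h1 h2
  refine ⟨h2, ?_⟩
  have f00 : F τ 0 0 = (1 + τ ^ 2 * d)⁻¹ * (1 - τ ^ 2 * d + 2 * τ * x) := by rw [hF]; simp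
  have f01 : F τ 0 1 = (1 + τ ^ 2 * d)⁻¹ * (2 * τ * y) := by rw [hF]; simp
  have f10 : F τ 1 0 = (1 + τ ^ 2 * d)⁻¹ * (2 * τ * z) := by rw [hF]; simp
  have f11 : F τ 1 1 = (1 + τ ^ 2 * d)⁻¹ * (1 - τ ^ 2 * d - 2 * τ * x) := by rw [hF]; simp
  have hdet : (F τ).det = 1 := by
    rw [det_fin_two, f00, f01, f10, f11]
    field_simp
    linear_combination (-4) * τ ^ 2 * hd
  obtain ⟨c, hc⟩ : ∃ c : SL2C, c.1 = F τ := ⟨⟨_, hdet⟩, rfl⟩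
  refine ⟨c, hsub (show c.1 ∈ V' by rw [hc]; exact h1), ?_, ?_, ?_, ?_⟩ <;> rw [hc] <;> assumption

theorem twist_aux (A B : SL2C)
    (h : ∀ᶠ c in 𝓝 (1 : SL2C), c * A = A * c → trS (B * c) = trS B) :
    trS (A * B) = trS A * trS B / 2 ∧ (1 - trS A ^ 2 / 4) * trS B = 0 := by
  have hd := det_eq A
  have hA : trS A = A.1 0 0 + A.1 1 1 := rfl
  have hB : trS B = B.1 0 0 + B.1 1 1 := rfl
  have key := curve_aux _ h ((A.1 0 0 - A.1 1 1) / 2) (A.1 0 1) (A.1 1 0)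
  obtain ⟨d, hdd⟩ : ∃ d, d = -((A.1 0 0 - A.1 1 1) / 2) ^ 2 - A.1 0 1 * A.1 1 0 := ⟨_, rfl⟩
  rw [← hdd] at key
  have e2 : ∀ᶠ τ in 𝓝 (0 : ℂ), τ * d * trS B = trS (A * B) - trS A * trS B / 2 ∨ τ = 0 := by
    filter_upwards [key] with τ hτ
    obtain ⟨hne, c, hc, c00, c01, c10, c11⟩ := hτ
    by_cases h0 : τ = 0
    · exact Or.inr h0
    left
    have hcomm : c * A = A * c := by
      apply sl_ext <;> simp only [sl_mul, c00, c01, c10, c11] <;> ring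
    have h1 := hc hcomm
    rw [trS_mul, c00, c01, c10, c11, hB] at h1
    field_simp at h1
    rw [trS_mul, hA, hB]
    have h2 : τ * (τ * d * (B.1 0 0 + B.1 1 1) - (A.1 0 0 * B.1 0 0 + A.1 0 1 * B.1 1 0 +
        (A.1 1 0 * B.1 0 1 + A.1 1 1 * B.1 1 1)
          - (A.1 0 0 + A.1 1 1) * (B.1 0 0 + B.1 1 1) / 2)) = 0 := by
      linear_combination (-1/2) * h1
    have := (mul_eq_zero.1 h2).resolve_left h0
    linear_combination this
  obtain ⟨ε, hε, hball⟩ := Metric.eventually_nhds_iff.1 e2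
  have ht : ((ε / 2 : ℝ) : ℂ) ≠ 0 := by exact_mod_cast (by positivity : ε / 2 ≠ 0)
  have h1 := (hball (y := ((ε / 2 : ℝ) : ℂ)) (by
    rw [dist_zero_right, Complex.norm_real, Real.norm_of_nonneg (by positivity)]
    linarith)).resolve_right ht
  have h2 := (hball (y := -((ε / 2 : ℝ) : ℂ)) (by
    rw [dist_zero_right, norm_neg, Complex.norm_real, Real.norm_of_nonneg (by positivity)]
    linarith)).resolve_right (neg_ne_zero.2 ht)
  have h3 : trS (A * B) - trS A * trS B / 2 = 0 := by linear_combination (-1/2) * h1 - (1/2) * h2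
  refine ⟨by linear_combination h3, ?_⟩
  rw [h3] at h1
  have h4 : d * trS B = 0 := by
    rw [mul_assoc] at h1
    exact (mul_eq_zero.1 h1).resolve_left ht
  have h5 : 1 - trS A ^ 2 / 4 = d := by
    rw [hA, hdd]; linear_combination -hd
  rw [h5, h4]

end Twist

section Coord

open Filter Topology

variable {n m : ℤ} {g : SL2C}

/-- evaluation at a point -/
noncomputable def evq (q : solSet n m g) : coordRing n m g →+* ℂ where
  toFun a := a.1 q
  map_one' := rfl
  map_mul' _ _ := rfl
  map_zero' := rfl
  map_add' _ _ := rfl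

theorem evq_apply (q : solSet n m g) (a : coordRing n m g) : evq q a = a.1 q := rfl

theorem evq_algebraMap (q : solSet n m g) (c : ℂ) :
    evq q (algebraMap ℂ (coordRing n m g) c) = c := rfl

theorem evq_cont (a : coordRing n m g) : Continuous fun q => evq q a := by
  obtain ⟨a, ha⟩ := a
  simp only [evq_apply]
  unfold coordRing at ha
  induction ha using Algebra.adjoin_induction with
  | mem x hx =>
    rcases hx with ⟨r, rfl⟩ | ⟨r, rfl⟩
    · exact (continuous_induced_dom.comp
        (continuous_fst.comp continuous_subtype_val)).matrix_elem r.1 r.2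
    · exact (continuous_induced_dom.comp
        (continuous_snd.comp continuous_subtype_val)).matrix_elem r.1 r.2
  | algebraMap r => exact continuous_const
  | add x y hx hy h1 h2 => exact h1.add h2
  | mul x y hx hy h1 h2 => exact h1.mul h2

/-- evaluation on matrices -/
noncomputable def evS (q : solSet n m g) :
    SpecialLinearGroup (Fin 2) (coordRing n m g) →* SL2C :=
  SpecialLinearGroup.map (evq q)

theorem trS_evS (q : solSet n m g) (a : SpecialLinearGroup (Fin 2) (coordRing n m g)) :
    trS (evS q a) = evq q (trS a) := trS_map _ _

/-- local lifting property of a pair -/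
def Lift (a b : SpecialLinearGroup (Fin 2) (coordRing n m g)) : Prop :=
  ∀ W : Set (solSet n m g), IsOpen W → ∀ q ∈ W, ∀ᶠ P : SL2C × SL2C in 𝓝 (evS q a, evS q b),
    P.1 * P.2 * P.1⁻¹ * P.2⁻¹ = g → ∃ q' ∈ W, evS q' a = P.1 ∧ evS q' b = P.2

theorem Lift.move {a b : SpecialLinearGroup (Fin 2) (coordRing n m g)} (h : Lift a b)
    (a' b' : SpecialLinearGroup (Fin 2) (coordRing n m g))
    (f1 f2 k1 k2 : SL2C → SL2C → SL2C)
    (hf1 : Continuous (fun P : SL2C × SL2C => f1 P.1 P.2))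
    (hf2 : Continuous (fun P : SL2C × SL2C => f2 P.1 P.2))
    (hfc : ∀ x y, f1 x y * f2 x y * (f1 x y)⁻¹ * (f2 x y)⁻¹ = x * y * x⁻¹ * y⁻¹)
    (hk1 : ∀ x y, k1 (f1 x y) (f2 x y) = x)
    (hk2 : ∀ x y, k2 (f1 x y) (f2 x y) = y)
    (h1 : ∀ q, f1 (evS q a') (evS q b') = evS q a)
    (h2 : ∀ q, f2 (evS q a') (evS q b') = evS q b) : Lift a' b' := by
  intro W hW q hq
  have h3 := h W hW q hq
  rw [← h1, ← h2] at h3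
  have hf := (hf1.prodMk hf2).tendsto (evS q a', evS q b')
  filter_upwards [hf.eventually h3] with P hP hPg
  obtain ⟨q', hq', e1, e2⟩ := hP (by rw [← hPg]; exact hfc P.1 P.2)
  refine ⟨q', hq', ?_, ?_⟩
  · rw [← hk1 (evS q' a') (evS q' b'), h1, h2, e1, e2]; exact hk1 _ _
  · rw [← hk2 (evS q' a') (evS q' b'), h1, h2, e1, e2]; exact hk2 _ _

theorem gA {G : Type} [Group G] (x y : G) : x * (y * x⁻¹) * x⁻¹ * (y * x⁻¹)⁻¹ = x * y * x⁻¹ * y⁻¹ := by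
  group
theorem gB {G : Type} [Group G] (x y : G) : x * (y * x) * x⁻¹ * (y * x)⁻¹ = x * y * x⁻¹ * y⁻¹ := by
  group
theorem gC {G : Type} [Group G] (x y : G) :
    (x * y) * y * (x * y)⁻¹ * y⁻¹ = x * y * x⁻¹ * y⁻¹ := by
  group
theorem gC' {G : Type} [Group G] (x y : G) :
    (x * y⁻¹) * y * (x * y⁻¹)⁻¹ * y⁻¹ = x * y * x⁻¹ * y⁻¹ := by
  group
theorem gD {G : Type} [Group G] (x y : G) :
    (x * y) * x⁻¹ * (x * y)⁻¹ * x⁻¹⁻¹ = x * y * x⁻¹ * y⁻¹ := by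
  group
theorem gE {G : Type} [Group G] (x y : G) :
    y⁻¹ * (y * x) * y⁻¹⁻¹ * (y * x)⁻¹ = x * y * x⁻¹ * y⁻¹ := by
  group

theorem Lift.mulR {a b : SpecialLinearGroup (Fin 2) (coordRing n m g)} (h : Lift a b) :
    Lift a (b * a) :=
  h.move _ _ (fun x _ => x) (fun x y => y * x⁻¹) (fun x _ => x) (fun x y => y * x)
    continuous_fst (continuous_snd.mul continuous_fst.inv) gA (fun _ _ => rfl)
    (fun x y => inv_mul_cancel_right y x) (fun _ => rfl)
    (fun q => by rw [map_mul]; exact mul_inv_cancel_right _ _)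

theorem Lift.mulRinv {a b : SpecialLinearGroup (Fin 2) (coordRing n m g)} (h : Lift a b) :
    Lift a (b * a⁻¹) :=
  h.move _ _ (fun x _ => x) (fun x y => y * x) (fun x _ => x) (fun x y => y * x⁻¹)
    continuous_fst (continuous_snd.mul continuous_fst) gB (fun _ _ => rfl)
    (fun x y => mul_inv_cancel_right y x) (fun _ => rfl)
    (fun q => by rw [map_mul, map_inv]; exact inv_mul_cancel_right _ _)

theorem Lift.mulL {a b : SpecialLinearGroup (Fin 2) (coordRing n m g)} (h : Lift a b) :
    Lift (a * b) b :=
  h.move _ _ (fun x y => x * y⁻¹) (fun _ y => y) (fun x y => x * y) (fun _ y => y)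
    (continuous_fst.mul continuous_snd.inv) continuous_snd gC'
    (fun x y => inv_mul_cancel_right x y) (fun _ _ => rfl)
    (fun q => by rw [map_mul]; exact mul_inv_cancel_right _ _) (fun _ => rfl)

theorem Lift.rot {a b : SpecialLinearGroup (Fin 2) (coordRing n m g)} (h : Lift a b) :
    Lift (a * b) a⁻¹ :=
  h.move _ _ (fun _ y => y⁻¹) (fun x y => y * x) (fun x y => x * y) (fun x _ => x⁻¹)
    (continuous_snd.inv) (continuous_snd.mul continuous_fst) gE
    (fun x y => inv_mul_cancel_left _ _) (fun _ y => inv_inv y)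
    (fun q => by rw [map_inv]; exact inv_inv _)
    (fun q => by rw [map_mul, map_inv]; exact inv_mul_cancel_left _ _)

theorem twist_one {a b : SpecialLinearGroup (Fin 2) (coordRing n m g)} (h : Lift a b)
    (hc : ∀ q, evS q a * evS q b * (evS q a)⁻¹ * (evS q b)⁻¹ = g)
    (W : Set (solSet n m g)) (hW : IsOpen W) (ζ : ℂ) (hζ : ∀ q ∈ W, trS (evS q b) = ζ)
    (q : solSet n m g) (hq : q ∈ W) :
    trS (evS q a * evS q b) = trS (evS q a) * trS (evS q b) / 2 ∧
      (1 - trS (evS q a) ^ 2 / 4) * trS (evS q b) = 0 := by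
  apply twist_aux
  have ht : Tendsto (fun c : SL2C => (evS q a, evS q b * c)) (𝓝 1) (𝓝 (evS q a, evS q b)) := by
    have : Continuous (fun c : SL2C => (evS q a, evS q b * c)) := by fun_prop
    have := this.tendsto 1
    rwa [mul_one] at this
  filter_upwards [ht.eventually (h W hW q hq)] with c hcc hcomm
  obtain ⟨q', hq', e1, e2⟩ := hcc ((grp8 hcomm).trans (hc q))
  rw [← e2, hζ q' hq', hζ q hq]

theorem twist_two {a b : SpecialLinearGroup (Fin 2) (coordRing n m g)} (h : Lift a b)
    (hc : ∀ q, evS q a * evS q b * (evS q a)⁻¹ * (evS q b)⁻¹ = g)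
    (W : Set (solSet n m g)) (hW : IsOpen W) (ζ : ℂ)
    (hζ : ∀ q ∈ W, trS (evS q a * evS q b) = ζ)
    (q : solSet n m g) (hq : q ∈ W) :
    trS (evS q b * (evS q b * evS q a)) = trS (evS q b) * trS (evS q b * evS q a) / 2 := by
  refine (twist_aux (evS q b) (evS q b * evS q a) ?_).1
  have ht : Tendsto (fun c : SL2C => (evS q a * c, evS q b)) (𝓝 1) (𝓝 (evS q a, evS q b)) := by
    have : Continuous (fun c : SL2C => (evS q a * c, evS q b)) := by fun_prop
    have := this.tendsto 1
    rwa [mul_one] at this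
  filter_upwards [ht.eventually (h W hW q hq)] with c hcc hcomm
  obtain ⟨q', hq', e1, e2⟩ := hcc ((grp9 hcomm).trans (hc q))
  rw [mul_assoc, trS_mul_comm, ← e1, ← e2, hζ q' hq', e2, trS_mul_comm, hζ q hq]

theorem twist_false {a b : SpecialLinearGroup (Fin 2) (coordRing n m g)} (h : Lift a b)
    (hc : ∀ q, evS q a * evS q b * (evS q a)⁻¹ * (evS q b)⁻¹ = g)
    (hg : trS g ≠ 2) (hg' : trS g ≠ -2)
    (W : Set (solSet n m g)) (hW : IsOpen W) (ζ : ℂ) (hζ : ∀ q ∈ W, trS (evS q b) = ζ)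
    (q : solSet n m g) (hq : q ∈ W) : False := by
  have hk : ∀ q, trS (evS q a) ^ 2 + trS (evS q b) ^ 2 + trS (evS q a * evS q b) ^ 2
      - trS (evS q a) * trS (evS q b) * trS (evS q a * evS q b) - 2 = trS g := by
    intro q; rw [← trS_comm, hc]
  have h0 : ∀ q ∈ W, trS (evS q b) = 0 ∧ trS (evS q a * evS q b) = 0 := by
    intro q hq
    obtain ⟨h1, h2⟩ := twist_one h hc W hW ζ hζ q hq
    have h3 := hk q
    rw [h1] at h3
    rcases mul_eq_zero.1 h2 with h4 | h4
    · exfalso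
      apply hg
      rw [← h3]
      linear_combination (-4 + trS (evS q b) ^ 2) * h4
    · exact ⟨h4, by rw [h1, h4]; ring⟩
  have h5 := twist_two h hc W hW 0 (fun q hq => (h0 q hq).2) q hq
  obtain ⟨hb, hab⟩ := h0 q hq
  rw [trS_mul_comm, trS_mul_mul, hb] at h5
  have h6 : trS (evS q a) = 0 := by linear_combination -h5
  have h7 := hk q
  rw [h6, hb, hab] at h7
  apply hg'
  rw [← h7]; ring

end Coord

section Main

open Filter Topology

variable {n m : ℤ} {g : SL2C}

theorem evS_ext {a b : SpecialLinearGroup (Fin 2) (coordRing n m g)}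
    (h : ∀ q, evS q a = evS q b) : a = b := by
  have : ∀ i j, a.1 i j = b.1 i j := by
    intro i j
    apply Subtype.ext
    funext q
    exact congrArg (fun c : SL2C => c.1 i j) (h q)
  exact sl_ext (this 0 0) (this 0 1) (this 1 0) (this 1 1)

theorem exists_xA : ∃ x : SpecialLinearGroup (Fin 2) (coordRing n m g),
    ∀ q i j, (x.1 i j).1 q = q.1.1.1 i j := by
  refine ⟨⟨Matrix.of fun i j => ⟨fun q => q.1.1.1 i j,
    Algebra.subset_adjoin (Or.inl ⟨(i, j), rfl⟩)⟩, ?_⟩, fun q i j => rfl⟩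
  rw [det_fin_two]
  apply Subtype.ext
  funext q
  exact det_eq q.1.1

theorem exists_yA : ∃ y : SpecialLinearGroup (Fin 2) (coordRing n m g),
    ∀ q i j, (y.1 i j).1 q = q.1.2.1 i j := by
  refine ⟨⟨Matrix.of fun i j => ⟨fun q => q.1.2.1 i j,
    Algebra.subset_adjoin (Or.inr ⟨(i, j), rfl⟩)⟩, ?_⟩, fun q i j => rfl⟩
  rw [det_fin_two]
  apply Subtype.ext
  funext q
  exact det_eq q.1.2

theorem sol_comm (q : solSet n m g) :
    q.1.1 ^ n * q.1.2 ^ m * (q.1.1 ^ n)⁻¹ * (q.1.2 ^ m)⁻¹ = g := by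
  have := q.2
  simp only [solSet, Set.mem_setOf_eq, _root_.zpow_neg] at this
  exact this

theorem trS_one {R : Type} [CommRing R] : trS (1 : SpecialLinearGroup (Fin 2) R) = 2 := by
  simp [trS]; norm_num

theorem grp10 {G : Type} [Group G] {a b : G} (h : a * b = b * a) : a * b * a⁻¹ * b⁻¹ = 1 := by
  rw [h]; group

theorem lift_base (hn : n ≠ 0) (hm : m ≠ 0) (hg : trS g ≠ 2)
    (x y : SpecialLinearGroup (Fin 2) (coordRing n m g))
    (hx : ∀ q, evS q x = q.1.1) (hy : ∀ q, evS q y = q.1.2) : Lift (x ^ n) (y ^ m) := by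
  obtain ⟨u, v, huv⟩ := exists_pow_poly n
  obtain ⟨u', v', huv'⟩ := exists_pow_poly m
  have P1 : PowPoly n u v := ⟨huv⟩
  have P2 : PowPoly m u' v' := ⟨huv'⟩
  intro W hW q hq
  have ex : ∀ q, evS q (x ^ n) = q.1.1 ^ n := fun q => by rw [map_zpow, hx]
  have ey : ∀ q, evS q (y ^ m) = q.1.2 ^ m := fun q => by rw [map_zpow, hy]
  obtain ⟨U, hU, rfl⟩ := isOpen_induced_iff.1 hW
  have h1 : pe (trS q.1.1) u ≠ 0 := by
    intro h0
    have h2 := grp10 (P1.comm_of_zero q.1.1 h0 (q.1.2 ^ m)).symm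
    rw [sol_comm q] at h2
    rw [h2] at hg
    exact hg trS_one
  have h1' : pe (trS q.1.2) u' ≠ 0 := by
    intro h0
    have h2 := grp10 (P2.comm_of_zero q.1.2 h0 (q.1.1 ^ n))
    rw [sol_comm q] at h2
    rw [h2] at hg
    exact hg trS_one
  have o1 := P1.open_map hn q.1.1 h1
  have o2 := P2.open_map hm q.1.2 h1'
  have o3 := Filter.prod_mono o1 o2
  rw [Filter.prod_map_map_eq, ← nhds_prod_eq, ← nhds_prod_eq] at o3
  have hUn : U ∈ 𝓝 (q.1.1, q.1.2) := hU.mem_nhds hq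
  have o4 := o3 (image_mem_map hUn)
  rw [ex, ey]
  filter_upwards [o4] with P hP hPg
  obtain ⟨r, hr, rfl⟩ := hP
  refine ⟨⟨r, ?_⟩, hr, ex _, ey _⟩
  simp only [solSet, Set.mem_setOf_eq, _root_.zpow_neg]
  exact hPg

/-- constant matrix -/
noncomputable def gM (n m : ℤ) (g : SL2C) : SpecialLinearGroup (Fin 2) (coordRing n m g) :=
  SpecialLinearGroup.map (algebraMap ℂ (coordRing n m g)) g

theorem evS_gM (q : solSet n m g) : evS q (gM n m g) = g := by
  apply sl_ext <;> rfl

theorem special_false (hg : trS g ≠ 2) (hg' : trS g ≠ -2) {K : Type} [Field K]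
    (φ : coordRing n m g →+* K[X]) (j : ℂ →+* K) (p : Ideal (coordRing n m g))
    (hp : p ∈ minimalPrimes (coordRing n m g)) (hφ : ∀ a, φ a = 0 → a ∈ p)
    (hj : ∀ c, φ (algebraMap ℂ (coordRing n m g) c) = C (j c))
    (a b : SpecialLinearGroup (Fin 2) (coordRing n m g)) (hL : Lift a b)
    (hc : a * b * a⁻¹ * b⁻¹ = gM n m g) (η : K) (hη : φ (trS b) = C η) (κ : ℂ)
    (hκ : η ^ 2 = j κ) : False := by
  have hpp : p.IsPrime := hp.1.1
  obtain ⟨ζ, hζ⟩ := IsAlgClosed.exists_pow_nat_eq κ (n := 2) (by norm_num)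
  have h1 : (trS b - algebraMap ℂ _ ζ) * (trS b - algebraMap ℂ _ (-ζ)) ∈ p := by
    apply hφ
    rw [map_mul, map_sub, map_sub, hj, hj, hη, ← C_sub, ← C_sub, ← C_mul]
    rw [show (η - j ζ) * (η - j (-ζ)) = 0 by
      rw [← hζ] at hκ
      simp only [map_neg, map_pow] at hκ ⊢
      linear_combination hκ, C_0]
  have h2 : ∃ ζ' : ℂ, trS b - algebraMap ℂ (coordRing n m g) ζ' ∈ p := by
    rcases hpp.mem_or_mem h1 with h | h
    · exact ⟨_, h⟩
    · exact ⟨_, h⟩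
  obtain ⟨ζ', h3⟩ := h2
  obtain ⟨s, hs, hs2⟩ := Ideal.exists_mul_mem_of_mem_minimalPrimes hp h3
  rw [Ideal.mem_bot] at hs hs2
  have hq : ∃ q, evq q s ≠ 0 := by
    by_contra hcon
    push Not at hcon
    apply hs
    apply Subtype.ext
    funext q
    exact hcon q
  obtain ⟨q, hq⟩ := hq
  refine twist_false hL ?_ hg hg' {q | evq q s ≠ 0}
    (isOpen_ne_fun (evq_cont s) continuous_const) ζ' ?_ q hq
  · intro q
    rw [← map_inv, ← map_inv, ← map_mul, ← map_mul, ← map_mul, hc, evS_gM]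
  · intro q hq
    have h4 := congrArg (evq q) hs2
    rw [map_mul, map_zero, map_sub, evq_algebraMap] at h4
    have := (mul_eq_zero.1 h4).resolve_right hq
    rw [trS_evS]
    linear_combination this

section
variable {K : Type} [Field K] [IsAlgClosed K]
    (φ : coordRing n m g →+* K[X]) (j : ℂ →+* K)
    (a b : SpecialLinearGroup (Fin 2) (coordRing n m g))

theorem phi_comm (hj : ∀ c, φ (algebraMap ℂ (coordRing n m g) c) = C (j c))
    (hc : a * b * a⁻¹ * b⁻¹ = gM n m g) :
    SpecialLinearGroup.map φ a * SpecialLinearGroup.map φ b * (SpecialLinearGroup.map φ a)⁻¹ *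
      (SpecialLinearGroup.map φ b)⁻¹ = SpecialLinearGroup.map C (SpecialLinearGroup.map j g) := by
  rw [← map_inv, ← map_inv, ← map_mul, ← map_mul, ← map_mul, hc]
  apply sl_ext <;> exact hj _

theorem phi_traces (hj : ∀ c, φ (algebraMap ℂ (coordRing n m g) c) = C (j c))
    (hc : a * b * a⁻¹ * b⁻¹ = gM n m g) :
    φ (trS a) ^ 2 + φ (trS b) ^ 2 + φ (trS (a * b)) ^ 2
      - φ (trS a) * φ (trS b) * φ (trS (a * b)) = C (j (trS g + 2)) := by
  have h1 := congrArg trS (phi_comm φ j a b hj hc)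
  rw [trS_comm, ← map_mul, trS_map, trS_map, trS_map, trS_map, trS_map] at h1
  rw [map_add, map_ofNat, C_add, ← h1, show (C (2 : K) : K[X]) = 2 from map_ofNat C 2]
  ring

theorem y_const (hg : trS g ≠ 2) (hg' : trS g ≠ -2)
    (p : Ideal (coordRing n m g))
    (hp : p ∈ minimalPrimes (coordRing n m g)) (hφ : ∀ a, φ a = 0 → a ∈ p)
    (hj : ∀ c, φ (algebraMap ℂ (coordRing n m g) c) = C (j c))
    (hL : Lift a b)
    (hc : a * b * a⁻¹ * b⁻¹ = gM n m g) (hY : φ (trS b) ∈ (C : K →+* K[X]).range) :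
    SpecialLinearGroup.map φ a ∈ (SpecialLinearGroup.map (n := Fin 2) (C : K →+* K[X])).range ∧
    SpecialLinearGroup.map φ b ∈ (SpecialLinearGroup.map (n := Fin 2) (C : K →+* K[X])).range := by
  obtain ⟨η, hη⟩ := hY
  have hE := phi_traces φ j a b hj hc
  rw [← hη] at hE
  obtain ⟨hX, hZ⟩ := conic_const hE
    (fun h => special_false hg hg' φ j p hp hφ hj a b hL hc η hη.symm _ h)
    (fun h => special_false hg hg' φ j p hp hφ hj a b hL hc η hη.symm 4 (by
      rw [h, map_ofNat]))
  refine const_of_traces _ _ (SpecialLinearGroup.map j g) ?_ ?_ (phi_comm φ j a b hj hc) ?_ ?_ ?_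
  · rw [trS_map]; intro h
    exact hg (j.injective (by rw [h, map_ofNat]))
  · rw [trS_map]; intro h
    exact hg' (j.injective (by rw [h, map_neg, map_ofNat]))
  · rw [trS_map]; exact hX
  · rw [trS_map]; exact ⟨η, hη⟩
  · rw [← map_mul, trS_map]; exact hZ

theorem main_ind (hg : trS g ≠ 2) (hg' : trS g ≠ -2)
    (p : Ideal (coordRing n m g))
    (hp : p ∈ minimalPrimes (coordRing n m g)) (hφ : ∀ a, φ a = 0 → a ∈ p)
    (hj : ∀ c, φ (algebraMap ℂ (coordRing n m g) c) = C (j c)) (N : ℕ) :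
    ∀ a b : SpecialLinearGroup (Fin 2) (coordRing n m g), Lift a b →
    a * b * a⁻¹ * b⁻¹ = gM n m g →
    (φ (trS a)).natDegree + (φ (trS b)).natDegree + (φ (trS (a * b))).natDegree ≤ N →
    SpecialLinearGroup.map φ a ∈ (SpecialLinearGroup.map (n := Fin 2) (C : K →+* K[X])).range ∧
    SpecialLinearGroup.map φ b ∈
      (SpecialLinearGroup.map (n := Fin 2) (C : K →+* K[X])).range := by
  obtain ⟨H, hH⟩ : ∃ H, H = (SpecialLinearGroup.map (n := Fin 2) (C : K →+* K[X])).range := ⟨_, rfl⟩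
  have undoR : ∀ a b : SpecialLinearGroup (Fin 2) (coordRing n m g),
      SpecialLinearGroup.map φ a ∈ H ∧ SpecialLinearGroup.map φ (b * a) ∈ H →
      SpecialLinearGroup.map φ a ∈ H ∧ SpecialLinearGroup.map φ b ∈ H := by
    rintro a b ⟨h1, h2⟩
    rw [map_mul] at h2
    exact ⟨h1, (H.mul_mem_cancel_right h1).1 h2⟩
  have undoRinv : ∀ a b : SpecialLinearGroup (Fin 2) (coordRing n m g),
      SpecialLinearGroup.map φ a ∈ H ∧ SpecialLinearGroup.map φ (b * a⁻¹) ∈ H →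
      SpecialLinearGroup.map φ a ∈ H ∧ SpecialLinearGroup.map φ b ∈ H := by
    rintro a b ⟨h1, h2⟩
    rw [map_mul, map_inv] at h2
    exact ⟨h1, (H.mul_mem_cancel_right (H.inv_mem h1)).1 h2⟩
  have undoL : ∀ a b : SpecialLinearGroup (Fin 2) (coordRing n m g),
      SpecialLinearGroup.map φ (a * b) ∈ H ∧ SpecialLinearGroup.map φ b ∈ H →
      SpecialLinearGroup.map φ a ∈ H ∧ SpecialLinearGroup.map φ b ∈ H := by
    rintro a b ⟨h1, h2⟩
    rw [map_mul] at h1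
    exact ⟨(H.mul_mem_cancel_right h2).1 h1, h2⟩
  have undoRot : ∀ a b : SpecialLinearGroup (Fin 2) (coordRing n m g),
      SpecialLinearGroup.map φ (a * b) ∈ H ∧ SpecialLinearGroup.map φ a⁻¹ ∈ H →
      SpecialLinearGroup.map φ a ∈ H ∧ SpecialLinearGroup.map φ b ∈ H := by
    rintro a b ⟨h1, h2⟩
    rw [map_inv] at h2
    have h3 := H.inv_mem_iff.1 h2
    rw [map_mul] at h1
    exact ⟨h3, (H.mul_mem_cancel_left h3).1 h1⟩
  have base := fun a b => y_const φ j a b hg hg' p hp hφ hj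
  rw [← hH] at base ⊢
  induction N using Nat.strong_induction_on with
  | _ N ih =>
  intro a b hL hc hN
  have hE := phi_traces φ j a b hj hc
  by_cases hY : (φ (trS b)).natDegree = 0
  · exact base a b hL hc (natDegree_eq_zero.1 hY)
  by_cases hZ : (φ (trS (a * b))).natDegree = 0
  · refine undoR a b (base a (b * a) hL.mulR ((gB a b).trans hc) (natDegree_eq_zero.1 ?_))
    rw [trS_mul_comm]; exact hZ
  by_cases hX : (φ (trS a)).natDegree = 0
  · refine undoRot a b (base (a * b) a⁻¹ hL.rot ((gD a b).trans hc) (natDegree_eq_zero.1 ?_))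
    rw [trS_inv]; exact hX
  by_cases hmY : (φ (trS a)).natDegree ≤ (φ (trS b)).natDegree ∧
      (φ (trS (a * b))).natDegree ≤ (φ (trS b)).natDegree
  · have hv := vieta_lt (x := φ (trS b)) (y := φ (trS a)) (z := φ (trS (a * b)))
      (κ := j (trS g + 2)) (by linear_combination hE) hY hX hZ hmY.1 hmY.2
    have e1 : φ (trS (a * (b * a))) = φ (trS a) * φ (trS (a * b)) - φ (trS b) := by
      rw [← mul_assoc, trS_mul_mul, map_sub, map_mul]
    refine undoR a b (ih _ ?_ a (b * a) hL.mulR ((gB a b).trans hc) le_rfl)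
    rw [e1, trS_mul_comm b a]
    omega
  by_cases hmZ : (φ (trS a)).natDegree ≤ (φ (trS (a * b))).natDegree ∧
      (φ (trS b)).natDegree ≤ (φ (trS (a * b))).natDegree
  · have hv := vieta_lt (x := φ (trS (a * b))) (y := φ (trS a)) (z := φ (trS b))
      (κ := j (trS g + 2)) (by linear_combination hE) hZ hX hY hmZ.1 hmZ.2
    have e1 : φ (trS (b * a⁻¹)) = φ (trS a) * φ (trS b) - φ (trS (a * b)) := by
      rw [trS_mul_inv, map_sub, map_mul]
    have e2 : trS (a * (b * a⁻¹)) = trS b := by rw [← mul_assoc, trS_conj']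
    refine undoRinv a b (ih _ ?_ a (b * a⁻¹) hL.mulRinv ((gA a b).trans hc) le_rfl)
    rw [e1, e2]
    omega
  · have hv := vieta_lt (x := φ (trS a)) (y := φ (trS b)) (z := φ (trS (a * b)))
      (κ := j (trS g + 2)) (by linear_combination hE) hX hY hZ (by omega) (by omega)
    have e1 : φ (trS (a * b * b)) = φ (trS b) * φ (trS (a * b)) - φ (trS a) := by
      rw [trS_mul_comm, ← mul_assoc, trS_mul_mul, trS_mul_comm b a, map_sub, map_mul]
    refine undoL a b (ih _ ?_ (a * b) b hL.mulL ((gC a b).trans hc) le_rfl)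
    rw [e1]
    omega

end

theorem sl_map_zpow {R S : Type} [CommRing R] [CommRing S] (f : R →+* S)
    (a : SpecialLinearGroup (Fin 2) R) (k : ℤ) :
    SpecialLinearGroup.map f (a ^ k) = (SpecialLinearGroup.map f a) ^ k := map_zpow _ _ _

theorem all_const (hn : n ≠ 0) (hm : m ≠ 0) (hg : trS g ≠ 2) (hg' : trS g ≠ -2)
    {K : Type} [Field K] [IsAlgClosed K] [CharZero K]
    (φ : coordRing n m g →+* K[X]) (j : ℂ →+* K) (p : Ideal (coordRing n m g))
    (hp : p ∈ minimalPrimes (coordRing n m g)) (hφ : ∀ a, φ a = 0 → a ∈ p)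
    (hj : ∀ c, φ (algebraMap ℂ (coordRing n m g) c) = C (j c)) (r : coordRing n m g) :
    φ r ∈ (C : K →+* K[X]).range := by
  obtain ⟨x, hx⟩ := exists_xA (n := n) (m := m) (g := g)
  obtain ⟨y, hy⟩ := exists_yA (n := n) (m := m) (g := g)
  have ex : ∀ q, evS q x = q.1.1 := fun q => by apply sl_ext <;> exact hx q _ _
  have ey : ∀ q, evS q y = q.1.2 := fun q => by apply sl_ext <;> exact hy q _ _
  have hL := lift_base hn hm hg x y ex ey
  have hc : x ^ n * y ^ m * (x ^ n)⁻¹ * (y ^ m)⁻¹ = gM n m g := by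
    apply evS_ext
    intro q
    rw [evS_gM, map_mul, map_mul, map_mul, map_inv, map_inv, map_zpow, map_zpow, ex, ey, sol_comm]
  obtain ⟨h1, h2⟩ := main_ind φ j hg hg' p hp hφ hj _ _ _ hL hc le_rfl
  have hcφ := phi_comm φ j _ _ hj hc
  rw [sl_map_zpow] at h1 h2
  rw [sl_map_zpow, sl_map_zpow] at hcφ
  obtain ⟨u, v, huv⟩ := exists_pow_poly n
  obtain ⟨u', v', huv'⟩ := exists_pow_poly m
  have P1 : PowPoly n u v := ⟨huv⟩
  have P2 : PowPoly m u' v' := ⟨huv'⟩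
  have hne : (SpecialLinearGroup.map C (SpecialLinearGroup.map j g) :
      SpecialLinearGroup (Fin 2) K[X]) ≠ 1 := by
    intro h
    have h3 := congrArg trS h
    rw [trS_map, trS_map, trS_one, show (2 : K[X]) = C 2 from (map_ofNat C 2).symm] at h3
    have h4 := C_injective h3
    exact hg (j.injective (by rw [h4, map_ofNat]))
  have cx := P1.const hn _ h1 (by
    intro h0
    apply hne
    rw [← hcφ]
    exact grp10 (P1.comm_of_zero _ h0 _).symm)
  have cy := P2.const hm _ h2 (by
    intro h0
    apply hne
    rw [← hcφ]
    exact grp10 (P2.comm_of_zero _ h0 _))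
  obtain ⟨r, hr⟩ := r
  have hr' := hr
  unfold coordRing at hr'
  induction hr' using Algebra.adjoin_induction with
  | mem z hz =>
    rcases hz with ⟨⟨i, k⟩, rfl⟩ | ⟨⟨i, k⟩, rfl⟩
    · have := cx i k
      rw [sl_map] at this
      convert this using 2
      apply Subtype.ext
      funext q
      exact (hx q i k).symm
    · have := cy i k
      rw [sl_map] at this
      convert this using 2
      apply Subtype.ext
      funext q
      exact (hy q i k).symm
  | algebraMap c => exact ⟨j c, (hj c).symm⟩
  | add s t hs ht h1 h2 =>
    have := add_mem (h1 hs) (h2 ht)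
    rw [← map_add] at this
    exact this
  | mul s t hs ht h1 h2 =>
    have := mul_mem (h1 hs) (h2 ht)
    rw [← map_mul] at this
    exact this

end Main

/-- the Makar-Limanov invariant of `S` is all of `O(S)`: every locally
nilpotent `ℂ`-derivation of `O(S)` is zero, i.e. `S` admits no nontrivial `ℂ⁺`-actions. -/
theorem makar_limanov_trivial (n m : ℤ) (hn : n ≠ 0) (hm : m ≠ 0)
    (g : SL2C) (hg : tr2 g ≠ 2) (hg' : tr2 g ≠ -2)
    (D : Derivation ℂ (coordRing n m g) (coordRing n m g))
    (hD : ∀ a : coordRing n m g, ∃ k : ℕ, (⇑D)^[k] a = 0) :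
    D = 0 := by
  have htr : tr2 g = trS g := Matrix.trace_fin_two _
  rw [htr] at hg hg'
  ext a : 1
  have h1 : ∀ p ∈ minimalPrimes (coordRing n m g), D a ∈ p := by
    intro p hp
    obtain ⟨K, _, _, _, φ, j, hφ, hDφ, hj⟩ := exists_phi D hD p hp.1.1
    exact hDφ a (all_const hn hm hg hg' φ j p hp hφ hj a)
  have h2 : D a ∈ sInf (minimalPrimes (coordRing n m g)) := (Submodule.mem_sInf).2 h1
  have h3 : D a ∈ (⊥ : Ideal (coordRing n m g)).radical := by
    rw [← Ideal.sInf_minimalPrimes]; exact h2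
  obtain ⟨k, hk⟩ := h3
  rw [Ideal.mem_bot] at hk
  apply Subtype.ext
  funext q
  have h4 := congrArg (evq q) hk
  rw [map_pow, map_zero] at h4
  exact eq_zero_of_pow_eq_zero h4
end
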